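/- Let g = (g_1,…,g_m) be a tuple of polynomials in ℝ[X_1,…,X_n] such that S(g) is convex with nonempty interior and the quadratic module M(g) is Archimedean. Suppose that each g_i is strictly quasiconcave on S(g) ∩ Z(g_i) or is g-sos-concave. Then g has an exact Lasserre relaxation, i.e., there exists d ∈ ℕ₀ such that S_d(g) = S(g). -/

import Mathlib

open MvPolynomial Matrix

noncomputable section

/-- `S(g) = {x ∈ ℝⁿ : g₁(x) ≥ 0, …, g_m(x) ≥ 0}`. -/
def SolSet {n m : ℕ} (g : Fin m → MvPolynomial (Fin n) ℝ) : Set (Fin n → ℝ) :=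
  {x | ∀ i, 0 ≤ eval x (g i)}

/-- The extended tuple `(g₀, g₁, …, g_m)` with `g₀ := 1`. -/
def withOne {n m : ℕ} (g : Fin m → MvPolynomial (Fin n) ℝ) :
    Fin (m + 1) → MvPolynomial (Fin n) ℝ :=
  Fin.cons 1 g

/-- A polynomial is a sum of squares. -/
def IsSOS {n : ℕ} (p : MvPolynomial (Fin n) ℝ) : Prop :=
  ∃ (l : ℕ) (q : Fin l → MvPolynomial (Fin n) ℝ), p = ∑ i, q i ^ 2

/-- The quadratic module `M(g)` generated by `g₁,…,g_m` (with `g₀ := 1`). -/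
def QM {n m : ℕ} (g : Fin m → MvPolynomial (Fin n) ℝ) : Set (MvPolynomial (Fin n) ℝ) :=
  {f | ∃ s : Fin (m + 1) → MvPolynomial (Fin n) ℝ,
    (∀ i, IsSOS (s i)) ∧ f = ∑ i, s i * withOne g i}

/-- A quadratic module is Archimedean if for every polynomial `p` there is `N ∈ ℕ`
with `N - p ∈ M`. -/
def IsArchimedeanQM {n : ℕ} (M : Set (MvPolynomial (Fin n) ℝ)) : Prop :=
  ∀ p : MvPolynomial (Fin n) ℝ, ∃ N : ℕ, (N : MvPolynomial (Fin n) ℝ) - p ∈ M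

/-- `p ∈ ℝ[X]_{r_i}` where `r_i = (d - deg g_i)/2` if `g_i ≠ 0` and `r_i = -∞` if `g_i = 0`:
either `p = 0`, or `g_i ≠ 0` and `2 deg p + deg g_i ≤ d`. -/
def DegOK {n : ℕ} (d : ℕ) (gi p : MvPolynomial (Fin n) ℝ) : Prop :=
  p = 0 ∨ (gi ≠ 0 ∧ 2 * p.totalDegree + gi.totalDegree ≤ d)

/-- The `d`-truncated `k×k` matricial quadratic module `M_d^{k×k}(g)`. -/
def MatTruncQM {n : ℕ} (d : ℕ) {m : ℕ} (g : Fin m → MvPolynomial (Fin n) ℝ) (k : ℕ) :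
    Set (Matrix (Fin k) (Fin k) (MvPolynomial (Fin n) ℝ)) :=
  {H | ∃ (N : ℕ) (P : Fin (m + 1) → Fin N → Matrix (Fin k) (Fin k) (MvPolynomial (Fin n) ℝ)),
    (∀ i j a b, DegOK d (withOne g i) (P i j a b)) ∧
    H = ∑ i, ∑ j, withOne g i • ((P i j)ᵀ * P i j)}


/-- The `d`-truncated quadratic module `M_d(g)`. -/
def TruncQM {n : ℕ} (d : ℕ) {m : ℕ} (g : Fin m → MvPolynomial (Fin n) ℝ) :
    Set (MvPolynomial (Fin n) ℝ) :=
  {f | ∃ (N : ℕ) (p : Fin (m + 1) → Fin N → MvPolynomial (Fin n) ℝ),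
    (∀ i j, DegOK d (withOne g i) (p i j)) ∧
    f = ∑ i, ∑ j, p i j ^ 2 * withOne g i}

/-- The degree `d` Lasserre relaxation `S_d(g)`: all `x ∈ ℝⁿ` admitting a linear functional
`L` on `ℝ[X]_d` with `L(1) = 1`, `L(X_i) = x_i` and `L ≥ 0` on `M_d(g)`. -/
def Lasserre {n : ℕ} (d : ℕ) {m : ℕ} (g : Fin m → MvPolynomial (Fin n) ℝ) :
    Set (Fin n → ℝ) :=
  {x | ∃ L : MvPolynomial.restrictTotalDegree (Fin n) ℝ d →ₗ[ℝ] ℝ,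
    (∀ p : MvPolynomial.restrictTotalDegree (Fin n) ℝ d,
      (p : MvPolynomial (Fin n) ℝ) = 1 → L p = 1) ∧
    (∀ i : Fin n, ∀ p : MvPolynomial.restrictTotalDegree (Fin n) ℝ d,
      (p : MvPolynomial (Fin n) ℝ) = X i → L p = x i) ∧
    (∀ p : MvPolynomial.restrictTotalDegree (Fin n) ℝ d,
      (p : MvPolynomial (Fin n) ℝ) ∈ TruncQM d g → 0 ≤ L p)}


/-- The real zero set `Z(p)` of a polynomial `p`. -/
def ZSet {n : ℕ} (p : MvPolynomial (Fin n) ℝ) : Set (Fin n → ℝ) :=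
  {x | eval x p = 0}

/-- The gradient `∇g(x)` of a polynomial `g` at a point `x`. -/
def gradEval {n : ℕ} (g : MvPolynomial (Fin n) ℝ) (x : Fin n → ℝ) : Fin n → ℝ :=
  fun i => eval x (pderiv i g)

/-- The Hessian `(Hess g)(x)` of a polynomial `g` at a point `x`. -/
def hessEval {n : ℕ} (g : MvPolynomial (Fin n) ℝ) (x : Fin n → ℝ) :
    Matrix (Fin n) (Fin n) ℝ :=
  Matrix.of fun i j => eval x (pderiv i (pderiv j g))

/-- `g` is strictly quasiconcave at `x`. -/
def StrictlyQuasiconcaveAt {n : ℕ} (g : MvPolynomial (Fin n) ℝ) (x : Fin n → ℝ) : Prop :=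
  ∀ v : Fin n → ℝ, v ≠ 0 → gradEval g x ⬝ᵥ v = 0 → v ⬝ᵥ (hessEval g x) *ᵥ v < 0

/-- `f` is `g`-sos-concave: `-Hess f ∈ M^{n×n}(g) = ⋃_d M_d^{n×n}(g)`. -/
def SosConcave {n m : ℕ} (g : Fin m → MvPolynomial (Fin n) ℝ)
    (f : MvPolynomial (Fin n) ℝ) : Prop :=
  ∃ d : ℕ,
    (Matrix.of fun a b => -(pderiv a (pderiv b f)) :
      Matrix (Fin n) (Fin n) (MvPolynomial (Fin n) ℝ)) ∈ MatTruncQM d g n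

set_option linter.unusedSectionVars false
namespace LassAux
open Filter Topology

/-- positivity of a functional on the truncated quadratic module -/
def Dual {n m : ℕ} (g : Fin m → MvPolynomial (Fin n) ℝ) (d : ℕ)
    (L : MvPolynomial (Fin n) ℝ →ₗ[ℝ] ℝ) : Prop :=
  ∀ i q, 2 * q.totalDegree + (withOne g i).totalDegree ≤ d → 0 ≤ L (q ^ 2 * withOne g i)

lemma Dual.mono {n m : ℕ} {g : Fin m → MvPolynomial (Fin n) ℝ} {d e : ℕ}
    {L : MvPolynomial (Fin n) ℝ →ₗ[ℝ] ℝ} (h : Dual g e L) (hde : d ≤ e) : Dual g d L :=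
  fun i q hq => h i q (hq.trans hde)

lemma Dual.sq {n m : ℕ} {g : Fin m → MvPolynomial (Fin n) ℝ} {d : ℕ}
    {L : MvPolynomial (Fin n) ℝ →ₗ[ℝ] ℝ} (h : Dual g d L) (q : MvPolynomial (Fin n) ℝ)
    (hq : 2 * q.totalDegree ≤ d) : 0 ≤ L (q ^ 2) := by
  have := h 0 q (by simpa [withOne] using hq)
  simpa [withOne] using this

/-- the functional `p ↦ L (W² p)` -/
def mulSq {n : ℕ} (W : MvPolynomial (Fin n) ℝ) (L : MvPolynomial (Fin n) ℝ →ₗ[ℝ] ℝ) :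
    MvPolynomial (Fin n) ℝ →ₗ[ℝ] ℝ := L ∘ₗ LinearMap.mulLeft ℝ (W ^ 2)

@[simp] lemma mulSq_apply {n : ℕ} (W : MvPolynomial (Fin n) ℝ)
    (L : MvPolynomial (Fin n) ℝ →ₗ[ℝ] ℝ) (p : MvPolynomial (Fin n) ℝ) :
    mulSq W L p = L (W ^ 2 * p) := rfl

lemma Dual.mulSq {n m : ℕ} {g : Fin m → MvPolynomial (Fin n) ℝ} {d e : ℕ}
    {L : MvPolynomial (Fin n) ℝ →ₗ[ℝ] ℝ} (h : Dual g (d + 2 * e) L)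
    (W : MvPolynomial (Fin n) ℝ) (hW : W.totalDegree ≤ e) : Dual g d (mulSq W L) := by
  intro i q hq
  have h1 := h i (W * q) (by have := totalDegree_mul W q; omega)
  have e1 : W ^ 2 * (q ^ 2 * withOne g i) = (W * q) ^ 2 * withOne g i := by ring
  rw [mulSq_apply, e1]; exact h1

/-- The bookkeeping filter. -/
def FF {n m : ℕ} (g : Fin m → MvPolynomial (Fin n) ℝ) :
    Filter ((Fin n → ℝ) × (MvPolynomial (Fin n) ℝ →ₗ[ℝ] ℝ)) where
  sets := {s | ∃ d, ∀ u ∈ SolSet g, ∀ L, Dual g d L → (u, L) ∈ s}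
  univ_sets := ⟨0, fun _ _ _ _ => trivial⟩
  sets_of_superset := by
    rintro s t ⟨d, hd⟩ hst
    exact ⟨d, fun u hu L hL => hst (hd u hu L hL)⟩
  inter_sets := by
    rintro s t ⟨d, hd⟩ ⟨e, he⟩
    exact ⟨max d e, fun u hu L hL => ⟨hd u hu L (hL.mono (le_max_left _ _)),
      he u hu L (hL.mono (le_max_right _ _))⟩⟩

lemma ev_iff {n m : ℕ} {g : Fin m → MvPolynomial (Fin n) ℝ}
    {P : (Fin n → ℝ) × (MvPolynomial (Fin n) ℝ →ₗ[ℝ] ℝ) → Prop} :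
    (∀ᶠ z in FF g, P z) ↔ ∃ d, ∀ u ∈ SolSet g, ∀ L, Dual g d L → P (u, L) := Iff.rfl

lemma ev_mem {n m : ℕ} (g : Fin m → MvPolynomial (Fin n) ℝ) :
    ∀ᶠ z in FF g, z.1 ∈ SolSet g := ev_iff.2 ⟨0, fun _ hu _ _ => hu⟩

lemma ev_sq {n m : ℕ} (g : Fin m → MvPolynomial (Fin n) ℝ) (e : ℕ) :
    ∀ᶠ z in FF g, ∀ q : MvPolynomial (Fin n) ℝ, q.totalDegree ≤ e → 0 ≤ z.2 (q ^ 2) :=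
  ev_iff.2 ⟨2 * e, fun _ _ L hL q hq => hL.sq q (by simp; omega)⟩

lemma ev_sq_mul {n m : ℕ} (g : Fin m → MvPolynomial (Fin n) ℝ) (i : Fin (m + 1)) (e : ℕ) :
    ∀ᶠ z in FF g, ∀ q : MvPolynomial (Fin n) ℝ, q.totalDegree ≤ e →
      0 ≤ z.2 (q ^ 2 * withOne g i) :=
  ev_iff.2 ⟨2 * e + (withOne g i).totalDegree,
    fun _ _ L hL q hq => hL i q (by omega)⟩

lemma ev_mulSq {n m : ℕ} {g : Fin m → MvPolynomial (Fin n) ℝ}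
    {P : (Fin n → ℝ) × (MvPolynomial (Fin n) ℝ →ₗ[ℝ] ℝ) → Prop}
    (h : ∀ᶠ z in FF g, P z) (e : ℕ) :
    ∀ᶠ z in FF g, ∀ W : MvPolynomial (Fin n) ℝ, W.totalDegree ≤ e →
      P (z.1, mulSq W z.2) := by
  obtain ⟨d, hd⟩ := ev_iff.1 h
  exact ev_iff.2 ⟨d + 2 * e, fun u hu L hL W hW => hd u hu _ (hL.mulSq W hW)⟩

/-- continuous polynomial families -/
inductive Fam {Ω : Type} [TopologicalSpace Ω] {n : ℕ} : (Ω → MvPolynomial (Fin n) ℝ) → Prop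
  | const (p : MvPolynomial (Fin n) ℝ) : Fam (fun _ => p)
  | coef (c : Ω → ℝ) (hc : Continuous c) : Fam (fun ω => C (c ω))
  | add {p q : Ω → MvPolynomial (Fin n) ℝ} (hp : Fam p) (hq : Fam q) : Fam (fun ω => p ω + q ω)
  | mul {p q : Ω → MvPolynomial (Fin n) ℝ} (hp : Fam p) (hq : Fam q) : Fam (fun ω => p ω * q ω)

section fam
variable {Ω : Type} [TopologicalSpace Ω] {n : ℕ} {p q : Ω → MvPolynomial (Fin n) ℝ}

lemma Fam.neg (hp : Fam p) : Fam (fun ω => - p ω) := by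
  have := (Fam.const (Ω := Ω) (n := n) (-1)).mul hp
  simpa using this

lemma Fam.sub (hp : Fam p) (hq : Fam q) : Fam (fun ω => p ω - q ω) := by
  simpa [sub_eq_add_neg] using hp.add hq.neg

lemma Fam.pow (hp : Fam p) (k : ℕ) : Fam (fun ω => p ω ^ k) := by
  induction k with
  | zero => simpa using Fam.const (Ω := Ω) (n := n) 1
  | succ k ih => simpa [pow_succ] using ih.mul hp

lemma Fam.sum {ι : Type*} (s : Finset ι) {f : ι → Ω → MvPolynomial (Fin n) ℝ}
    (hf : ∀ i ∈ s, Fam (f i)) : Fam (fun ω => ∑ i ∈ s, f i ω) := by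
  classical
  induction s using Finset.induction_on with
  | empty => simpa using Fam.const (Ω := Ω) (n := n) 0
  | insert a s ha ih =>
    simp only [Finset.sum_insert ha]
    exact (hf a (by simp)).add (ih fun i hi => hf i (by simp [hi]))

lemma Fam.smul (c : ℝ) (hp : Fam p) : Fam (fun ω => c • p ω) := by
  simpa [smul_eq_C_mul] using (Fam.const (Ω := Ω) (C c)).mul hp

lemma Fam.comp {Ω' : Type} [TopologicalSpace Ω'] (hp : Fam p) {f : Ω' → Ω} (hf : Continuous f) :
    Fam (fun ω => p (f ω)) := by
  induction hp with
  | const p => exact Fam.const p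
  | coef c hc => exact Fam.coef (fun ω => c (f ω)) (hc.comp hf)
  | add _ _ h1 h2 => exact h1.add h2
  | mul _ _ h1 h2 => exact h1.mul h2

lemma Fam.degree (hp : Fam p) : ∃ D, ∀ ω, (p ω).totalDegree ≤ D := by
  induction hp with
  | const p => exact ⟨_, fun _ => le_rfl⟩
  | coef c hc => exact ⟨0, fun _ => by simp⟩
  | @add p q _ _ h1 h2 =>
    obtain ⟨a, ha⟩ := h1; obtain ⟨b, hb⟩ := h2
    refine ⟨a + b, fun ω => ?_⟩
    have := totalDegree_add (p ω) (q ω)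
    have := ha ω; have := hb ω
    have : max (p ω).totalDegree (q ω).totalDegree ≤ a + b := by
      apply max_le <;> omega
    change (p ω + q ω).totalDegree ≤ _
    omega
  | @mul p q _ _ h1 h2 =>
    obtain ⟨a, ha⟩ := h1; obtain ⟨b, hb⟩ := h2
    refine ⟨a + b, fun ω => ?_⟩
    have := totalDegree_mul (p ω) (q ω)
    have := ha ω; have := hb ω
    change (p ω * q ω).totalDegree ≤ _
    omega

lemma Fam.cont (hp : Fam p) : Continuous (fun z : Ω × (Fin n → ℝ) => eval z.2 (p z.1)) := by
  induction hp with
  | const p => exact (MvPolynomial.continuous_eval p).comp continuous_snd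
  | coef c hc => simp only [eval_C]; exact hc.comp continuous_fst
  | add _ _ h1 h2 => simp only [map_add]; exact h1.add h2
  | mul _ _ h1 h2 => simp only [map_mul]; exact h1.mul h2

lemma Fam.rep (hp : Fam p) : ∃ (k : ℕ) (c : Fin k → Ω → ℝ) (q : Fin k → MvPolynomial (Fin n) ℝ),
    (∀ j, Continuous (c j)) ∧ ∀ ω, p ω = ∑ j, c j ω • q j := by
  suffices h : ∃ (ι : Type) (_ : Fintype ι) (c : ι → Ω → ℝ) (q : ι → MvPolynomial (Fin n) ℝ),
      (∀ j, Continuous (c j)) ∧ ∀ ω, p ω = ∑ j, c j ω • q j by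
    obtain ⟨ι, _, c, q, hc, h⟩ := h
    let e := Fintype.equivFin ι
    refine ⟨Fintype.card ι, fun j => c (e.symm j), fun j => q (e.symm j), fun j => hc _, ?_⟩
    intro ω
    rw [h ω]
    exact (Equiv.sum_comp e.symm (fun j => c j ω • q j)).symm
  induction hp with
  | const p => exact ⟨Unit, inferInstance, fun _ _ => 1, fun _ => p, fun _ => continuous_const,
      fun _ => by simp⟩
  | coef c hc => exact ⟨Unit, inferInstance, fun _ => c, fun _ => 1, fun _ => hc,
      fun _ => by simp [smul_eq_C_mul]⟩
  | add _ _ h1 h2 =>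
    obtain ⟨ι, _, c, q, hc, h⟩ := h1
    obtain ⟨ι', _, c', q', hc', h'⟩ := h2
    refine ⟨ι ⊕ ι', inferInstance, Sum.elim c c', Sum.elim q q', ?_, ?_⟩
    · rintro (j | j); exacts [hc j, hc' j]
    · intro ω; simp [h, h']
  | mul _ _ h1 h2 =>
    obtain ⟨ι, _, c, q, hc, h⟩ := h1
    obtain ⟨ι', _, c', q', hc', h'⟩ := h2
    refine ⟨ι × ι', inferInstance, fun j ω => c j.1 ω * c' j.2 ω, fun j => q j.1 * q' j.2, ?_, ?_⟩
    · rintro ⟨j, j'⟩; exact (hc j).mul (hc' j')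
    · intro ω
      simp only
      rw [h, h', Finset.sum_mul_sum, Fintype.sum_prod_type]
      refine Finset.sum_congr rfl fun i _ => Finset.sum_congr rfl fun j _ => ?_
      rw [smul_mul_smul_comm]

end fam

/-- elements of the quadratic module are eventually nonnegative, also after multiplying by
squares of bounded degree -/
lemma qm_dual {n m : ℕ} {g : Fin m → MvPolynomial (Fin n) ℝ} {f : MvPolynomial (Fin n) ℝ}
    (hf : f ∈ QM g) (D : ℕ) : ∃ d, ∀ L, Dual g d L → ∀ v : MvPolynomial (Fin n) ℝ,
      v.totalDegree ≤ D → 0 ≤ L (v ^ 2 * f) := by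
  obtain ⟨s, hs, rfl⟩ := hf
  choose l q hq using hs
  refine ⟨∑ i, ∑ j, (2 * ((q i j).totalDegree + D) + (withOne g i).totalDegree),
    fun L hL v hv => ?_⟩
  have e1 : v ^ 2 * ∑ i, s i * withOne g i = ∑ i, ∑ j, (v * q i j) ^ 2 * withOne g i := by
    rw [Finset.mul_sum]
    refine Finset.sum_congr rfl fun i _ => ?_
    rw [hq i, Finset.sum_mul, Finset.mul_sum]
    refine Finset.sum_congr rfl fun j _ => by ring
  rw [e1, map_sum]
  refine Finset.sum_nonneg fun i _ => ?_
  rw [map_sum]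
  refine Finset.sum_nonneg fun j _ => hL i _ ?_
  have h1 := totalDegree_mul v (q i j)
  have h2 : 2 * ((q i j).totalDegree + D) + (withOne g i).totalDegree ≤
      ∑ j, (2 * ((q i j).totalDegree + D) + (withOne g i).totalDegree) :=
    Finset.single_le_sum (f := fun j => 2 * ((q i j).totalDegree + D) +
      (withOne g i).totalDegree) (fun _ _ => Nat.zero_le _) (Finset.mem_univ j)
  have h3 := Finset.single_le_sum (f := fun i => ∑ j, (2 * ((q i j).totalDegree + D) +
      (withOne g i).totalDegree)) (fun _ _ => Nat.zero_le _) (Finset.mem_univ i)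
  omega

lemma qm_eval {n m : ℕ} {g : Fin m → MvPolynomial (Fin n) ℝ} {f : MvPolynomial (Fin n) ℝ}
    (hf : f ∈ QM g) {x : Fin n → ℝ} (hx : x ∈ SolSet g) : 0 ≤ eval x f := by
  obtain ⟨s, hs, rfl⟩ := hf
  rw [map_sum]
  refine Finset.sum_nonneg fun i _ => ?_
  obtain ⟨l, q, hq⟩ := hs i
  rw [map_mul, hq, map_sum]
  refine mul_nonneg (Finset.sum_nonneg fun j _ => by rw [map_pow]; positivity) ?_
  refine Fin.cases ?_ (fun i => ?_) i
  · simp [withOne]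
  · simpa [withOne] using hx i

lemma withOne_eval_nonneg {n m : ℕ} {g : Fin m → MvPolynomial (Fin n) ℝ}
    {x : Fin n → ℝ} (hx : x ∈ SolSet g) (i : Fin (m + 1)) : 0 ≤ eval x (withOne g i) := by
  refine Fin.cases ?_ (fun i => ?_) i
  · simp [withOne]
  · simpa [withOne] using hx i

lemma isCompact_SolSet {n m : ℕ} {g : Fin m → MvPolynomial (Fin n) ℝ}
    (harch : IsArchimedeanQM (QM g)) : IsCompact (SolSet g) := by
  have hcl : IsClosed (SolSet g) := by
    have : SolSet g = ⋂ i, {x | 0 ≤ eval x (g i)} := by ext; simp [SolSet]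
    rw [this]
    exact isClosed_iInter fun i =>
      isClosed_le continuous_const (MvPolynomial.continuous_eval (g i))
  choose N hN using fun i : Fin n => harch (X i ^ 2)
  refine IsCompact.of_isClosed_subset
    (isCompact_univ_pi fun i : Fin n => isCompact_Icc (a := -((N i : ℝ) + 1)) (b := N i + 1))
    hcl fun x hx i _ => ?_
  have h := qm_eval (hN i) hx
  simp at h
  have h0 : (0 : ℝ) ≤ N i := Nat.cast_nonneg _
  constructor <;> nlinarith

end LassAux

set_option linter.unusedSectionVars false
namespace LassAux
open Filter Topology

section states
variable {n m : ℕ} {κ : Type} [Fintype κ]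

/-- positive (unnormalized) matrix states -/
structure PosF (g : Fin m → MvPolynomial (Fin n) ℝ)
    (l : κ → κ → MvPolynomial (Fin n) ℝ → ℝ) : Prop where
  add : ∀ r s p q, l r s (p + q) = l r s p + l r s q
  smul : ∀ r s (a : ℝ) p, l r s (a • p) = a * l r s p
  symm : ∀ r s p, l r s p = l s r p
  pos : ∀ i (p : κ → MvPolynomial (Fin n) ℝ),
    0 ≤ ∑ r, ∑ s, l r s (withOne g i * (p r * p s))

variable {g : Fin m → MvPolynomial (Fin n) ℝ} {l : κ → κ → MvPolynomial (Fin n) ℝ → ℝ}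

lemma PosF.zero (h : PosF g l) (r s : κ) : l r s 0 = 0 := by
  have := h.smul r s 0 0; simpa using this

lemma PosF.neg (h : PosF g l) (r s : κ) (p) : l r s (-p) = - l r s p := by
  have := h.smul r s (-1) p; simpa using this

lemma PosF.sub (h : PosF g l) (r s : κ) (p q) : l r s (p - q) = l r s p - l r s q := by
  rw [sub_eq_add_neg, h.add, h.neg]; ring

lemma PosF.sum (h : PosF g l) (r s : κ) {ι : Type*} (t : Finset ι)
    (p : ι → MvPolynomial (Fin n) ℝ) : l r s (∑ i ∈ t, p i) = ∑ i ∈ t, l r s (p i) := by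
  classical
  induction t using Finset.induction_on with
  | empty => simp [h.zero]
  | insert a t ha ih => rw [Finset.sum_insert ha, Finset.sum_insert ha, h.add, ih]

/-- the trace -/
def trc (l : κ → κ → MvPolynomial (Fin n) ℝ → ℝ) : ℝ := ∑ r, l r r 1

/-- the bilinear form attached to `f` -/
def bil (l : κ → κ → MvPolynomial (Fin n) ℝ → ℝ) (f : MvPolynomial (Fin n) ℝ)
    (p q : κ → MvPolynomial (Fin n) ℝ) : ℝ := ∑ r, ∑ s, l r s (f * (p r * q s))

lemma PosF.bil_symm (h : PosF g l) (f p q) : bil l f p q = bil l f q p := by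
  unfold bil
  rw [Finset.sum_comm]
  refine Finset.sum_congr rfl fun r _ => Finset.sum_congr rfl fun s _ => ?_
  rw [h.symm, mul_comm (p s)]

lemma PosF.bil_quad (h : PosF g l) (f p q) (a b : ℝ) :
    bil l f (fun r => a • p r + b • q r) (fun r => a • p r + b • q r) =
      a ^ 2 * bil l f p p + 2 * a * b * bil l f p q + b ^ 2 * bil l f q q := by
  have e : bil l f (fun r => a • p r + b • q r) (fun r => a • p r + b • q r) =
      a ^ 2 * bil l f p p + a * b * bil l f p q + a * b * bil l f q p + b ^ 2 * bil l f q q := by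
    unfold bil
    simp only [Finset.mul_sum, ← Finset.sum_add_distrib]
    refine Finset.sum_congr rfl fun r _ => Finset.sum_congr rfl fun s _ => ?_
    rw [← h.smul, ← h.smul, ← h.smul, ← h.smul, ← h.add, ← h.add, ← h.add]
    congr 1
    simp only [smul_eq_C_mul, map_mul, map_pow]
    ring
  rw [e, h.bil_symm f q p]; ring

lemma PosF.bil_nonneg (h : PosF g l) (i p) : 0 ≤ bil l (withOne g i) p p := h.pos i p

lemma PosF.bil_cs (h : PosF g l) (i p q) :
    bil l (withOne g i) p q ^ 2 ≤ bil l (withOne g i) p p * bil l (withOne g i) q q := by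
  set a := bil l (withOne g i) p p
  set b := bil l (withOne g i) p q
  set c := bil l (withOne g i) q q
  have key : ∀ x : ℝ, 0 ≤ a * (x * x) + (2 * b) * x + c := by
    intro x
    have := h.bil_nonneg i (fun r => x • p r + (1 : ℝ) • q r)
    rw [h.bil_quad] at this
    linarith
  have := discrim_le_zero key
  unfold discrim at this
  nlinarith

lemma withOne_zero (g : Fin m → MvPolynomial (Fin n) ℝ) : withOne g 0 = 1 := rfl

/-- positivity extends to the quadratic module -/
lemma PosF.qm (h : PosF g l) {f} (hf : f ∈ QM g) (p) : 0 ≤ bil l f p p := by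
  obtain ⟨s, hs, rfl⟩ := hf
  choose k q hq using hs
  have e : bil l (∑ i, s i * withOne g i) p p =
      ∑ i, ∑ j, bil l (withOne g i) (fun r => q i j * p r) (fun r => q i j * p r) := by
    unfold bil
    have : ∀ r t, l r t ((∑ i, s i * withOne g i) * (p r * p t)) =
        ∑ i, ∑ j, l r t (withOne g i * (q i j * p r * (q i j * p t))) := by
      intro r t
      rw [Finset.sum_mul, h.sum]
      refine Finset.sum_congr rfl fun i _ => ?_
      rw [← h.sum, hq i, Finset.sum_mul, Finset.sum_mul]
      congr 1
      refine Finset.sum_congr rfl fun j _ => by ring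
    simp only [this]
    rw [Finset.sum_congr rfl fun r _ => Finset.sum_comm, Finset.sum_comm]
    refine Finset.sum_congr rfl fun i _ => ?_
    rw [Finset.sum_congr rfl fun r _ => Finset.sum_comm, Finset.sum_comm]
  rw [e]
  exact Finset.sum_nonneg fun i _ => Finset.sum_nonneg fun j _ => h.bil_nonneg _ _

lemma PosF.bil_sub_left (h : PosF g l) (a b p q) :
    bil l (a - b) p q = bil l a p q - bil l b p q := by
  unfold bil
  simp only [← Finset.sum_sub_distrib]
  refine Finset.sum_congr rfl fun r _ => Finset.sum_congr rfl fun s _ => ?_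
  rw [sub_mul, h.sub]

lemma PosF.bil_smul_left (h : PosF g l) (a : ℝ) (b p q) :
    bil l (a • b) p q = a * bil l b p q := by
  unfold bil
  simp only [Finset.mul_sum]
  refine Finset.sum_congr rfl fun r _ => Finset.sum_congr rfl fun s _ => ?_
  rw [smul_mul_assoc, h.smul]

lemma bil_move (l : κ → κ → MvPolynomial (Fin n) ℝ → ℝ) (a b p) :
    bil l (a ^ 2 * b) p p = bil l b (fun r => a * p r) (fun r => a * p r) := by
  unfold bil
  refine Finset.sum_congr rfl fun r _ => Finset.sum_congr rfl fun s _ => ?_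
  congr 1; ring

variable [DecidableEq κ]

lemma bil_single (h : PosF g l) (f p q) (a b : κ) :
    bil l f (Pi.single a p) (Pi.single b q) = l a b (f * (p * q)) := by
  unfold bil
  rw [Finset.sum_eq_single a, Finset.sum_eq_single b]
  · simp
  · intro s _ hs; simp [hs, h.zero]
  · simp
  · intro r _ hr
    refine Finset.sum_eq_zero fun s _ => ?_
    simp [hr, h.zero]
  · simp

lemma PosF.diag_nonneg (h : PosF g l) (i) (p) (a : κ) : 0 ≤ l a a (withOne g i * (p * p)) := by
  rw [← bil_single h]; exact h.bil_nonneg _ _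

lemma PosF.diag_one_nonneg (h : PosF g l) (a : κ) : 0 ≤ l a a 1 := by
  have := h.diag_nonneg 0 1 a; simpa [withOne_zero] using this

lemma PosF.diag_le (h : PosF g l) (a : κ) : l a a 1 ≤ trc l :=
  Finset.single_le_sum (f := fun r => l r r 1) (fun r _ => h.diag_one_nonneg r)
    (Finset.mem_univ a)

lemma PosF.trc_nonneg (h : PosF g l) : 0 ≤ trc l :=
  Finset.sum_nonneg fun r _ => h.diag_one_nonneg r

lemma bound_aux (harch : IsArchimedeanQM (QM g)) (p : MvPolynomial (Fin n) ℝ) :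
    ∃ N : ℝ, 1 ≤ N ∧ (C N - p ^ 2) ∈ QM g := by
  obtain ⟨N, hN⟩ := harch (p ^ 2)
  obtain ⟨s, hs, h⟩ := hN
  refine ⟨N + 1, by simp, fun i => s i + (if i = 0 then 1 else 0), fun i => ?_, ?_⟩
  · obtain ⟨k, q, hq⟩ := hs i
    by_cases hi : i = 0
    · refine ⟨k + 1, Fin.cons 1 q, ?_⟩
      simp [hi, Fin.sum_univ_succ, hi ▸ hq, add_comm]
    · exact ⟨k, q, by simp [hi, hq]⟩
  · simp only [add_mul, Finset.sum_add_distrib, ← h]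
    simp [withOne_zero]
    ring

lemma PosF.bound (h : PosF g l) {N : ℝ} {p} (hN1 : 1 ≤ N) (hN : (C N - p ^ 2) ∈ QM g) (r s : κ) :
    |l r s p| ≤ (N + 1) * trc l := by
  have h0 := h.qm hN (Pi.single r 1)
  rw [h.bil_sub_left, bil_single h, bil_single h] at h0
  have e1 : l r r (C N * (1 * 1)) = N * l r r 1 := by rw [← h.smul]; simp [smul_eq_C_mul]
  rw [e1] at h0
  have key : ∀ x : ℝ, x ^ 2 = 1 → 0 ≤ l r r (p ^ 2) + 2 * x * l r s p + l s s 1 := by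
    intro x hx
    have := h.bil_nonneg 0 (fun t => (1 : ℝ) • (Pi.single r p : κ → MvPolynomial (Fin n) ℝ) t
      + x • (Pi.single s 1 : κ → MvPolynomial (Fin n) ℝ) t)
    rw [h.bil_quad, bil_single h, bil_single h, bil_single h] at this
    rw [hx, withOne_zero] at this
    simpa [← pow_two] using this
  have k1 := key 1 (by norm_num)
  have k2 := key (-1) (by norm_num)
  have hr := h.diag_le r
  have hs := h.diag_le s
  have hr0 := h.diag_one_nonneg r
  have ht := h.trc_nonneg
  simp only [mul_one] at h0
  have hle : l r r (p ^ 2) ≤ N * l r r 1 := by linarith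
  have hN0 : N * l r r 1 ≤ N * trc l := mul_le_mul_of_nonneg_left hr (by linarith)
  have hpp : 0 ≤ l r r (p ^ 2) := by
    have := h.diag_nonneg 0 p r
    simpa [withOne_zero, ← pow_two] using this
  have hA : 2 * |l r s p| ≤ l r r (p ^ 2) + l s s 1 := by
    rcases abs_cases (l r s p) with ⟨ha, _⟩ | ⟨ha, _⟩ <;> rw [ha] <;> linarith
  nlinarith [abs_nonneg (l r s p)]

end states

end LassAux

set_option linter.unusedSectionVars false
namespace LassAux
open Filter Topology

lemma geo (b : ℕ → ℝ) (h0 : ∀ j, 0 ≤ b j) (M : ℝ) (hb : ∀ j, b j ≤ M)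
    (hc : ∀ j, b (j + 1) ^ 2 ≤ b j * b (j + 2)) : b 1 ≤ b 0 := by
  by_contra hcon
  push Not at hcon
  have hb0 : 0 < b 0 := by
    rcases (h0 0).lt_or_eq with h | h
    · exact h
    · have := hc 0
      rw [← h] at this hcon
      simp only [zero_add, zero_mul] at this
      nlinarith
  set q := b 1 / b 0 with hq
  have hq1 : 1 < q := by rw [hq, one_lt_div hb0]; exact hcon
  have key : ∀ j, 0 < b j ∧ q * b j ≤ b (j + 1) := by
    intro j
    induction j with
    | zero => exact ⟨hb0, by rw [hq, div_mul_cancel₀ _ hb0.ne']⟩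
    | succ j ih =>
      obtain ⟨h1, h2⟩ := ih
      have hp : 0 < b (j + 1) := by nlinarith
      refine ⟨hp, ?_⟩
      have h3 := hc j
      have h4 : b j * (q * b (j + 1)) ≤ b j * b (j + 2) := by nlinarith
      exact le_of_mul_le_mul_left h4 h1
  have hpow : ∀ j, q ^ j * b 0 ≤ b j := by
    intro j
    induction j with
    | zero => simp
    | succ j ih =>
      have := (key j).2
      rw [pow_succ]
      nlinarith
  obtain ⟨k, hk⟩ := pow_unbounded_of_one_lt (M / b 0) hq1
  rw [div_lt_iff₀ hb0] at hk
  linarith [hpow k, hb k]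

section states
variable {n m : ℕ} {κ : Type} [Fintype κ]
variable {g : Fin m → MvPolynomial (Fin n) ℝ} {l : κ → κ → MvPolynomial (Fin n) ℝ → ℝ}

lemma PosF.mulsq (h : PosF g l) (c : MvPolynomial (Fin n) ℝ) :
    PosF g (fun r s p => l r s (c ^ 2 * p)) where
  add r s p q := by rw [mul_add, h.add]
  smul r s a p := by rw [mul_smul_comm, h.smul]
  symm r s p := h.symm _ _ _
  pos i p := by
    have := h.pos i (fun r => c * p r)
    refine this.trans_eq ?_
    refine Finset.sum_congr rfl fun r _ => Finset.sum_congr rfl fun s _ => ?_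
    congr 1; ring

lemma PosF.scale (h : PosF g l) {a : ℝ} (ha : 0 ≤ a) : PosF g (fun r s p => a * l r s p) where
  add r s p q := by rw [h.add]; ring
  smul r s b p := by rw [h.smul]; ring
  symm r s p := by rw [h.symm]
  pos i p := by
    have := mul_nonneg ha (h.pos i p)
    simpa only [Finset.mul_sum] using this

lemma PosF.bil_le (h : PosF g l) (f p) :
    2 * bil l f p p ≤ bil l 1 (fun r => f * p r) (fun r => f * p r) + bil l 1 p p := by
  have h1 := h.bil_nonneg 0 (fun r => (1 : ℝ) • (f * p r) + (-1 : ℝ) • p r)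
  rw [h.bil_quad, withOne_zero] at h1
  have e : bil l 1 (fun r => f * p r) p = bil l f p p := by
    unfold bil
    refine Finset.sum_congr rfl fun r _ => Finset.sum_congr rfl fun s _ => ?_
    congr 1; ring
  rw [e] at h1
  linarith

lemma PosF.pow_le (h : PosF g l) {N : ℝ} {c : MvPolynomial (Fin n) ℝ} (hN1 : 1 ≤ N)
    (hN : C N - c ^ 2 ∈ QM g) (p) (j : ℕ) :
    bil l 1 (fun r => c ^ j * p r) (fun r => c ^ j * p r) ≤ N ^ j * bil l 1 p p := by
  induction j with
  | zero => simp
  | succ j ih =>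
    have h1 := h.qm hN (fun r => c ^ j * p r)
    have e1 : (C N : MvPolynomial (Fin n) ℝ) = N • 1 := by simp [smul_eq_C_mul]
    have e2 : c ^ 2 = c ^ 2 * (1 : MvPolynomial (Fin n) ℝ) := by ring
    rw [h.bil_sub_left, e1, h.bil_smul_left, e2, bil_move] at h1
    have e3 : ∀ r, c * (c ^ j * p r) = c ^ (j + 1) * p r := fun r => by ring
    simp only [e3] at h1
    have h2 : N ^ (j + 1) * bil l 1 p p = N * (N ^ j * bil l 1 p p) := by ring
    rw [h2]
    nlinarith

lemma PosF.compl (h : PosF g l) {N : ℝ} {c : MvPolynomial (Fin n) ℝ} (hN1 : 1 ≤ N)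
    (hN : C N - c ^ 2 ∈ QM g) :
    PosF g (fun r s p => l r s p - N⁻¹ * l r s (c ^ 2 * p)) where
  add r s p q := by rw [mul_add, h.add, h.add]; ring
  smul r s a p := by rw [mul_smul_comm, h.smul, h.smul]; ring
  symm r s p := by rw [h.symm r s, h.symm r s]
  pos i p := by
    have hN0 : 0 < N := by linarith
    let b : ℕ → ℝ := fun j =>
      (N⁻¹) ^ j * bil l (withOne g i) (fun r => c ^ j * p r) (fun r => c ^ j * p r)
    have hb0 : ∀ j, 0 ≤ b j := fun j => mul_nonneg (by positivity) (h.bil_nonneg _ _)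
    have hbd : ∀ j, b j ≤ bil l 1 (fun r => withOne g i * p r) (fun r => withOne g i * p r)
        + bil l 1 p p := by
      intro j
      have h1 := h.bil_le (withOne g i) (fun r => c ^ j * p r)
      have e : ∀ r, withOne g i * (c ^ j * p r) = c ^ j * (withOne g i * p r) := fun r => by ring
      simp only [e] at h1
      have h2 := h.pow_le hN1 hN (fun r => withOne g i * p r) j
      have h3 := h.pow_le hN1 hN p j
      have h4 := h.bil_nonneg i (fun r => c ^ j * p r)
      have h5 : bil l (withOne g i) (fun r => c ^ j * p r) (fun r => c ^ j * p r) ≤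
         N ^ j * (bil l 1 (fun r => withOne g i * p r) (fun r => withOne g i * p r)
          + bil l 1 p p) := by linarith
      have h6 : 0 ≤ N⁻¹ ^ j := by positivity
      have h7 := mul_le_mul_of_nonneg_left h5 h6
      rw [← mul_assoc, ← mul_pow, inv_mul_cancel₀ hN0.ne', one_pow, one_mul] at h7
      exact h7
    have hlc : ∀ j, b (j + 1) ^ 2 ≤ b j * b (j + 2) := by
      intro j
      have h1 := h.bil_cs i (fun r => c ^ j * p r) (fun r => c ^ (j + 2) * p r)
      have e : bil l (withOne g i) (fun r => c ^ j * p r) (fun r => c ^ (j + 2) * p r) =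
          bil l (withOne g i) (fun r => c ^ (j + 1) * p r) (fun r => c ^ (j + 1) * p r) := by
        unfold bil
        refine Finset.sum_congr rfl fun r _ => Finset.sum_congr rfl fun s _ => ?_
        congr 1; ring
      rw [e] at h1
      have h6 : 0 ≤ (N⁻¹ ^ (j + 1)) ^ 2 := by positivity
      have h7 := mul_le_mul_of_nonneg_left h1 h6
      simp only [b]
      calc _ = _ := by ring
        _ ≤ _ := h7
        _ = _ := by ring
    have := geo b hb0 _ hbd hlc
    simp only [b, pow_zero, one_mul, pow_one] at this
    have e : ∑ r, ∑ s, (l r s (withOne g i * (p r * p s)) -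
        N⁻¹ * l r s (c ^ 2 * (withOne g i * (p r * p s)))) =
        bil l (withOne g i) p p -
         N⁻¹ * bil l (withOne g i) (fun r => c * p r) (fun r => c * p r) := by
      unfold bil
      simp only [Finset.sum_sub_distrib, Finset.mul_sum]
      congr 1
      refine Finset.sum_congr rfl fun r _ => Finset.sum_congr rfl fun s _ => ?_
      congr 2; ring
    rw [e]; linarith

lemma trc_scale (a : ℝ) (l : κ → κ → MvPolynomial (Fin n) ℝ → ℝ) :
    trc (fun r s p => a * l r s p) = a * trc l := by
  unfold trc
  rw [Finset.mul_sum]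

variable [DecidableEq κ]

/-- normalized states -/
def KK (g : Fin m → MvPolynomial (Fin n) ℝ) (κ : Type) [Fintype κ] :
    Set (κ → κ → MvPolynomial (Fin n) ℝ → ℝ) := {l | PosF g l ∧ trc l = 1}

lemma PosF.eq_zero (harch : IsArchimedeanQM (QM g)) (h : PosF g l) (h0 : trc l = 0) (r s p) :
    l r s p = 0 := by
  obtain ⟨N, hN1, hN⟩ := bound_aux harch p
  have := h.bound hN1 hN r s
  rw [h0, mul_zero] at this
  exact abs_nonpos_iff.1 this

lemma extreme_sq (harch : IsArchimedeanQM (QM g)) (hl : l ∈ (KK g κ).extremePoints ℝ)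
    (c : MvPolynomial (Fin n) ℝ) : ∃ t : ℝ, ∀ r s p, l r s (c ^ 2 * p) = t * l r s p := by
  obtain ⟨N, hN1, hN⟩ := bound_aux harch c
  have hN0 : 0 < N := by linarith
  obtain ⟨⟨h, htr⟩, hext⟩ := mem_extremePoints_iff_left.1 hl
  have h1 := (h.mulsq c).scale (inv_nonneg.2 hN0.le)
  have h2 := h.compl hN1 hN
  set l1 : κ → κ → MvPolynomial (Fin n) ℝ → ℝ := fun r s p => N⁻¹ * l r s (c ^ 2 * p) with hl1
  set l2 : κ → κ → MvPolynomial (Fin n) ℝ → ℝ := fun r s p => l r s p - N⁻¹ * l r s (c ^ 2 * p)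
    with hl2
  have hsum : trc l1 + trc l2 = 1 := by
    rw [← htr]; unfold trc
    rw [← Finset.sum_add_distrib]
    refine Finset.sum_congr rfl fun r _ => by simp [hl1, hl2]
  suffices hs : ∃ t : ℝ, ∀ r s p, l1 r s p = t * l r s p by
    obtain ⟨t, ht⟩ := hs
    refine ⟨N * t, fun r s p => ?_⟩
    rw [mul_assoc, ← ht, hl1]
    simp only
    rw [← mul_assoc, mul_inv_cancel₀ hN0.ne', one_mul]
  have ht1 := h1.trc_nonneg
  have ht2 := h2.trc_nonneg
  rcases ht1.lt_or_eq with hp1 | hp1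
  · rcases ht2.lt_or_eq with hp2 | hp2
    · refine ⟨trc l1, ?_⟩
      have k1 : (fun r s p => (trc l1)⁻¹ * l1 r s p) ∈ KK g κ := by
        refine ⟨h1.scale (inv_nonneg.2 ht1), ?_⟩
        rw [trc_scale, inv_mul_cancel₀ hp1.ne']
      have k2 : (fun r s p => (trc l2)⁻¹ * l2 r s p) ∈ KK g κ := by
        refine ⟨h2.scale (inv_nonneg.2 ht2), ?_⟩
        rw [trc_scale, inv_mul_cancel₀ hp2.ne']
      have hseg : l ∈ openSegment ℝ (fun r s p => (trc l1)⁻¹ * l1 r s p)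
          (fun r s p => (trc l2)⁻¹ * l2 r s p) := by
        refine ⟨trc l1, trc l2, hp1, hp2, hsum, ?_⟩
        funext r s p
        change trc l1 * ((trc l1)⁻¹ * l1 r s p) + trc l2 * ((trc l2)⁻¹ * l2 r s p) = l r s p
        rw [mul_inv_cancel_left₀ hp1.ne', mul_inv_cancel_left₀ hp2.ne']
        simp [hl1, hl2]
      have := hext _ k1 _ k2 hseg
      intro r s p
      have e : (trc l1)⁻¹ * l1 r s p = l r s p := congrFun (congrFun (congrFun this r) s) p
      rw [← e, mul_inv_cancel_left₀ hp1.ne']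
    · refine ⟨1, fun r s p => ?_⟩
      have := h2.eq_zero harch hp2.symm r s p
      simp only [hl1, hl2] at this ⊢
      linarith
  · refine ⟨0, fun r s p => ?_⟩
    rw [h1.eq_zero harch hp1.symm r s p]; simp

lemma extreme_point (harch : IsArchimedeanQM (QM g)) (hl : l ∈ (KK g κ).extremePoints ℝ) :
    ∃ x : Fin n → ℝ, ∀ q r s p, l r s (q * p) = eval x q * l r s p := by
  have h : PosF g l := hl.1.1
  choose t ht using fun i : Fin n => extreme_sq harch hl (X i)
  choose t' ht' using fun i : Fin n => extreme_sq harch hl (X i + 1)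
  refine ⟨fun i => (t' i - t i - 1) / 2, fun q => ?_⟩
  induction q using MvPolynomial.induction_on with
  | C a => intro r s p; rw [← smul_eq_C_mul, h.smul, eval_C]
  | add p q hp hq => intro r s f; rw [add_mul, h.add, hp, hq, map_add]; ring
  | mul_X p i hp =>
    intro r s f
    rw [mul_assoc, hp, map_mul, eval_X, mul_assoc]
    congr 1
    have e : (X i : MvPolynomial (Fin n) ℝ) * f =
      (2⁻¹ : ℝ) • ((X i + 1) ^ 2 * f - X i ^ 2 * f - f) := by
      have : (X i + 1) ^ 2 * f - X i ^ 2 * f - f = (2 : ℝ) • (X i * f) := by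
        rw [smul_eq_C_mul]; simp only [map_ofNat]; ring
      rw [this, smul_smul]; norm_num
    rw [e, h.smul, h.sub, h.sub, ht, ht']; ring

end states
end LassAux

set_option linter.unusedSectionVars false
namespace LassAux
open Filter Topology

section states
variable {n m : ℕ} {κ : Type} [Fintype κ] [DecidableEq κ]
variable {g : Fin m → MvPolynomial (Fin n) ℝ}

lemma KK_compact (harch : IsArchimedeanQM (QM g)) : IsCompact (KK g κ) := by
  choose N hN1 hN using bound_aux harch
  have hcpt : IsCompact (Set.univ.pi fun _ : κ => Set.univ.pi fun _ : κ =>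
      Set.univ.pi fun p : MvPolynomial (Fin n) ℝ => Set.Icc (-(N p + 1)) (N p + 1)) :=
    isCompact_univ_pi fun _ => isCompact_univ_pi fun _ => isCompact_univ_pi fun p => isCompact_Icc
  refine hcpt.of_isClosed_subset ?_ ?_
  · have ev : ∀ r s p, Continuous fun l : κ → κ → MvPolynomial (Fin n) ℝ → ℝ => l r s p :=
      fun r s p => (continuous_apply p).comp ((continuous_apply s).comp (continuous_apply r))
    have : KK g κ = {l | ∀ r s p q, l r s (p + q) = l r s p + l r s q} ∩
        {l | ∀ r s (a : ℝ) p, l r s (a • p) = a * l r s p} ∩ {l | ∀ r s p, l r s p = l s r p} ∩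
        {l | ∀ i (p : κ → MvPolynomial (Fin n) ℝ),
          0 ≤ ∑ r, ∑ s, l r s (withOne g i * (p r * p s))} ∩ {l | trc l = 1} := by
      ext l
      constructor
      · rintro ⟨h, h1⟩
        exact ⟨⟨⟨⟨h.add, h.smul⟩, h.symm⟩, h.pos⟩, h1⟩
      · rintro ⟨⟨⟨⟨a, b⟩, c⟩, d⟩, e⟩
        exact ⟨⟨a, b, c, d⟩, e⟩
    rw [this]
    refine IsClosed.inter (IsClosed.inter (IsClosed.inter (IsClosed.inter ?_ ?_) ?_) ?_) ?_
    · simp only [Set.ofPred_forall]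
      exact isClosed_iInter fun r => isClosed_iInter fun s => isClosed_iInter fun p =>
        isClosed_iInter fun q => isClosed_eq (ev _ _ _) ((ev _ _ _).add (ev _ _ _))
    · simp only [Set.ofPred_forall]
      exact isClosed_iInter fun r => isClosed_iInter fun s => isClosed_iInter fun p =>
        isClosed_iInter fun q => isClosed_eq (ev _ _ _) (continuous_const.mul (ev _ _ _))
    · simp only [Set.ofPred_forall]
      exact isClosed_iInter fun r => isClosed_iInter fun s => isClosed_iInter fun p =>
        isClosed_eq (ev _ _ _) (ev _ _ _)
    · simp only [Set.ofPred_forall]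
      exact isClosed_iInter fun i => isClosed_iInter fun p =>
        isClosed_le continuous_const (continuous_finsetSum _ fun r _ =>
          continuous_finsetSum _ fun s _ => ev _ _ _)
    · exact isClosed_eq (continuous_finsetSum _ fun r _ => ev _ _ _) continuous_const
  · rintro l ⟨h, h1⟩ r _ s _ p _
    have := h.bound (hN1 p) (hN p) r s
    rw [h1, mul_one] at this
    exact abs_le.1 this

/-- no matrix state is nonpositive on a strictly positive matrix polynomial -/
lemma state_pos (harch : IsArchimedeanQM (QM g)) (H : κ → κ → MvPolynomial (Fin n) ℝ)
    (hH : ∀ x ∈ SolSet g, ∀ ξ : κ → ℝ, ξ ≠ 0 → 0 < ∑ r, ∑ s, eval x (H r s) * ξ r * ξ s)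
    {l : κ → κ → MvPolynomial (Fin n) ℝ → ℝ} (hl : l ∈ KK g κ) :
    0 < ∑ r, ∑ s, l r s (H r s) := by
  let J : (κ → κ → MvPolynomial (Fin n) ℝ → ℝ) →L[ℝ] ℝ :=
    { toFun := fun l => - ∑ r, ∑ s, l r s (H r s)
      map_add' := fun a b => by simp [Finset.sum_add_distrib]; ring
      map_smul' := fun a b => by simp [Finset.mul_sum]
      cont := (continuous_finsetSum _ fun r _ => continuous_finsetSum _ fun s _ =>
          (continuous_apply (H r s)).comp ((continuous_apply s).comp (continuous_apply r))).neg }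
  have hJ : ∀ l, J l = - ∑ r, ∑ s, l r s (H r s) := fun l => rfl
  have hK := KK_compact (κ := κ) harch
  obtain ⟨l0, hl0, hmax⟩ := hK.exists_isMaxOn ⟨l, hl⟩ J.continuous.continuousOn
  have hexp : IsExposed ℝ (KK g κ) (J.toExposed (KK g κ)) :=
    ContinuousLinearMap.toExposed.isExposed
  obtain ⟨e, he⟩ := (hexp.isCompact hK).extremePoints_nonempty ⟨l0, hl0, fun y hy => hmax hy⟩
  have hmin : J l ≤ J e := he.1.2 l hl
  have heK := hexp.isExtreme.extremePoints_subset_extremePoints he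
  obtain ⟨x, hx⟩ := extreme_point harch heK
  have hP : PosF g e := heK.1.1
  have htr : trc e = 1 := heK.1.2
  have hx' : ∀ r s q, e r s q = eval x q * e r s 1 := fun r s q => by
    have := hx q r s 1; rwa [mul_one] at this
  have hxS : x ∈ SolSet g := by
    intro i
    obtain ⟨a, ha⟩ : ∃ a, 0 < e a a 1 := by
      by_contra hno
      push Not at hno
      have : trc e ≤ 0 := Finset.sum_nonpos fun a _ => hno a
      linarith
    have := hP.diag_nonneg i.succ 1 a
    rw [hx' a a] at this
    simp [withOne] at this
    by_contra hneg
    push Not at hneg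
    nlinarith
  suffices h : 0 < ∑ r, ∑ s, e r s (H r s) by
    rw [hJ, hJ] at hmin; linarith
  let T : Matrix κ κ ℝ := Matrix.of fun r s => e r s 1
  have hT : T.PosSemidef := by
    refine Matrix.PosSemidef.of_dotProduct_mulVec_nonneg ?_ ?_
    · ext r s; simp [T, hP.symm s r]
    · intro ξ
      have := hP.pos 0 (fun r => C (ξ r))
      refine this.trans_eq ?_
      simp only [dotProduct, mulVec, Finset.mul_sum]
      refine Finset.sum_congr rfl fun r _ => Finset.sum_congr rfl fun s _ => ?_
      rw [hx' r s]
      simp [withOne, T]; ring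
  obtain ⟨k, v, hv⟩ := Matrix.posSemidef_iff_eq_sum_vecMulVec.1 hT
  have hTv : ∀ r s, e r s 1 = ∑ i, v i r * v i s := by
    intro r s
    have := congrFun (congrFun hv r) s
    simp only [T, Matrix.of_apply] at this
    rw [this, Matrix.sum_apply]
    simp [vecMulVec_apply]
  have e1 : ∑ r, ∑ s, e r s (H r s) = ∑ i, ∑ r, ∑ s, eval x (H r s) * v i r * v i s := by
    symm
    rw [Finset.sum_comm]
    refine Finset.sum_congr rfl fun r _ => ?_
    rw [Finset.sum_comm]
    refine Finset.sum_congr rfl fun s _ => ?_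
    rw [hx' , hTv, Finset.mul_sum]
    refine Finset.sum_congr rfl fun i _ => by ring
  rw [e1]
  refine Finset.sum_pos' (fun i _ => ?_) ?_
  · by_cases hi : v i = 0
    · simp [hi]
    · exact (hH x hxS _ hi).le
  · by_contra hno
    push Not at hno
    have hz : ∀ i, v i = 0 := by
      intro i
      by_contra hi
      exact absurd (hH x hxS _ hi) (not_lt.2 (hno i (Finset.mem_univ i)))
    have : trc e = 0 := Finset.sum_eq_zero fun r _ => by rw [hTv]; simp [hz]
    linarith

end states
end LassAux

set_option linter.unusedSectionVars false
namespace LassAux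
open Filter Topology

section mpos
variable {n m : ℕ} {κ : Type} [Fintype κ] [DecidableEq κ]
variable {g : Fin m → MvPolynomial (Fin n) ℝ}

lemma bound_dual (harch : IsArchimedeanQM (QM g)) (p : MvPolynomial (Fin n) ℝ) (D : ℕ) :
    ∃ (N : ℝ) (d : ℕ), 0 ≤ N ∧ ∀ L, Dual g d L → ∀ v : κ → MvPolynomial (Fin n) ℝ,
      (∀ r, (v r).totalDegree ≤ D) → ∀ r s, |L (p * (v r * v s))| ≤ N * ∑ t, L (v t ^ 2) := by
  obtain ⟨N, hN1, hN⟩ := bound_aux harch p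
  obtain ⟨d1, hd1⟩ := qm_dual hN D
  refine ⟨N + 1, max d1 (2 * (p.totalDegree + D)), by linarith, fun L hL v hv r s => ?_⟩
  have h1 := hd1 L (hL.mono (le_max_left _ _)) (v r) (hv r)
  have hL2 := hL.mono (le_max_right d1 (2 * (p.totalDegree + D)))
  have hsq : ∀ t, 0 ≤ L (v t ^ 2) := fun t => hL2.sq _ (by have := hv t; omega)
  have hle : ∀ t, L (v t ^ 2) ≤ ∑ t, L (v t ^ 2) := fun t =>
    Finset.single_le_sum (f := fun t => L (v t ^ 2)) (fun t _ => hsq t) (Finset.mem_univ t)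
  have hdeg : ∀ e : ℝ, (p * v r + C e * v s).totalDegree ≤ p.totalDegree + D := by
    intro e
    refine (totalDegree_add _ _).trans (max_le ?_ ?_)
    · exact (totalDegree_mul _ _).trans (by have := hv r; omega)
    · refine (totalDegree_mul _ _).trans ?_
      have := hv s
      simp; omega
  have h2 : ∀ e : ℝ, 0 ≤ L (p ^ 2 * v r ^ 2) + 2 * e * L (p * (v r * v s)) + e ^ 2 * L (v s ^ 2) := by
    intro e
    have := hL2.sq (p * v r + C e * v s) (by have := hdeg e; omega)
    have e1 : (p * v r + C e * v s) ^ 2 = p ^ 2 * v r ^ 2 + (2 * e) • (p * (v r * v s))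
        + (e ^ 2) • (v s ^ 2) := by
      simp only [smul_eq_C_mul, map_mul, map_pow, map_ofNat]; ring
    rw [e1, map_add, map_add, map_smul, map_smul] at this
    simpa using this
  have e3 : v r ^ 2 * (C N - p ^ 2) = N • v r ^ 2 - p ^ 2 * v r ^ 2 := by
    rw [smul_eq_C_mul]; ring
  rw [e3, map_sub, map_smul, smul_eq_mul] at h1
  have k1 := h2 1
  have k2 := h2 (-1)
  have hA : 2 * |L (p * (v r * v s))| ≤ L (p ^ 2 * v r ^ 2) + L (v s ^ 2) := by
    rcases abs_cases (L (p * (v r * v s))) with ⟨ha, _⟩ | ⟨ha, _⟩ <;> rw [ha] <;> linarith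
  have hN0 : N * L (v r ^ 2) ≤ N * ∑ t, L (v t ^ 2) :=
    mul_le_mul_of_nonneg_left (hle r) (by linarith)
  nlinarith [hle s, abs_nonneg (L (p * (v r * v s)))]

theorem mpos {Ω : Type} [TopologicalSpace Ω] (harch : IsArchimedeanQM (QM g)) {K : Set Ω}
    (hK : IsCompact K)
    (H : κ → κ → Ω → MvPolynomial (Fin n) ℝ) (hH : ∀ r s, Fam (H r s))
    (v : κ → Ω → MvPolynomial (Fin n) ℝ) (hv : ∀ r, Fam (v r))
    (hpos : ∀ ω ∈ K, ∀ x ∈ SolSet g, ∀ ξ : κ → ℝ, ξ ≠ 0 →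
      0 < ∑ r, ∑ s, eval x (H r s ω) * ξ r * ξ s) :
    ∃ d, ∀ ω ∈ K, ∀ L, Dual g d L → 0 ≤ L (∑ r, ∑ s, H r s ω * (v r ω * v s ω)) := by
  by_contra hcon
  push Not at hcon
  choose w hw L hL hneg using hcon
  have hDr : ∀ r, ∃ D, ∀ ω, (v r ω).totalDegree ≤ D := fun r => (hv r).degree
  choose Dr hDr using hDr
  obtain ⟨D, hD⟩ : ∃ D, ∀ r ω, (v r ω).totalDegree ≤ D :=
    ⟨∑ r, Dr r, fun r ω => (hDr r ω).trans
      (Finset.single_le_sum (f := Dr) (fun _ _ => Nat.zero_le _) (Finset.mem_univ r))⟩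
  choose N d0 hN0 hb using fun p => bound_dual (κ := κ) harch p D
  choose k c q hc hrep using fun r s => (hH r s).rep
  set ν : ℕ → ℝ := fun d => ∑ t, L d (v t (w d) ^ 2) with hν
  have hbd : ∀ p, ∀ᶠ d in atTop, ∀ r s, |L d (p * (v r (w d) * v s (w d)))| ≤ N p * ν d := by
    intro p
    filter_upwards [eventually_ge_atTop (d0 p)] with d hd
    exact hb p _ ((hL d).mono hd) (fun r => v r (w d)) (fun r => hD r _)
  have hν0 : ∀ᶠ d in atTop, 0 ≤ ν d := by
    filter_upwards [eventually_ge_atTop (2 * D)] with d hd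
    exact Finset.sum_nonneg fun t _ => (hL d).sq _ (by have := hD t (w d); omega)
  have hLrep : ∀ d, L d (∑ r, ∑ s, H r s (w d) * (v r (w d) * v s (w d))) =
      ∑ r, ∑ s, ∑ j, c r s j (w d) * L d (q r s j * (v r (w d) * v s (w d))) := by
    intro d
    rw [map_sum]
    refine Finset.sum_congr rfl fun r _ => ?_
    rw [map_sum]
    refine Finset.sum_congr rfl fun s _ => ?_
    rw [hrep, Finset.sum_mul, map_sum]
    refine Finset.sum_congr rfl fun j _ => ?_
    rw [smul_mul_assoc, map_smul, smul_eq_mul]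
  have hνpos : ∀ᶠ d in atTop, 0 < ν d := by
    have hall : ∀ᶠ d in atTop, ∀ r s j, |L d (q r s j * (v r (w d) * v s (w d)))| ≤
        N (q r s j) * ν d := by
      rw [eventually_all]; intro r
      rw [eventually_all]; intro s
      rw [eventually_all]; intro j
      filter_upwards [hbd (q r s j)] with d hd using hd r s
    filter_upwards [hall, hν0] with d h1 h2
    rcases h2.lt_or_eq with h | h
    · exact h
    · exfalso
      have := hneg d
      rw [hLrep] at this
      have hz : ∀ r s j, L d (q r s j * (v r (w d) * v s (w d))) = 0 := by
        intro r s j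
        have := h1 r s j
        rw [← h, mul_zero] at this
        exact abs_nonpos_iff.1 this
      simp [hz] at this
  set l : ℕ → κ → κ → MvPolynomial (Fin n) ℝ → ℝ :=
    fun d r s p => L d (p * (v r (w d) * v s (w d))) / ν d with hl
  let 𝒰 : Ultrafilter ℕ := hyperfilter ℕ
  have hU : (𝒰 : Filter ℕ) ≤ atTop := Nat.hyperfilter_le_atTop
  have hlim : ∀ r s p, ∃ y, Tendsto (fun d => l d r s p) 𝒰 (𝓝 y) := by
    intro r s p
    have hmem : ∀ᶠ d in (𝒰 : Filter ℕ), l d r s p ∈ Set.Icc (-(N p)) (N p) := by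
      refine hU ?_
      filter_upwards [hbd p, hνpos] with d h1 h2
      rw [Set.mem_Icc, ← abs_le, hl]
      simp only
      rw [abs_div, abs_of_pos h2, div_le_iff₀ h2]
      exact h1 r s
    obtain ⟨y, _, hy⟩ := isCompact_Icc.ultrafilter_le_nhds' (𝒰.map fun d => l d r s p) hmem
    exact ⟨y, hy⟩
  choose lim hlim using hlim
  obtain ⟨w0, hw0, hwlim⟩ := hK.ultrafilter_le_nhds' (𝒰.map w)
    (Filter.Eventually.of_forall hw : ∀ᶠ d in (𝒰 : Filter ℕ), w d ∈ K)
  have hwlim : Tendsto w 𝒰 (𝓝 w0) := hwlim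
  have hP : PosF g lim := by
    refine ⟨fun r s p q => ?_, fun r s a p => ?_, fun r s p => ?_, fun i p => ?_⟩
    · refine tendsto_nhds_unique (hlim r s (p + q)) ?_
      refine ((hlim r s p).add (hlim r s q)).congr fun d => ?_
      simp only [hl]; rw [add_mul, map_add, add_div]
    · refine tendsto_nhds_unique (hlim r s (a • p)) ?_
      refine ((hlim r s p).const_mul a).congr fun d => ?_
      simp only [hl]; rw [smul_mul_assoc, map_smul, smul_eq_mul, mul_div_assoc]
    · refine tendsto_nhds_unique (hlim r s p) ?_
      refine (hlim s r p).congr fun d => ?_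
      simp only [hl]; rw [mul_comm (v s (w d))]
    · have ht : Tendsto (fun d => ∑ r, ∑ s, l d r s (withOne g i * (p r * p s))) 𝒰
          (𝓝 (∑ r, ∑ s, lim r s (withOne g i * (p r * p s)))) :=
        tendsto_finsetSum _ fun r _ => tendsto_finsetSum _ fun s _ => hlim _ _ _
      refine ge_of_tendsto ht (hU ?_)
      filter_upwards [hνpos, eventually_ge_atTop (2 * (∑ r, ((p r).totalDegree + D)) +
        (withOne g i).totalDegree)] with d h1 h2
      have e : ∑ r, ∑ s, l d r s (withOne g i * (p r * p s)) =
          L d ((∑ r, p r * v r (w d)) ^ 2 * withOne g i) / ν d := by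
        simp only [hl]
        simp only [← Finset.sum_div, ← map_sum]
        congr 2
        rw [pow_two, Finset.sum_mul_sum, Finset.sum_mul]
        refine Finset.sum_congr rfl fun r _ => ?_
        rw [Finset.sum_mul]
        refine Finset.sum_congr rfl fun s _ => by ring
      rw [e]
      refine div_nonneg ((hL d) i _ ?_) h1.le
      have : (∑ r, p r * v r (w d)).totalDegree ≤ ∑ r, ((p r).totalDegree + D) := by
        refine totalDegree_finsetSum_le fun r _ => ?_
        refine (totalDegree_mul _ _).trans ?_
        have h3 := hD r (w d)
        have h4 := Finset.single_le_sum (f := fun r => (p r).totalDegree + D)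
          (fun _ _ => Nat.zero_le _) (Finset.mem_univ r)
        omega
      omega
  have htr : trc lim = 1 := by
    have ht : Tendsto (fun d => ∑ r, l d r r 1) 𝒰 (𝓝 (∑ r, lim r r 1)) :=
      tendsto_finsetSum _ fun r _ => hlim _ _ _
    refine tendsto_nhds_unique ht ?_
    refine tendsto_const_nhds.congr' (hU ?_)
    filter_upwards [hνpos] with d h1
    simp only [hl, one_mul, ← Finset.sum_div, ← pow_two]
    rw [div_self h1.ne']
  have hJ := state_pos harch (fun r s => H r s w0) (fun x hx ξ hξ => hpos w0 hw0 x hx ξ hξ)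
    ⟨hP, htr⟩
  have ht : Tendsto (fun d => L d (∑ r, ∑ s, H r s (w d) * (v r (w d) * v s (w d))) / ν d) 𝒰
      (𝓝 (∑ r, ∑ s, lim r s (H r s w0))) := by
    have e : ∀ r s, lim r s (H r s w0) = ∑ j, c r s j w0 * lim r s (q r s j) := by
      intro r s
      rw [hrep, hP.sum]
      refine Finset.sum_congr rfl fun j _ => hP.smul _ _ _ _
    simp only [e, hLrep, Finset.sum_div]
    refine tendsto_finsetSum _ fun r _ => tendsto_finsetSum _ fun s _ =>
      tendsto_finsetSum _ fun j _ => ?_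
    refine ((((hc r s j).tendsto w0).comp hwlim).mul (hlim r s (q r s j))).congr fun d => ?_
    simp only [hl, Function.comp]; ring
  have hle : ∑ r, ∑ s, lim r s (H r s w0) ≤ 0 := by
    refine le_of_tendsto ht (hU ?_)
    filter_upwards [hνpos] with d h1
    exact div_nonpos_of_nonpos_of_nonneg (hneg d).le h1.le
  linarith

/-- scalar version -/
theorem mpos1 {Ω : Type} [TopologicalSpace Ω] (harch : IsArchimedeanQM (QM g)) {K : Set Ω}
    (hK : IsCompact K) {H v : Ω → MvPolynomial (Fin n) ℝ} (hH : Fam H) (hv : Fam v)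
    (hpos : ∀ ω ∈ K, ∀ x ∈ SolSet g, 0 < eval x (H ω)) :
    ∃ d, ∀ ω ∈ K, ∀ L, Dual g d L → 0 ≤ L (H ω * v ω ^ 2) := by
  obtain ⟨d, hd⟩ := mpos (κ := Unit) harch hK (fun _ _ => H) (fun _ _ => hH) (fun _ => v)
    (fun _ => hv) (fun ω hω x hx ξ hξ => by
      have h1 := hpos ω hω x hx
      have : ξ () ≠ 0 := fun h => hξ (funext fun _ => h)
      simp only [Finset.univ_unique, Finset.sum_singleton]
      rw [mul_assoc]
      exact mul_pos h1 (mul_self_pos.2 this))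
  refine ⟨d, fun ω hω L hL => ?_⟩
  have := hd ω hω L hL
  simpa [pow_two] using this

end mpos
end LassAux

set_option linter.unusedSectionVars false
namespace LassAux
open Filter Topology

lemma cl {X : Type*} [TopologicalSpace X] {K : Set X} (hK : IsCompact K) {f h : X → ℝ}
    (hf : Continuous f) (hh : Continuous h) (h0 : ∀ x ∈ K, 0 ≤ h x)
    (hpos : ∀ x ∈ K, h x = 0 → 0 < f x) :
    ∃ l0 : ℝ, 0 < l0 ∧ ∀ l, l0 ≤ l → ∀ x ∈ K, 0 < f x + l * h x := by
  have hK' : IsCompact (K ∩ {x | f x ≤ 0}) := hK.inter_right (isClosed_le hf continuous_const)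
  rcases (K ∩ {x | f x ≤ 0}).eq_empty_or_nonempty with he | hne
  · refine ⟨1, one_pos, fun l hl x hx => ?_⟩
    have : 0 < f x := by
      by_contra hc
      push Not at hc
      have : x ∈ K ∩ {x | f x ≤ 0} := ⟨hx, hc⟩
      rw [he] at this; exact this
    have := mul_nonneg (by linarith : 0 ≤ l) (h0 x hx)
    linarith
  · obtain ⟨a, ha, hmin⟩ := hK'.exists_isMinOn hne hf.continuousOn
    obtain ⟨b, hb, hminh⟩ := hK'.exists_isMinOn hne hh.continuousOn
    have hc : 0 < h b := by
      rcases (h0 b hb.1).lt_or_eq with h | h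
      · exact h
      · exact absurd (hpos b hb.1 h.symm) (not_lt.2 hb.2)
    have hfa : f a ≤ 0 := ha.2
    refine ⟨(1 - f a) / h b, by apply div_pos <;> linarith, fun l hl x hx => ?_⟩
    rw [div_le_iff₀ hc] at hl
    have hl0 : 0 < l := by
      by_contra hn
      push Not at hn
      nlinarith
    by_cases hfx : f x ≤ 0
    · have h1 : f a ≤ f x := hmin ⟨hx, hfx⟩
      have h2 : h b ≤ h x := hminh ⟨hx, hfx⟩
      nlinarith
    · have := mul_nonneg hl0.le (h0 x hx)
      push Not at hfx
      linarith

/-- unit sphere for the euclidean norm in `κ → ℝ` -/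
def sph (κ : Type) [Fintype κ] : Set (κ → ℝ) := {ξ | ∑ r, ξ r ^ 2 = 1}

lemma sph_compact (κ : Type) [Fintype κ] : IsCompact (sph κ) := by
  refine (isCompact_univ_pi fun _ : κ => isCompact_Icc (a := (-1 : ℝ)) (b := 1)).of_isClosed_subset
    ?_ ?_
  · exact isClosed_eq (by fun_prop) continuous_const
  · intro ξ hξ r _
    have h1 : ξ r ^ 2 ≤ ∑ r, ξ r ^ 2 :=
      Finset.single_le_sum (f := fun r => ξ r ^ 2) (fun r _ => sq_nonneg _) (Finset.mem_univ r)
    have hξ' : ∑ r, ξ r ^ 2 = 1 := hξ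
    rw [hξ'] at h1
    exact abs_le.1 (by rwa [sq_le_one_iff_abs_le_one] at h1)

lemma ne_zero_of_sph {κ : Type} [Fintype κ] {ξ : κ → ℝ} (h : ξ ∈ sph κ) : ξ ≠ 0 := by
  rintro rfl
  simp [sph] at h

/-- quadratic form -/
def qf {κ : Type} [Fintype κ] (R : κ → κ → ℝ) (ξ : κ → ℝ) : ℝ := ∑ r, ∑ s, R r s * ξ r * ξ s

lemma qf_smul {κ : Type} [Fintype κ] (R : κ → κ → ℝ) (ξ : κ → ℝ) (a : ℝ) :
    qf R (a • ξ) = a ^ 2 * qf R ξ := by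
  unfold qf
  simp only [Finset.mul_sum, Pi.smul_apply, smul_eq_mul]
  refine Finset.sum_congr rfl fun r _ => Finset.sum_congr rfl fun s _ => by ring

lemma sumsq_pos {κ : Type} [Fintype κ] {ξ : κ → ℝ} (h : ξ ≠ 0) : 0 < ∑ r, ξ r ^ 2 := by
  obtain ⟨r, hr⟩ := Function.ne_iff.1 h
  exact Finset.sum_pos' (fun _ _ => sq_nonneg _) ⟨r, Finset.mem_univ r, by
    have : ξ r ≠ 0 := hr
    positivity⟩

lemma exists_sph {κ : Type} [Fintype κ] {ξ : κ → ℝ} (h : ξ ≠ 0) :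
    ∃ (a : ℝ) (η : κ → ℝ), 0 < a ∧ η ∈ sph κ ∧ ξ = a • η ∧ a ^ 2 = ∑ r, ξ r ^ 2 := by
  have h1 := sumsq_pos h
  set N := ∑ r, ξ r ^ 2 with hN
  have h2 : 0 < Real.sqrt N := Real.sqrt_pos.2 h1
  refine ⟨Real.sqrt N, (Real.sqrt N)⁻¹ • ξ, h2, ?_, ?_, Real.sq_sqrt h1.le⟩
  · simp only [sph, Set.mem_ofPred_eq, Pi.smul_apply, smul_eq_mul, mul_pow]
    rw [← Finset.mul_sum, ← hN, inv_pow, Real.sq_sqrt h1.le, inv_mul_cancel₀ h1.ne']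
  · rw [smul_smul, mul_inv_cancel₀ h2.ne', one_smul]

lemma qf_pos_of_sph {κ : Type} [Fintype κ] {R : κ → κ → ℝ} (h : ∀ η ∈ sph κ, 0 < qf R η)
    {ξ : κ → ℝ} (hξ : ξ ≠ 0) : 0 < qf R ξ := by
  obtain ⟨a, η, ha, hη, rfl, _⟩ := exists_sph hξ
  rw [qf_smul]
  exact mul_pos (by positivity) (h η hη)

section
variable {n m : ℕ} {κ : Type} [Fintype κ] [DecidableEq κ]
variable {g : Fin m → MvPolynomial (Fin n) ℝ} {Ω : Type} [TopologicalSpace Ω]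

/-- evaluated matrix -/
def evM (R : κ → κ → Ω → MvPolynomial (Fin n) ℝ) (ω : Ω) (x : Fin n → ℝ) : κ → κ → ℝ :=
  fun r s => eval x (R r s ω)
/-- evaluated vector -/
def evV (v : κ → Ω → MvPolynomial (Fin n) ℝ) (ω : Ω) (x : Fin n → ℝ) : κ → ℝ :=
  fun r => eval x (v r ω)

lemma cont_qf {R : κ → κ → Ω → MvPolynomial (Fin n) ℝ} (hR : ∀ r s, Fam (R r s)) :
    Continuous fun z : (Ω × (Fin n → ℝ)) × (κ → ℝ) => qf (evM R z.1.1 z.1.2) z.2 := by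
  unfold qf evM
  refine continuous_finsetSum _ fun r _ => continuous_finsetSum _ fun s _ => ?_
  have := (hR r s).cont.comp (continuous_fst (X := Ω × (Fin n → ℝ)) (Y := κ → ℝ))
  exact (this.mul ((continuous_apply r).comp continuous_snd)).mul
    ((continuous_apply s).comp continuous_snd)

lemma cont_v {v : κ → Ω → MvPolynomial (Fin n) ℝ} (hv : ∀ r, Fam (v r)) (r : κ) :
    Continuous fun z : Ω × (Fin n → ℝ) => evV v z.1 z.2 r := (hv r).cont

theorem qt (harch : IsArchimedeanQM (QM g)) {K : Set Ω} (hK : IsCompact K)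
    {R : κ → κ → Ω → MvPolynomial (Fin n) ℝ} (hR : ∀ r s, Fam (R r s))
    {v : κ → Ω → MvPolynomial (Fin n) ℝ} (hv : ∀ r, Fam (v r))
    (h1 : ∀ ω ∈ K, ∀ x ∈ SolSet g, evV v ω x = 0 → ∀ ξ, ξ ≠ 0 → 0 < qf (evM R ω x) ξ)
    (h2 : ∀ ω ∈ K, ∀ x ∈ SolSet g, evV v ω x ≠ 0 → 0 < qf (evM R ω x) (evV v ω x)) :
    ∃ d, ∀ ω ∈ K, ∀ L, Dual g d L → 0 ≤ L (∑ r, ∑ s, R r s ω * (v r ω * v s ω)) := by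
  have hS := isCompact_SolSet harch
  have hcpt : IsCompact ((K ×ˢ SolSet g) ×ˢ sph κ) := (hK.prod hS).prod (sph_compact κ)
  let hfun : (Ω × (Fin n → ℝ)) × (κ → ℝ) → ℝ := fun z =>
    (∑ r, evV v z.1.1 z.1.2 r ^ 2) * (∑ r, z.2 r ^ 2) - (∑ r, evV v z.1.1 z.1.2 r * z.2 r) ^ 2
  have hvc : ∀ r, Continuous fun z : (Ω × (Fin n → ℝ)) × (κ → ℝ) => evV v z.1.1 z.1.2 r :=
    fun r => (cont_v hv r).comp continuous_fst
  have hhc : Continuous hfun := by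
    refine Continuous.sub (Continuous.mul ?_ ?_) (Continuous.pow ?_ 2)
    · exact continuous_finsetSum _ fun r _ => (hvc r).pow 2
    · fun_prop
    · exact continuous_finsetSum _ fun r _ =>
        (hvc r).mul ((continuous_apply r).comp continuous_snd)
  obtain ⟨l0, hl0, hl⟩ := cl hcpt (cont_qf hR) hhc
    (by
      rintro ⟨⟨ω, x⟩, ξ⟩ _
      exact sub_nonneg.2 (Finset.sum_mul_sq_le_sq_mul_sq _ _ _))
    (by
      rintro ⟨⟨ω, x⟩, ξ⟩ ⟨⟨hω, hx⟩, hξ⟩ h0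
      simp only at hω hx hξ
      by_cases hvz : evV v ω x = 0
      · exact h1 ω hω x hx hvz ξ (ne_zero_of_sph hξ)
      · simp only [hfun] at h0
        have hξ1 : ∑ r, ξ r ^ 2 = 1 := hξ
        set a := evV v ω x
        have hN := sumsq_pos hvz
        set N := ∑ r, a r ^ 2
        set b := ∑ r, a r * ξ r
        rw [hξ1, mul_one] at h0
        -- a = b ξ
        have hz : ∑ r, (a r - b * ξ r) ^ 2 = 0 := by
          have : ∑ r, (a r - b * ξ r) ^ 2 = N - 2 * b * b + b ^ 2 * ∑ r, ξ r ^ 2 := by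
            simp only [N, Finset.mul_sum]
            conv_rhs => rw [show 2 * b * b = ∑ r, 2 * b * (a r * ξ r) by
              rw [← Finset.mul_sum]]
            rw [← Finset.sum_sub_distrib, ← Finset.sum_add_distrib]
            refine Finset.sum_congr rfl fun r _ => by ring
          rw [this, hξ1]; linarith
        have hab : a = b • ξ := by
          funext r
          have := (Finset.sum_eq_zero_iff_of_nonneg (fun r _ => sq_nonneg (a r - b * ξ r))).1 hz r
            (Finset.mem_univ r)
          have := pow_eq_zero_iff (two_ne_zero) |>.1 this
          simp; linarith
        have h3 := h2 ω hω x hx hvz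
        change 0 < qf _ a at h3
        rw [hab, qf_smul] at h3
        exact pos_of_mul_pos_right h3 (sq_nonneg b))
  -- the modified matrix
  let R' : κ → κ → Ω → MvPolynomial (Fin n) ℝ := fun r s ω =>
    R r s ω + C l0 * ((if r = s then ∑ t, v t ω ^ 2 else 0) - v r ω * v s ω)
  have hR' : ∀ r s, Fam (R' r s) := by
    intro r s
    refine (hR r s).add ((Fam.const _).mul (Fam.sub ?_ ((hv r).mul (hv s))))
    by_cases hrs : r = s
    · simp only [hrs, if_true]; exact Fam.sum _ fun t _ => (hv t).pow 2
    · simp only [hrs, if_false]; exact Fam.const _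
  have hqf : ∀ ω x ξ, qf (evM R' ω x) ξ = qf (evM R ω x) ξ + l0 *
      ((∑ r, evV v ω x r ^ 2) * (∑ r, ξ r ^ 2) - (∑ r, evV v ω x r * ξ r) ^ 2) := by
    intro ω x ξ
    have e1 : (∑ r, evV v ω x r ^ 2) * (∑ r, ξ r ^ 2) =
        ∑ r, ∑ s, (if r = s then ∑ t, evV v ω x t ^ 2 else 0) * ξ r * ξ s := by
      rw [Finset.mul_sum]
      refine Finset.sum_congr rfl fun r _ => ?_
      simp [ite_mul, pow_two, mul_assoc]
    rw [e1, pow_two, Finset.sum_mul_sum]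
    unfold qf
    simp only [mul_sub, Finset.mul_sum, ← Finset.sum_sub_distrib, ← Finset.sum_add_distrib]
    refine Finset.sum_congr rfl fun r _ => Finset.sum_congr rfl fun s _ => ?_
    simp only [evM, R', evV]
    by_cases hrs : r = s
    · simp [hrs]; ring
    · simp [hrs]; ring
  obtain ⟨d, hd⟩ := mpos harch hK R' hR' v hv (by
    intro ω hω x hx ξ hξ
    change 0 < qf (evM R' ω x) ξ
    refine qf_pos_of_sph (fun η hη => ?_) hξ
    rw [hqf]
    exact hl l0 le_rfl ⟨⟨ω, x⟩, η⟩ ⟨⟨hω, hx⟩, hη⟩)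
  refine ⟨d, fun ω hω L hL => ?_⟩
  have h := hd ω hω L hL
  have e : ∑ r, ∑ s, R' r s ω * (v r ω * v s ω) = ∑ r, ∑ s, R r s ω * (v r ω * v s ω) := by
    simp only [R', add_mul, Finset.sum_add_distrib]
    rw [add_eq_left]
    simp only [mul_assoc, sub_mul, ← Finset.mul_sum, Finset.sum_sub_distrib]
    have : ∑ i, ∑ j, (if i = j then ∑ t, v t ω ^ 2 else 0) * (v i ω * v j ω) =
        ∑ i, ∑ j, v i ω * (v j ω * (v i ω * v j ω)) := by
      have e1 : ∀ i, ∑ j, (if i = j then ∑ t, v t ω ^ 2 else 0) * (v i ω * v j ω) =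
          (∑ t, v t ω ^ 2) * (v i ω * v i ω) := fun i => by simp [ite_mul]
      simp only [e1]
      rw [← Finset.mul_sum, Finset.sum_mul_sum]
      refine Finset.sum_congr rfl fun r _ => Finset.sum_congr rfl fun s _ => by ring
    simp only [Finset.mul_sum] at this ⊢
    rw [this]; simp
  rwa [e] at h

end
end LassAux

set_option linter.unusedSectionVars false
namespace LassAux
open Filter Topology

lemma cl2 {X : Type*} [TopologicalSpace X] {K : Set X} (hK : IsCompact K) {f h : X → ℝ}
    (hf : Continuous f) (hh : Continuous h) (h0 : ∀ x ∈ K, 0 ≤ h x)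
    (hpos : ∀ x ∈ K, h x = 0 → 0 < f x) :
    ∃ ρ : ℝ, 0 < ρ ∧ ∀ x ∈ K, h x < ρ → 0 < f x := by
  have hK' : IsCompact (K ∩ {x | f x ≤ 0}) := hK.inter_right (isClosed_le hf continuous_const)
  rcases (K ∩ {x | f x ≤ 0}).eq_empty_or_nonempty with he | hne
  · refine ⟨1, one_pos, fun x hx _ => ?_⟩
    by_contra hc
    push Not at hc
    have : x ∈ K ∩ {x | f x ≤ 0} := ⟨hx, hc⟩
    rw [he] at this; exact this
  · obtain ⟨b, hb, hminh⟩ := hK'.exists_isMinOn hne hh.continuousOn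
    refine ⟨h b, ?_, fun x hx hlt => ?_⟩
    · rcases (h0 b hb.1).lt_or_eq with h | h
      · exact h
      · exact absurd (hpos b hb.1 h.symm) (not_lt.2 hb.2)
    · by_contra hc
      push Not at hc
      have : h b ≤ h x := hminh ⟨hx, hc⟩
      linarith

lemma cl3 {X : Type*} [TopologicalSpace X] {K : Set X} (hK : IsCompact K) {f : X → ℝ}
    (hf : Continuous f) (hpos : ∀ x ∈ K, 0 < f x) : ∃ c : ℝ, 0 < c ∧ ∀ x ∈ K, c ≤ f x := by
  rcases K.eq_empty_or_nonempty with he | hne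
  · exact ⟨1, one_pos, fun x hx => by rw [he] at hx; exact hx.elim⟩
  · obtain ⟨b, hb, hmin⟩ := hK.exists_isMinOn hne hf.continuousOn
    exact ⟨f b, hpos b hb, fun x hx => hmin hx⟩

lemma zsig {z G : ℝ} (hG : 0 < G) (h0 : 0 ≤ z) (h1 : z ≤ G) (M : ℕ) :
    (M : ℝ) * (z * (1 - G⁻¹ * z) ^ M) ≤ G := by
  set y := G⁻¹ * z with hy
  have hz : z = G * y := by rw [hy, mul_inv_cancel_left₀ hG.ne']
  have hy0 : 0 ≤ y := by positivity
  have hy1 : y ≤ 1 := by rw [hy, inv_mul_le_iff₀ hG]; linarith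
  have hb := one_add_mul_le_pow (by linarith : (-2 : ℝ) ≤ y) M
  have hp : 0 ≤ (1 - y) ^ M := pow_nonneg (by linarith) M
  have h2 : (1 + y) ^ M * (1 - y) ^ M ≤ 1 := by
    rw [← mul_pow]
    exact pow_le_one₀ (by nlinarith) (by nlinarith)
  have h3 : (1 + M * y) * (1 - y) ^ M ≤ 1 :=
    (mul_le_mul_of_nonneg_right hb hp).trans h2
  have h4 : M * y * (1 - y) ^ M ≤ 1 := by nlinarith
  rw [hz]
  calc (M : ℝ) * (G * y * (1 - y) ^ M) = G * (M * y * (1 - y) ^ M) := by ring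
    _ ≤ G * 1 := mul_le_mul_of_nonneg_left h4 hG.le
    _ = G := mul_one G

section
variable {n m : ℕ} {κ : Type} [Fintype κ] [DecidableEq κ]
variable {g : Fin m → MvPolynomial (Fin n) ℝ} {Ω : Type} [TopologicalSpace Ω]

set_option maxHeartbeats 600000 in
theorem ql (harch : IsArchimedeanQM (QM g)) {K : Set Ω} (hK : IsCompact K)
    {π : Type} [Fintype π] {c : π → ℝ} (hc : ∀ p, 0 < c p) {G : ℝ} (hG : 0 < G)
    {θ : Ω → MvPolynomial (Fin n) ℝ} (hθ : Fam θ)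
    {z : π → Ω → MvPolynomial (Fin n) ℝ} (hz : ∀ p, Fam (z p))
    {α : π → κ → Ω → MvPolynomial (Fin n) ℝ} (hα : ∀ p r, Fam (α p r))
    {R : κ → κ → Ω → MvPolynomial (Fin n) ℝ} (hR : ∀ r s, Fam (R r s))
    {v : κ → Ω → MvPolynomial (Fin n) ℝ} (hv : ∀ r, Fam (v r))
    (e1 : ∀ ω ∈ K, θ ω = ∑ p, C (c p) * z p ω + ∑ r, ∑ s, R r s ω * (v r ω * v s ω))
    (e2 : ∀ ω ∈ K, ∀ p, z p ω = ∑ r, α p r ω * v r ω)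
    (h3 : ∀ ω ∈ K, ∀ x ∈ SolSet g, ∀ p, 0 ≤ eval x (z p ω) ∧ eval x (z p ω) ≤ G)
    (h4 : ∀ ω ∈ K, ∀ x ∈ SolSet g, evV v ω x = 0 → ∀ ξ, ξ ≠ 0 →
      (∀ p, ∑ r, eval x (α p r ω) * ξ r = 0) → 0 < qf (evM R ω x) ξ)
    (h5 : ∀ ω ∈ K, ∀ x ∈ SolSet g, evV v ω x ≠ 0 → 0 < eval x (θ ω))
    (h6 : ∀ p k, ∃ d, ∀ ω ∈ K, ∀ L, Dual g d L →
      0 ≤ L (z p ω * ((1 - C G⁻¹ * z p ω) ^ k) ^ 2)) :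
    ∃ d, ∀ ω ∈ K, ∀ L, Dual g d L → 0 ≤ L (θ ω) := by
  have hS := isCompact_SolSet harch
  have hKS : IsCompact (K ×ˢ SolSet g) := hK.prod hS
  let kp : ℕ → π → Ω → MvPolynomial (Fin n) ℝ := fun M p ω =>
    C G⁻¹ * ∑ j ∈ Finset.range (2 * M), (1 - C G⁻¹ * z p ω) ^ j
  have hkpF : ∀ M p, Fam (kp M p) := fun M p =>
    (Fam.const _).mul (Fam.sum _ fun j _ =>
      (((Fam.const 1).sub ((Fam.const _).mul (hz p))).pow j))
  have hkp : ∀ M p ω, z p ω ^ 2 * kp M p ω = z p ω - z p ω * ((1 - C G⁻¹ * z p ω) ^ M) ^ 2 := by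
    intro M p ω
    have := geom_sum_mul (1 - C G⁻¹ * z p ω) (2 * M)
    have e : z p ω * kp M p ω = 1 - (1 - C G⁻¹ * z p ω) ^ (2 * M) := by
      simp only [kp]
      linear_combination -this
    rw [← pow_mul, mul_comm M 2, pow_two, mul_assoc, e]; ring
  let RM : ℕ → κ → κ → Ω → MvPolynomial (Fin n) ℝ := fun M r s ω =>
    R r s ω + ∑ p, C (c p) * kp M p ω * (α p r ω * α p s ω)
  have hRM : ∀ M r s, Fam (RM M r s) := fun M r s =>
    (hR r s).add (Fam.sum _ fun p _ => ((Fam.const _).mul (hkpF M p)).mul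
      ((hα p r).mul (hα p s)))
  have hqf : ∀ M ω x ξ, qf (evM (RM M) ω x) ξ = qf (evM R ω x) ξ +
      ∑ p, c p * eval x (kp M p ω) * (∑ r, eval x (α p r ω) * ξ r) ^ 2 := by
    intro M ω x ξ
    have : ∀ p, c p * eval x (kp M p ω) * (∑ r, eval x (α p r ω) * ξ r) ^ 2 =
        ∑ r, ∑ s, c p * eval x (kp M p ω) * (eval x (α p r ω) * eval x (α p s ω)) * ξ r * ξ s := by
      intro p
      rw [pow_two, Finset.sum_mul_sum, Finset.mul_sum]
      refine Finset.sum_congr rfl fun r _ => ?_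
      rw [Finset.mul_sum]
      refine Finset.sum_congr rfl fun s _ => by ring
    simp only [this]
    rw [Finset.sum_comm]
    unfold qf
    rw [← Finset.sum_add_distrib]
    refine Finset.sum_congr rfl fun r _ => ?_
    rw [Finset.sum_comm, ← Finset.sum_add_distrib]
    refine Finset.sum_congr rfl fun s _ => ?_
    simp only [evM, RM, map_add, map_sum, map_mul, eval_C, add_mul, Finset.sum_mul]
  have hpoly : ∀ M, ∀ ω ∈ K, θ ω = (∑ r, ∑ s, RM M r s ω * (v r ω * v s ω)) +
      ∑ p, C (c p) * (z p ω * ((1 - C G⁻¹ * z p ω) ^ M) ^ 2) := by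
    intro M ω hω
    have h : ∑ r, ∑ s, RM M r s ω * (v r ω * v s ω) = (∑ r, ∑ s, R r s ω * (v r ω * v s ω)) +
        ∑ p, C (c p) * (z p ω ^ 2 * kp M p ω) := by
      have h' : ∀ p, C (c p) * (z p ω ^ 2 * kp M p ω) =
          ∑ r, ∑ s, C (c p) * kp M p ω * (α p r ω * α p s ω) * (v r ω * v s ω) := by
        intro p
        conv_lhs => rw [e2 ω hω p]
        have : kp M p ω = kp M p ω := rfl
        rw [pow_two, Finset.sum_mul_sum, Finset.sum_mul, Finset.mul_sum]
        refine Finset.sum_congr rfl fun r _ => ?_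
        rw [Finset.sum_mul, Finset.mul_sum]
        refine Finset.sum_congr rfl fun s _ => by ring
      simp only [h']
      have h'' : ∑ p, ∑ r, ∑ s, C (c p) * kp M p ω * (α p r ω * α p s ω) * (v r ω * v s ω) =
          ∑ r, ∑ s, ∑ p, C (c p) * kp M p ω * (α p r ω * α p s ω) * (v r ω * v s ω) := by
        rw [Finset.sum_comm]
        refine Finset.sum_congr rfl fun r _ => ?_
        rw [Finset.sum_comm]
      rw [h'']
      simp only [RM, add_mul, Finset.sum_mul, Finset.sum_add_distrib]
    rw [h, e1 ω hω, add_comm, add_assoc, ← Finset.sum_add_distrib]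
    congr 1
    refine Finset.sum_congr rfl fun p _ => ?_
    rw [hkp]; ring
  have hkpe : ∀ M p ω x, eval x (kp M p ω) =
      G⁻¹ * ∑ j ∈ Finset.range (2 * M), (1 - G⁻¹ * eval x (z p ω)) ^ j := by
    intro M p ω x; simp [kp]
  -- step 1
  have hcl1 : IsCompact (((K ×ˢ SolSet g) ∩ {y | ∀ r, evV v y.1 y.2 r = 0}) ×ˢ sph κ) := by
    refine (hKS.inter_right ?_).prod (sph_compact κ)
    rw [Set.ofPred_forall]
    exact isClosed_iInter fun r => isClosed_eq (cont_v hv r) continuous_const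
  have hαc : Continuous fun y : (Ω × (Fin n → ℝ)) × (κ → ℝ) =>
      ∑ p, c p * (∑ r, eval y.1.2 (α p r y.1.1) * y.2 r) ^ 2 := by
    refine continuous_finsetSum _ fun p _ => continuous_const.mul (Continuous.pow ?_ 2)
    refine continuous_finsetSum _ fun r _ => ?_
    exact ((hα p r).cont.comp continuous_fst).mul ((continuous_apply r).comp continuous_snd)
  obtain ⟨l0, hl0, hl⟩ := cl hcl1 (cont_qf hR) hαc
    (fun y _ => Finset.sum_nonneg fun p _ => mul_nonneg (hc p).le (sq_nonneg _))
    (by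
      rintro ⟨⟨ω, x⟩, ξ⟩ ⟨⟨⟨hω, hx⟩, hv0⟩, hξ⟩ h0
      simp only at hω hx hξ h0
      refine h4 ω hω x hx (funext hv0) ξ (ne_zero_of_sph hξ) fun p => ?_
      have := (Finset.sum_eq_zero_iff_of_nonneg
        (fun p _ => mul_nonneg (hc p).le (sq_nonneg _))).1 h0 p (Finset.mem_univ p)
      rcases mul_eq_zero.1 this with h | h
      · exact absurd h (hc p).ne'
      · exact pow_eq_zero_iff two_ne_zero |>.1 h)
  obtain ⟨M0, hM0⟩ := exists_nat_ge (l0 * G)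
  have step1 : ∀ M, M0 ≤ M → ∀ ω ∈ K, ∀ x ∈ SolSet g, evV v ω x = 0 → ∀ ξ, ξ ≠ 0 →
      0 < qf (evM (RM M) ω x) ξ := by
    intro M hM ω hω x hx hv0 ξ hξ
    refine qf_pos_of_sph (fun η hη => ?_) hξ
    rw [hqf]
    have hz0 : ∀ p, eval x (z p ω) = 0 := by
      intro p
      rw [e2 ω hω p, map_sum]
      refine Finset.sum_eq_zero fun r _ => ?_
      rw [map_mul, show eval x (v r ω) = 0 from congrFun hv0 r, mul_zero]
    have hke : ∀ p, eval x (kp M p ω) = G⁻¹ * (2 * M) := by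
      intro p; rw [hkpe, hz0]; simp
    have h1 := hl (G⁻¹ * (2 * M)) (by
      rw [le_inv_mul_iff₀ hG]
      have : (M0 : ℝ) ≤ M := by exact_mod_cast hM
      have h0 : (0 : ℝ) ≤ M0 := Nat.cast_nonneg _
      nlinarith) ⟨⟨ω, x⟩, η⟩ ⟨⟨⟨hω, hx⟩, fun r => congrFun hv0 r⟩, hη⟩
    refine h1.trans_eq ?_
    simp only [hke]
    rw [Finset.mul_sum]
    congr 1
    refine Finset.sum_congr rfl fun p _ => by ring
  -- step 2
  have hvc : Continuous fun y : Ω × (Fin n → ℝ) => ∑ r, evV v y.1 y.2 r ^ 2 :=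
    continuous_finsetSum _ fun r _ => (cont_v hv r).pow 2
  obtain ⟨ρ, hρ, hρ2⟩ := cl2 (hKS.prod (sph_compact κ)) (cont_qf (hRM M0))
    (hvc.comp continuous_fst) (fun y _ => Finset.sum_nonneg fun r _ => sq_nonneg _)
    (by
      rintro ⟨⟨ω, x⟩, ξ⟩ ⟨⟨hω, hx⟩, hξ⟩ h0
      refine step1 M0 le_rfl ω hω x hx (funext fun r => ?_) ξ (ne_zero_of_sph hξ)
      have := (Finset.sum_eq_zero_iff_of_nonneg (fun r _ => sq_nonneg _)).1 h0 r
        (Finset.mem_univ r)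
      exact pow_eq_zero_iff two_ne_zero |>.1 this)
  -- step 3
  have hcl3 : IsCompact ((K ×ˢ SolSet g) ∩ {y | ρ ≤ ∑ r, evV v y.1 y.2 r ^ 2}) :=
    hKS.inter_right (isClosed_le continuous_const hvc)
  obtain ⟨c1, hc1, hc1'⟩ := cl3 hcl3 hθ.cont (by
    rintro ⟨ω, x⟩ ⟨⟨hω, hx⟩, h⟩
    refine h5 ω hω x hx fun h0 => ?_
    simp only [Set.mem_ofPred_eq, h0] at h
    simp at h
    linarith)
  obtain ⟨M1, hM1⟩ := exists_nat_gt ((∑ p, c p * G) / c1)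
  set M := max M0 (M1 + 1) with hM
  have hMpos : (0 : ℝ) < 2 * M := by
    have : 0 < M := by rw [hM]; exact lt_max_of_lt_right (Nat.succ_pos _)
    positivity
  have hMc : (∑ p, c p * G) < c1 * (2 * M) := by
    rw [div_lt_iff₀ hc1] at hM1
    have h1 : (M1 : ℝ) + 1 ≤ M := by
      have : M1 + 1 ≤ M := le_max_right _ _
      exact_mod_cast this
    nlinarith
  have hev : ∀ ω x, qf (evM (RM M) ω x) (evV v ω x) =
      eval x (∑ r, ∑ s, RM M r s ω * (v r ω * v s ω)) := by
    intro ω x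
    unfold qf evM evV
    simp only [map_sum, map_mul, mul_assoc]
  obtain ⟨d, hd⟩ := qt harch hK (hRM M) hv (step1 M (le_max_left _ _)) (by
    intro ω hω x hx hvne
    by_cases hlt : ∑ r, evV v ω x r ^ 2 < ρ
    · obtain ⟨a, η, ha, hη, hav, _⟩ := exists_sph hvne
      have h1 := hρ2 ⟨⟨ω, x⟩, η⟩ ⟨⟨hω, hx⟩, hη⟩ hlt
      simp only at h1
      have h2 : 0 < qf (evM (RM M) ω x) η := by
        refine h1.trans_le ?_
        rw [hqf, hqf]
        gcongr with p
        · exact (hc p).le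
        · rw [hkpe, hkpe]
          refine mul_le_mul_of_nonneg_left ?_ (by positivity)
          refine Finset.sum_le_sum_of_subset_of_nonneg ?_ ?_
          · intro j hj
            simp only [Finset.mem_range] at hj ⊢
            have : M0 ≤ M := le_max_left _ _
            omega
          · intro j _ _
            refine pow_nonneg ?_ j
            have := (h3 ω hω x hx p).2
            rw [sub_nonneg, inv_mul_le_iff₀ hG]; linarith
      rw [hav, qf_smul]
      exact mul_pos (pow_pos ha 2) h2
    · push Not at hlt
      have h1 := hc1' ⟨ω, x⟩ ⟨⟨hω, hx⟩, hlt⟩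
      simp only at h1
      rw [hpoly M ω hω, map_add, ← hev] at h1
      have h2 : eval x (∑ p, C (c p) * (z p ω * ((1 - C G⁻¹ * z p ω) ^ M) ^ 2)) * (2 * M) ≤
          ∑ p, c p * G := by
        rw [map_sum, Finset.sum_mul]
        refine Finset.sum_le_sum fun p _ => ?_
        have := zsig hG (h3 ω hω x hx p).1 (h3 ω hω x hx p).2 (2 * M)
        have h7 := mul_le_mul_of_nonneg_left this (hc p).le
        refine le_trans (le_of_eq ?_) h7
        simp only [map_mul, map_pow, map_sub, eval_C, map_one]
        push_cast
        rw [← pow_mul, mul_comm M 2]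
        ring
      have h8 : eval x (∑ p, C (c p) * (z p ω * ((1 - C G⁻¹ * z p ω) ^ M) ^ 2)) < c1 := by
        by_contra hcon
        push Not at hcon
        nlinarith
      linarith)
  choose dp hdp using fun p => h6 p M
  refine ⟨max d (∑ p, dp p), fun ω hω L hL => ?_⟩
  rw [hpoly M ω hω, map_add]
  refine add_nonneg (hd ω hω L (hL.mono (le_max_left _ _))) ?_
  rw [map_sum]
  refine Finset.sum_nonneg fun p _ => ?_
  rw [← smul_eq_C_mul, map_smul, smul_eq_mul]
  refine mul_nonneg (hc p).le (hdp p ω hω L (hL.mono (le_trans ?_ (le_max_right _ _))))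
  exact Finset.single_le_sum (f := dp) (fun _ _ => Nat.zero_le _) (Finset.mem_univ p)

end
end LassAux

set_option linter.unusedSectionVars false
namespace LassAux
open Filter Topology

/-! ### compact convex hulls and the quadrature formula -/

lemma compact_hull {N : ℕ} {s : Set (Fin N → ℝ)} (hs : IsCompact s) :
    IsCompact (convexHull ℝ s) := by
  rcases s.eq_empty_or_nonempty with rfl | ⟨x0, hx0⟩
  · simp
  let f : (Fin (N + 1) → ℝ) × (Fin (N + 1) → Fin N → ℝ) → (Fin N → ℝ) :=
    fun q => ∑ i, q.1 i • q.2 i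
  have hf : Continuous f := by
    refine continuous_finsetSum _ fun i _ => ?_
    exact ((continuous_apply i).comp continuous_fst).smul ((continuous_apply i).comp continuous_snd)
  have hc : IsCompact (f '' ((stdSimplex ℝ (Fin (N + 1))) ×ˢ (Set.univ.pi fun _ => s))) :=
    ((isCompact_stdSimplex ℝ _).prod (isCompact_univ_pi fun _ => hs)).image hf
  convert hc using 1
  apply Set.Subset.antisymm
  · intro x hx
    obtain ⟨ι, _, z, w, hz, hai, hw, hw1, hsum⟩ := eq_pos_convex_span_of_mem_convexHull hx
    have hcard : Fintype.card ι ≤ Fintype.card (Fin (N + 1)) := by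
      have := hai.card_le_finrank_succ
      have h2 : Module.finrank ℝ (vectorSpan ℝ (Set.range z)) ≤ N := by
        simpa using Submodule.finrank_le (vectorSpan ℝ (Set.range z))
      rw [Fintype.card_fin]
      omega
    obtain ⟨e⟩ := Function.Embedding.nonempty_of_card_le hcard
    refine ⟨(Function.extend e w 0, Function.extend e z fun _ => x0), ⟨⟨?_, ?_⟩, ?_⟩, ?_⟩
    · intro i
      by_cases h : ∃ a, e a = i
      · obtain ⟨a, rfl⟩ := h
        simp only [e.injective.extend_apply]
        exact (hw a).le
      · simp only [Function.extend_apply' _ _ _ h]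
        exact le_rfl
    · rw [← hw1]
      symm
      refine Fintype.sum_of_injective e e.injective _ _ (fun i hi => ?_) (fun i => ?_)
      · exact Function.extend_apply' _ _ _ (by simpa using hi)
      · simp only [e.injective.extend_apply]
    · intro i _
      by_cases h : ∃ a, e a = i
      · obtain ⟨a, rfl⟩ := h
        simp only [e.injective.extend_apply]
        exact hz ⟨a, rfl⟩
      · simp only [Function.extend_apply' _ _ _ h]
        exact hx0
    · rw [← hsum]
      symm
      refine Fintype.sum_of_injective e e.injective _ _ (fun i hi => ?_) (fun i => ?_)
      · show Function.extend e w 0 i • _ = 0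
        rw [Function.extend_apply' w _ _ (by simpa using hi)]; simp
      · simp only [e.injective.extend_apply]
  · rintro _ ⟨⟨w, z⟩, ⟨⟨hw, hw1⟩, hz⟩, rfl⟩
    exact (convex_convexHull ℝ s).sum_mem (fun i _ => hw i) hw1
      fun i _ => subset_convexHull ℝ s (hz i trivial)

theorem quad (D : ℕ) : ∃ (ι : Type) (_ : Fintype ι) (b w : ι → ℝ), Function.Injective b ∧
    (∀ i, 0 < w i) ∧ (∀ i, 0 ≤ b i ∧ b i ≤ 1) ∧ D < Fintype.card ι ∧
    ∀ f : Polynomial ℝ, f.natDegree ≤ 2 * D →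
      ∑ i, w i * f.eval (b i) = ∫ s in (0 : ℝ)..1, (1 - s) * f.eval s := by
  let γ : ℝ → (Fin (2 * D + 1) → ℝ) := fun s k => s ^ (k : ℕ)
  let μ : Fin (2 * D + 1) → ℝ := fun k => 2 * ∫ s in (0 : ℝ)..1, (1 - s) * s ^ (k : ℕ)
  have hγ : Continuous γ := by fun_prop
  have hcomp : IsCompact (convexHull ℝ (γ '' Set.Icc 0 1)) :=
    compact_hull (isCompact_Icc.image hγ)
  have key : ∀ c : Fin (2 * D + 1) → ℝ, ∑ k, μ k * c k =
      2 * ∫ s in (0 : ℝ)..1, (1 - s) * ∑ k, γ s k * c k := by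
    intro c
    simp only [Finset.mul_sum]
    rw [intervalIntegral.integral_finsetSum]
    · rw [Finset.mul_sum]
      refine Finset.sum_congr rfl fun k _ => ?_
      simp only [μ, γ]
      rw [mul_assoc, ← intervalIntegral.integral_mul_const]
      simp only [mul_assoc]
    · intro k _
      refine Continuous.intervalIntegrable ?_ _ _
      simp only [γ]; fun_prop
  have hmem : μ ∈ convexHull ℝ (γ '' Set.Icc 0 1) := by
    by_contra hcon
    obtain ⟨f, a, h1, h2⟩ := geometric_hahn_banach_closed_point (convex_convexHull ℝ _)
      hcomp.isClosed hcon
    have hrep : ∀ y, f y = ∑ k, y k * f (Pi.single k 1) := by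
      intro y
      conv_lhs => rw [← Finset.univ_sum_single y]
      rw [map_sum]
      refine Finset.sum_congr rfl fun k _ => ?_
      rw [show (Pi.single k (y k) : Fin (2 * D + 1) → ℝ) = y k • Pi.single k 1 by
        rw [← Pi.single_smul]; simp]
      simp
    rw [hrep, key] at h2
    simp only [← hrep] at h2
    have h3 : ∫ s in (0 : ℝ)..1, (1 - s) * f (γ s) ≤ ∫ s in (0 : ℝ)..1, (1 - s) * a := by
      refine intervalIntegral.integral_mono_on zero_le_one ?_ ?_ ?_
      · exact Continuous.intervalIntegrable (by fun_prop) _ _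
      · exact Continuous.intervalIntegrable (by fun_prop) _ _
      · intro s hs
        exact mul_le_mul_of_nonneg_left (h1 _ (subset_convexHull ℝ _ ⟨s, hs, rfl⟩)).le
          (by linarith [hs.2])
    have h4 : ∫ s in (0 : ℝ)..1, (1 - s) * a = a / 2 := by
      rw [intervalIntegral.integral_mul_const]
      rw [intervalIntegral.integral_sub (by simp) (by simp)]
      simp; ring
    linarith
  obtain ⟨ι, hι, z, w, hz, hai, hw, hw1, hsum⟩ := eq_pos_convex_span_of_mem_convexHull hmem
  choose b hb hbz using fun i => hz ⟨i, rfl⟩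
  have hbinj : Function.Injective b := by
    intro i j hij
    apply hai.injective
    rw [← hbz i, ← hbz j, hij]
  have hq : ∀ f : Polynomial ℝ, f.natDegree ≤ 2 * D →
      ∑ i, w i / 2 * f.eval (b i) = ∫ s in (0 : ℝ)..1, (1 - s) * f.eval s := by
    intro f hf
    have hfe : ∀ s, f.eval s = ∑ k : Fin (2 * D + 1), γ s k * f.coeff k := by
      intro s
      rw [Polynomial.eval_eq_sum_range' (n := 2 * D + 1) (by omega), Finset.sum_range]
      refine Finset.sum_congr rfl fun k _ => by simp only [γ]; ring
    simp only [hfe]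
    have h1 := key fun k => f.coeff k
    have h2 : ∑ k, μ k * f.coeff k = ∑ i, w i * ∑ k, γ (b i) k * f.coeff k := by
      rw [← hsum]
      simp only [Finset.mul_sum, Finset.sum_apply, Pi.smul_apply, smul_eq_mul, Finset.sum_mul]
      rw [Finset.sum_comm]
      refine Finset.sum_congr rfl fun i _ => Finset.sum_congr rfl fun k _ => ?_
      rw [← hbz i, mul_assoc]
    rw [h1] at h2
    have h3 : ∑ i, w i / 2 * ∑ k, γ (b i) k * f.coeff k =
        (∑ i, w i * ∑ k, γ (b i) k * f.coeff k) / 2 := by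
      rw [Finset.sum_div]
      refine Finset.sum_congr rfl fun i _ => by ring
    rw [h3, ← h2]; ring
  refine ⟨ι, hι, b, fun i => w i / 2, hbinj, fun i => half_pos (hw i),
    fun i => hb i, ?_, hq⟩
  by_contra hcon
  push Not at hcon
  let f : Polynomial ℝ := (∏ i, (Polynomial.X - Polynomial.C (b i))) ^ 2
  have hfd : f.natDegree ≤ 2 * D := by
    simp only [f]
    rw [Polynomial.natDegree_pow, Polynomial.natDegree_prod_of_monic _ _
      fun i _ => Polynomial.monic_X_sub_C _]
    simp
    exact hcon
  have h1 := hq f hfd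
  have h2 : ∑ i, w i / 2 * f.eval (b i) = 0 := by
    refine Finset.sum_eq_zero fun i _ => ?_
    simp only [f, Polynomial.eval_pow, Polynomial.eval_prod]
    rw [Finset.prod_eq_zero (Finset.mem_univ i) (by simp)]
    simp
  rw [h2] at h1
  -- pick a point in (0,1) avoiding the nodes
  obtain ⟨c, hc, hcb⟩ : ∃ c ∈ Set.Ioo (0 : ℝ) 1, c ∉ Set.range b := by
    have := (Set.Ioo_infinite (zero_lt_one (α := ℝ))).sdiff (Set.finite_range b)
    obtain ⟨c, hc⟩ := this.nonempty
    exact ⟨c, hc.1, hc.2⟩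
  have h3 : 0 < ∫ s in (0 : ℝ)..1, (1 - s) * f.eval s := by
    refine intervalIntegral.integral_pos zero_lt_one ?_ ?_ ⟨c, ⟨hc.1.le, hc.2.le⟩, ?_⟩
    · fun_prop
    · intro s hs
      simp only [f, Polynomial.eval_pow]
      exact mul_nonneg (by linarith [hs.2]) (sq_nonneg _)
    · simp only [f, Polynomial.eval_pow, Polynomial.eval_prod]
      refine mul_pos (by linarith [hc.2]) (sq_pos_of_ne_zero (Finset.prod_ne_zero_iff.2 fun i _ => ?_))
      simp only [Polynomial.eval_sub, Polynomial.eval_X, Polynomial.eval_C]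
      exact sub_ne_zero.2 fun h => hcb ⟨i, h.symm⟩
  linarith

end LassAux

set_option linter.unusedSectionVars false
namespace LassAux
open Filter Topology

/-! ### Taylor formulas -/

lemma taylor_int (F : Polynomial ℝ) :
    ∫ s in (0 : ℝ)..1, (1 - s) * F.derivative.derivative.eval s =
      F.eval 1 - F.eval 0 - F.derivative.eval 0 := by
  have h := intervalIntegral.integral_eq_sub_of_hasDerivAt (a := (0 : ℝ)) (b := 1)
    (f := fun s => (1 - s) * F.derivative.eval s + F.eval s)
    (f' := fun s => (1 - s) * F.derivative.derivative.eval s) (fun s _ => by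
      have h1 : HasDerivAt (fun s : ℝ => 1 - s) (-1) s := by
        simpa using (hasDerivAt_id s).const_sub 1
      have h2 := (h1.mul (F.derivative.hasDerivAt s)).add (F.hasDerivAt s)
      refine h2.congr_deriv ?_
      ring)
    (Continuous.intervalIntegrable (by fun_prop) _ _)
  rw [h]; simp; ring

theorem quadT (D : ℕ) : ∃ (ι : Type) (_ : Fintype ι) (b w : ι → ℝ), Function.Injective b ∧
    (∀ i, 0 < w i) ∧ (∀ i, 0 ≤ b i ∧ b i ≤ 1) ∧ D < Fintype.card ι ∧ ∑ i, w i = 1 / 2 ∧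
    ∀ F : Polynomial ℝ, F.natDegree ≤ D → ∀ t h : ℝ,
      F.eval (t + h) = F.eval t + h * F.derivative.eval t +
        h ^ 2 * ∑ i, w i * F.derivative.derivative.eval (t + h * b i) := by
  obtain ⟨ι, hι, b, w, hb, hw, hb1, hc, hq⟩ := quad D
  refine ⟨ι, hι, b, w, hb, hw, hb1, hc, ?_, ?_⟩
  · have := hq 1 (by simp)
    simp only [Polynomial.eval_one, mul_one] at this
    rw [this, intervalIntegral.integral_sub (by simp) (by simp)]
    simp; ring
  · intro F hF t h
    set P : Polynomial ℝ := F.comp (Polynomial.C t + Polynomial.C h * Polynomial.X) with hP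
    have hPd : P.natDegree ≤ D := by
      refine (Polynomial.natDegree_comp_le).trans ?_
      have : (Polynomial.C t + Polynomial.C h * Polynomial.X : Polynomial ℝ).natDegree ≤ 1 := by
        compute_degree
      calc _ ≤ F.natDegree * 1 := Nat.mul_le_mul_left _ this
        _ ≤ D := by omega
    have h1 : ∀ s, P.eval s = F.eval (t + h * s) := by intro s; simp [hP]
    have hd1 : P.derivative = Polynomial.C h *
        F.derivative.comp (Polynomial.C t + Polynomial.C h * Polynomial.X) := by
      rw [hP, Polynomial.derivative_comp]; simp
    have hd2 : P.derivative.derivative = Polynomial.C (h ^ 2) *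
        F.derivative.derivative.comp (Polynomial.C t + Polynomial.C h * Polynomial.X) := by
      rw [hd1, Polynomial.derivative_C_mul, Polynomial.derivative_comp]; simp; ring
    have h2 := hq P.derivative.derivative (by
      have a1 := Polynomial.natDegree_derivative_le P
      have a2 := Polynomial.natDegree_derivative_le P.derivative
      omega)
    rw [taylor_int] at h2
    have h3 : ∑ i, w i * P.derivative.derivative.eval (b i) =
        h ^ 2 * ∑ i, w i * F.derivative.derivative.eval (t + h * b i) := by
      rw [Finset.mul_sum]
      refine Finset.sum_congr rfl fun i _ => ?_
      rw [hd2]; simp; ring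
    have h4 : P.derivative.eval 0 = h * F.derivative.eval t := by rw [hd1]; simp
    rw [h3, h4, h1, h1] at h2
    simp only [mul_one, mul_zero, add_zero] at h2
    linarith

theorem interp (D : ℕ) {t : ℝ} (ht0 : 0 < t) (ht1 : t < 1) :
    ∃ (ι : Type) (_ : Fintype ι) (b w : ι → ℝ) (J : Finset ι), Set.InjOn b J ∧ D < J.card ∧
    (∀ i, 0 < w i) ∧ (∀ i, 0 ≤ b i ∧ b i ≤ 1) ∧
    ∀ F : Polynomial ℝ, F.natDegree ≤ D →
      F.eval t = (1 - t) * F.eval 0 + t * F.eval 1 -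
        ∑ i, w i * F.derivative.derivative.eval (b i) := by
  classical
  obtain ⟨ι, hι, b, w, hb, hw, hb1, hc, -, hq⟩ := quadT D
  refine ⟨ι ⊕ ι, inferInstance, Sum.elim (fun i => t + -t * b i) (fun i => t + (1 - t) * b i),
    Sum.elim (fun i => (1 - t) * t ^ 2 * w i) (fun i => t * (1 - t) ^ 2 * w i),
    Finset.univ.map Function.Embedding.inl, ?_, ?_, ?_, ?_, ?_⟩
  · intro x hx y hy hxy
    simp only [Finset.coe_map, Function.Embedding.inl_apply, Finset.coe_univ, Set.image_univ,
      Set.mem_range] at hx hy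
    obtain ⟨i, rfl⟩ := hx
    obtain ⟨j, rfl⟩ := hy
    simp only [Sum.elim_inl] at hxy
    congr 1
    apply hb
    have : t * (b i - b j) = 0 := by linarith
    rcases mul_eq_zero.1 this with h | h
    · linarith
    · linarith
  · simpa using hc
  · have : 0 < 1 - t := by linarith
    rintro (i | i)
    · have := hw i; simp only [Sum.elim_inl]; positivity
    · have := hw i; simp only [Sum.elim_inr]; positivity
  · rintro (i | i)
    · simp only [Sum.elim_inl]
      constructor <;> nlinarith [hb1 i]
    · simp only [Sum.elim_inr]
      constructor <;> nlinarith [hb1 i]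
  · intro F hF
    have h1 := hq F hF t (1 - t)
    have h2 := hq F hF t (-t)
    rw [Fintype.sum_sum_type]
    simp only [Sum.elim_inl, Sum.elim_inr, mul_assoc, ← Finset.mul_sum]
    rw [show t + (1 - t) = 1 by ring] at h1
    rw [show t + -t = 0 by ring] at h2
    rw [h1, h2]
    ring

/-! ### substitution along segments -/
variable {n : ℕ}

def pt (u x : Fin n → ℝ) (s : ℝ) : Fin n → ℝ := fun i => (1 - s) * u i + s * x i

def sub (u : Fin n → ℝ) (s : ℝ) : MvPolynomial (Fin n) ℝ →ₐ[ℝ] MvPolynomial (Fin n) ℝ :=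
  aeval fun i => C ((1 - s) * u i) + C s * X i

lemma eval_sub (x u : Fin n → ℝ) (s : ℝ) (q : MvPolynomial (Fin n) ℝ) :
    eval x (sub u s q) = eval (pt u x s) q := by
  induction q using MvPolynomial.induction_on with
  | C a => simp [sub]
  | add p q hp hq => simp [hp, hq]
  | mul_X p i hp =>
    rw [map_mul, map_mul, hp]
    simp [sub, pt]

lemma sub_fam (q : MvPolynomial (Fin n) ℝ) :
    Fam (fun ω : (Fin n → ℝ) × ℝ => sub ω.1 ω.2 q) := by
  induction q using MvPolynomial.induction_on with
  | C a => simpa [sub] using Fam.const (Ω := (Fin n → ℝ) × ℝ) (C a)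
  | add p q hp hq => simpa using hp.add hq
  | mul_X p i hp =>
    simp only [map_mul]
    refine hp.mul ?_
    simp only [sub, aeval_X]
    refine (Fam.coef _ ?_).add ((Fam.coef _ continuous_snd).mul (Fam.const _))
    exact (continuous_const.sub continuous_snd).mul ((continuous_apply i).comp continuous_fst)

lemma pt_zero (u x : Fin n → ℝ) : pt u x 0 = u := by ext; simp [pt]
lemma pt_one (u x : Fin n → ℝ) : pt u x 1 = x := by ext; simp [pt]
lemma pt_self (u : Fin n → ℝ) (s : ℝ) : pt u u s = u := by ext; simp [pt]; ring

lemma sub_zero' (u : Fin n → ℝ) (q : MvPolynomial (Fin n) ℝ) : sub u 0 q = C (eval u q) := by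
  apply MvPolynomial.funext; intro x; rw [eval_sub, pt_zero, eval_C]

lemma sub_one' (u : Fin n → ℝ) (q : MvPolynomial (Fin n) ℝ) : sub u 1 q = q := by
  apply MvPolynomial.funext; intro x; rw [eval_sub, pt_one]

lemma pt_mem {S : Set (Fin n → ℝ)} (hS : Convex ℝ S) {u x : Fin n → ℝ} (hu : u ∈ S) (hx : x ∈ S)
    {s : ℝ} (h0 : 0 ≤ s) (h1 : s ≤ 1) : pt u x s ∈ S := by
  have := hS hu hx (by linarith : 0 ≤ 1 - s) h0 (by ring)
  exact this

def line (u x : Fin n → ℝ) : MvPolynomial (Fin n) ℝ →ₐ[ℝ] Polynomial ℝ :=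
  aeval fun i => Polynomial.C (u i) + Polynomial.C (x i - u i) * Polynomial.X

lemma eval_line (u x : Fin n → ℝ) (s : ℝ) (q : MvPolynomial (Fin n) ℝ) :
    (line u x q).eval s = eval (pt u x s) q := by
  induction q using MvPolynomial.induction_on with
  | C a => simp [line]
  | add p q hp hq => simp [hp, hq]
  | mul_X p i hp =>
    rw [map_mul, Polynomial.eval_mul, hp]
    simp [line, pt]
    left; ring

lemma natDegree_line (u x : Fin n → ℝ) (q : MvPolynomial (Fin n) ℝ) :
    (line u x q).natDegree ≤ q.totalDegree := by
  have : line u x q = ∑ d ∈ q.support, Polynomial.C (q.coeff d) *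
      ∏ i, (Polynomial.C (u i) + Polynomial.C (x i - u i) * Polynomial.X) ^ d i := by
    rw [line, MvPolynomial.aeval_def, MvPolynomial.eval₂_eq']
    rfl
  rw [this]
  refine Polynomial.natDegree_sum_le_of_forall_le _ _ fun d hd => ?_
  refine (Polynomial.natDegree_C_mul_le _ _).trans ?_
  refine (Polynomial.natDegree_prod_le _ _).trans ?_
  have h2 := MvPolynomial.le_totalDegree hd
  rw [Finsupp.sum_fintype _ _ (fun _ => rfl)] at h2
  refine le_trans (Finset.sum_le_sum fun i _ => ?_) h2
  refine (Polynomial.natDegree_pow_le).trans ?_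
  have : (Polynomial.C (u i) + Polynomial.C (x i - u i) * Polynomial.X : Polynomial ℝ).natDegree
      ≤ 1 := by compute_degree
  calc _ ≤ d i * 1 := Nat.mul_le_mul_left _ this
    _ = d i := mul_one _

lemma derivative_line (u x : Fin n → ℝ) (q : MvPolynomial (Fin n) ℝ) :
    (line u x q).derivative = ∑ a, Polynomial.C (x a - u a) * line u x (pderiv a q) := by
  induction q using MvPolynomial.induction_on with
  | C a => simp [line]
  | add p q hp hq => simp [hp, hq, mul_add, Finset.sum_add_distrib]
  | mul_X p i hp =>
    rw [map_mul, Polynomial.derivative_mul, hp]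
    have h1 : (line u x (X i)).derivative = Polynomial.C (x i - u i) := by simp [line]
    rw [h1, Finset.sum_mul]
    simp only [Derivation.leibniz, smul_eq_mul, map_add, map_mul, mul_add, Finset.sum_add_distrib,
      pderiv_X]
    rw [add_comm]
    congr 1
    · rw [Finset.sum_eq_single i]
      · simp; ring
      · intro a _ ha; rw [Pi.single_eq_of_ne' ha]; simp
      · simp
    · refine Finset.sum_congr rfl fun a _ => by ring

end LassAux

set_option linter.unusedSectionVars false
namespace LassAux
open Filter Topology

variable {n m : ℕ} {g : Fin m → MvPolynomial (Fin n) ℝ}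

lemma d1_line (u x : Fin n → ℝ) (q : MvPolynomial (Fin n) ℝ) (s : ℝ) :
    (line u x q).derivative.eval s = ∑ a, eval (pt u x s) (pderiv a q) * (x a - u a) := by
  rw [derivative_line, Polynomial.eval_finsetSum]
  refine Finset.sum_congr rfl fun a _ => ?_
  rw [Polynomial.eval_mul, Polynomial.eval_C, eval_line, mul_comm]

lemma d2_line (u x : Fin n → ℝ) (q : MvPolynomial (Fin n) ℝ) (s : ℝ) :
    (line u x q).derivative.derivative.eval s =
      ∑ a, ∑ c, eval (pt u x s) (pderiv a (pderiv c q)) * ((x a - u a) * (x c - u c)) := by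
  rw [derivative_line, Polynomial.derivative_sum, Polynomial.eval_finsetSum, Finset.sum_comm]
  refine Finset.sum_congr rfl fun c _ => ?_
  rw [Polynomial.derivative_C_mul, Polynomial.eval_mul, Polynomial.eval_C, d1_line, Finset.mul_sum]
  refine Finset.sum_congr rfl fun a _ => by ring

/-- coordinates centered at `u` -/
def YY (a : Fin n) (u : Fin n → ℝ) : MvPolynomial (Fin n) ℝ := X a - C (u a)

lemma YY_fam (a : Fin n) : Fam (YY (n := n) a) :=
  (Fam.const _).sub (Fam.coef _ (continuous_apply a))

lemma eval_YY (a : Fin n) (u x : Fin n → ℝ) : eval x (YY a u) = x a - u a := by simp [YY]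

def TT {ι : Type} [Fintype ι] (b w : ι → ℝ) (t : ℝ) (q : MvPolynomial (Fin n) ℝ) (a c : Fin n)
    (u : Fin n → ℝ) : MvPolynomial (Fin n) ℝ :=
  ∑ i, C (w i) * sub u (t * b i) (pderiv a (pderiv c q))

lemma sub_fam' (t : ℝ) (q : MvPolynomial (Fin n) ℝ) : Fam (fun u => sub u t q) :=
  (sub_fam q).comp (f := fun u => (u, t)) (by fun_prop)

lemma TT_fam {ι : Type} [Fintype ι] (b w : ι → ℝ) (t : ℝ) (q : MvPolynomial (Fin n) ℝ)
    (a c : Fin n) : Fam (TT b w t q a c) :=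
  Fam.sum _ fun _ _ => (Fam.const _).mul (sub_fam' _ _)

lemma cev_fam (q : MvPolynomial (Fin n) ℝ) :
    Fam (fun u : Fin n → ℝ => (C (eval u q) : MvPolynomial (Fin n) ℝ)) :=
  Fam.coef _ (MvPolynomial.continuous_eval q)

theorem tay (D : ℕ) : ∃ (ι : Type) (_ : Fintype ι) (b w : ι → ℝ), ∑ i, w i = 1 / 2 ∧
    ∀ q : MvPolynomial (Fin n) ℝ, q.totalDegree ≤ D → ∀ t u,
      sub u t q = C (eval u q) + C t * ∑ a, C (eval u (pderiv a q)) * YY a u +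
        C (t ^ 2) * ∑ a, ∑ c, TT b w t q a c u * (YY a u * YY c u) := by
  obtain ⟨ι, hι, b, w, -, -, -, -, hw, hq⟩ := quadT D
  refine ⟨ι, hι, b, w, hw, fun q hd t u => ?_⟩
  apply MvPolynomial.funext
  intro x
  have h := hq (line u x q) ((natDegree_line u x q).trans hd) 0 t
  simp only [zero_add, d2_line, d1_line, eval_line, pt_zero] at h
  rw [eval_sub, h]
  simp only [map_add, map_mul, eval_C, map_sum, eval_YY, TT, eval_sub]
  congr 2
  simp only [Finset.mul_sum, Finset.sum_mul]
  rw [Finset.sum_comm]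
  refine Finset.sum_congr rfl fun a _ => ?_
  rw [Finset.sum_comm]
  refine Finset.sum_congr rfl fun c _ => Finset.sum_congr rfl fun i _ => by ring

lemma poly_second {F : Polynomial ℝ} (h0 : F.eval 0 = 0)
    (h : ∀ s, 0 ≤ s → s ≤ 1 → 0 ≤ F.eval s) :
    0 ≤ F.derivative.eval 0 ∧ (F.derivative.eval 0 = 0 → 0 ≤ F.derivative.derivative.eval 0) := by
  obtain ⟨ι, _, b, w, -, hw, hb, -, hw1, hq⟩ := quadT F.natDegree
  have hq' := fun t => hq F le_rfl 0 t
  simp only [zero_add, h0] at hq'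
  have hcont : Continuous fun t : ℝ => ∑ i, w i * F.derivative.derivative.eval (t * b i) :=
    continuous_finsetSum _ fun i _ => by fun_prop
  constructor
  · have hc : Tendsto (fun t : ℝ => F.derivative.eval 0 +
        t * ∑ i, w i * F.derivative.derivative.eval (t * b i)) (𝓝[>] 0)
        (𝓝 (F.derivative.eval 0)) := by
      have : Continuous fun t : ℝ => F.derivative.eval 0 +
        t * ∑ i, w i * F.derivative.derivative.eval (t * b i) :=
          continuous_const.add (continuous_id.mul hcont)
      have := this.tendsto 0
      simp only [zero_mul, add_zero] at this
      exact this.mono_left nhdsWithin_le_nhds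
    refine ge_of_tendsto hc ?_
    have : Set.Ioo (0 : ℝ) 1 ∈ 𝓝[>] (0 : ℝ) := Ioo_mem_nhdsGT one_pos
    filter_upwards [this] with t ht
    have h1 := h t ht.1.le ht.2.le
    rw [hq'] at h1
    have : 0 ≤ t * (F.derivative.eval 0 +
        t * ∑ i, w i * F.derivative.derivative.eval (t * b i)) := by nlinarith
    exact nonneg_of_mul_nonneg_right this ht.1
  · intro hd
    have hc : Tendsto (fun t : ℝ => ∑ i, w i * F.derivative.derivative.eval (t * b i)) (𝓝[>] 0)
        (𝓝 (1 / 2 * F.derivative.derivative.eval 0)) := by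
      have := hcont.tendsto 0
      simp only [zero_mul, ← Finset.sum_mul, hw1] at this
      exact this.mono_left nhdsWithin_le_nhds
    have : 0 ≤ 1 / 2 * F.derivative.derivative.eval 0 := by
      refine ge_of_tendsto hc ?_
      have : Set.Ioo (0 : ℝ) 1 ∈ 𝓝[>] (0 : ℝ) := Ioo_mem_nhdsGT one_pos
      filter_upwards [this] with t ht
      have h1 := h t ht.1.le ht.2.le
      rw [hq', hd] at h1
      have h2 : 0 ≤ t ^ 2 * ∑ i, w i * F.derivative.derivative.eval (t * b i) := by linarith
      exact nonneg_of_mul_nonneg_right h2 (pow_pos ht.1 2)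
    linarith

lemma hess_sum (q : MvPolynomial (Fin n) ℝ) (x v : Fin n → ℝ) :
    v ⬝ᵥ (hessEval q x) *ᵥ v = ∑ a, ∑ c, eval x (pderiv a (pderiv c q)) * (v a * v c) := by
  simp only [dotProduct, mulVec, hessEval, Matrix.of_apply, Finset.mul_sum]
  refine Finset.sum_congr rfl fun a _ => Finset.sum_congr rfl fun c _ => by ring

theorem qg (hconv : Convex ℝ (SolSet g)) {j : Fin m} {u y : Fin n → ℝ} (hu : u ∈ SolSet g)
    (hy : y ∈ SolSet g) (h0 : eval u (g j) = 0) (hq : StrictlyQuasiconcaveAt (g j) u)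
    (hne : y ≠ u) : 0 < ∑ a, eval u (pderiv a (g j)) * (y a - u a) := by
  have h1 := poly_second (F := line u y (g j)) (by rw [eval_line, pt_zero, h0])
    (fun s hs0 hs1 => by rw [eval_line]; exact pt_mem hconv hu hy hs0 hs1 j)
  rw [d1_line, d2_line, pt_zero] at h1
  rcases h1.1.lt_or_eq with h | h
  · exact h
  · have h2 := h1.2 h.symm
    have h3 := hq (y - u) (sub_ne_zero.2 hne) (by
      simp only [dotProduct, gradEval, Pi.sub_apply]; exact h.symm)
    rw [hess_sum] at h3
    simp only [Pi.sub_apply] at h3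
    linarith

theorem qs (hconv : Convex ℝ (SolSet g)) {j : Fin m} {u x : Fin n → ℝ} (hu : u ∈ SolSet g)
    (hx : x ∈ SolSet g) {t : ℝ} (ht0 : 0 < t) (ht1 : t < 1)
    (hq : ∀ x ∈ SolSet g ∩ ZSet (g j), StrictlyQuasiconcaveAt (g j) x) (hne : x ≠ u) :
    0 < eval (pt u x t) (g j) := by
  have hp := pt_mem hconv hu hx ht0.le ht1.le
  rcases (hp j).lt_or_eq with h | h
  · exact h
  exfalso
  have hqq := hq _ ⟨hp, h.symm⟩
  have e1 : ∀ a, u a - pt u x t a = t * (u a - x a) := fun a => by simp only [pt]; ring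
  have e2 : ∀ a, x a - pt u x t a = (1 - t) * (x a - u a) := fun a => by simp only [pt]; ring
  have hex : ∃ a, x a ≠ u a := Function.ne_iff.1 hne
  obtain ⟨a, ha⟩ := hex
  have n1 : u ≠ pt u x t := fun h' => by
    have := e1 a
    rw [← h', sub_self] at this
    rcases mul_eq_zero.1 this.symm with h | h
    · linarith
    · exact ha (by linarith)
  have n2 : x ≠ pt u x t := fun h' => by
    have := e2 a
    rw [← h', sub_self] at this
    rcases mul_eq_zero.1 this.symm with h | h
    · linarith
    · exact ha (by linarith)
  have q1 := qg hconv hp hu h.symm hqq n1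
  have q2 := qg hconv hp hx h.symm hqq n2
  have : (1 - t) * (∑ a, eval (pt u x t) (pderiv a (g j)) * (u a - pt u x t a)) +
      t * (∑ a, eval (pt u x t) (pderiv a (g j)) * (x a - pt u x t a)) = 0 := by
    rw [Finset.mul_sum, Finset.mul_sum, ← Finset.sum_add_distrib]
    refine Finset.sum_eq_zero fun a _ => ?_
    rw [e1, e2]; ring
  have h3 : 0 < 1 - t := by linarith
  have := mul_pos h3 q1
  have := mul_pos ht0 q2
  linarith

lemma exists_bound (harch : IsArchimedeanQM (QM g)) (q : MvPolynomial (Fin n) ℝ) :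
    ∃ G : ℝ, 0 < G ∧ ∀ x ∈ SolSet g, eval x q ≤ G := by
  obtain ⟨B, hB⟩ := ((isCompact_SolSet harch).image (MvPolynomial.continuous_eval q)).bddAbove
  refine ⟨max B 1, by positivity, fun x hx => le_trans (hB ⟨x, hx, rfl⟩) (le_max_left _ _)⟩

lemma dual_mul (j : Fin m) {q : MvPolynomial (Fin n) ℝ} {d : ℕ}
    (hd : 2 * q.totalDegree + (g j).totalDegree ≤ d) {L} (hL : Dual g d L) :
    0 ≤ L (g j * q ^ 2) := by
  have := hL j.succ q (by simpa [withOne] using hd)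
  simpa [withOne, mul_comm] using this

lemma TT_self {ι : Type} [Fintype ι] {b w : ι → ℝ} (hw : ∑ i, w i = 1 / 2) (t : ℝ)
    (q : MvPolynomial (Fin n) ℝ) (a c : Fin n) (u : Fin n → ℝ) :
    eval u (TT b w t q a c u) = 1 / 2 * eval u (pderiv a (pderiv c q)) := by
  simp only [TT, map_sum, map_mul, eval_C, eval_sub, pt_self, ← Finset.sum_mul, hw]

theorem q1 (hconv : Convex ℝ (SolSet g)) (harch : IsArchimedeanQM (QM g)) (j : Fin m)
    (hq : ∀ x ∈ SolSet g ∩ ZSet (g j), StrictlyQuasiconcaveAt (g j) x) :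
    ∃ d, ∀ u ∈ SolSet g ∩ ZSet (g j), ∀ L, Dual g d L →
      0 ≤ L (∑ a, C (eval u (pderiv a (g j))) * YY a u) := by
  obtain ⟨G, hG, hGb⟩ := exists_bound harch (g j)
  obtain ⟨ι, _, b, w, hw, htay⟩ := tay (n := n) (g j).totalDegree
  have hid : ∀ u ∈ SolSet g ∩ ZSet (g j), g j = ∑ a, C (eval u (pderiv a (g j))) * YY a u +
      ∑ a, ∑ c, TT b w 1 (g j) a c u * (YY a u * YY c u) := by
    intro u hu
    have := htay (g j) le_rfl 1 u
    rw [sub_one', show eval u (g j) = 0 from hu.2] at this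
    simpa using this
  refine ql (κ := Fin n) (π := Unit) harch (c := fun _ => 1) (z := fun _ _ => g j) (G := G)
    (α := fun _ a u => C (eval u (pderiv a (g j))) + ∑ c, TT b w 1 (g j) a c u * YY c u)
    (R := fun a c u => - TT b w 1 (g j) a c u) (v := YY)
    ?_ (fun _ => one_pos) hG ?_ ?_ ?_ ?_ ?_ ?_ ?_ ?_ ?_ ?_ ?_
  · exact (isCompact_SolSet harch).inter_right
      (isClosed_eq (MvPolynomial.continuous_eval _) continuous_const)
  · exact Fam.sum _ fun a _ => (cev_fam _).mul (YY_fam a)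
  · exact fun _ => Fam.const _
  · exact fun _ a => (cev_fam _).add (Fam.sum _ fun c _ => (TT_fam _ _ _ _ _ _).mul (YY_fam c))
  · exact fun a c => (TT_fam _ _ _ _ _ _).neg
  · exact YY_fam
  · intro u hu
    have := hid u hu
    simp only [Finset.univ_unique, Finset.sum_singleton, neg_mul, Finset.sum_neg_distrib]
    rw [map_one, one_mul]
    linear_combination -this
  · intro u hu _
    conv_lhs => rw [hid u hu]
    rw [← Finset.sum_add_distrib]
    refine Finset.sum_congr rfl fun a _ => ?_
    rw [add_mul, Finset.sum_mul]
    congr 1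
    refine Finset.sum_congr rfl fun c _ => by ring
  · exact fun u hu x hx _ => ⟨hx j, hGb x hx⟩
  · intro u hu x hx hv ξ hξ hα
    have hxu : x = u := funext fun a => by
      have := congrFun hv a
      simp only [evV, eval_YY, Pi.zero_apply] at this; linarith
    subst hxu
    have h1 := hα ()
    simp only [map_add, map_sum, map_mul, eval_C, eval_YY, sub_self, mul_zero,
      Finset.sum_const_zero, add_zero] at h1
    have h2 := hq x hu ξ hξ (by simpa [dotProduct, gradEval] using h1)
    rw [hess_sum] at h2
    have : qf (evM (fun a c u => - TT b w 1 (g j) a c u) x x) ξ =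
        - (1 / 2) * ∑ a, ∑ c, eval x (pderiv a (pderiv c (g j))) * (ξ a * ξ c) := by
      simp only [qf, evM, map_neg, TT_self hw, Finset.mul_sum]
      refine Finset.sum_congr rfl fun a _ => Finset.sum_congr rfl fun c _ => by ring
    rw [this]; linarith
  · intro u hu x hx hv
    have := qg hconv hu.1 hx hu.2 (hq u hu) (fun h => hv (by
      subst h; funext a; simp [evV, eval_YY]))
    simpa [eval_YY] using this
  · intro _ k
    exact ⟨_, fun u hu L hL => dual_mul j le_rfl hL⟩

lemma bilsub {κ R : Type*} [Fintype κ] [CommRing R] (A : κ → κ → R) (β v : κ → R) (d : R) :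
    ∑ r, ∑ s, (A r s - d * (β r * β s)) * (v r * v s) =
      ∑ r, ∑ s, A r s * (v r * v s) - d * (∑ r, β r * v r) ^ 2 := by
  rw [pow_two, Finset.sum_mul_sum, Finset.mul_sum, ← Finset.sum_sub_distrib]
  refine Finset.sum_congr rfl fun r _ => ?_
  rw [Finset.mul_sum, ← Finset.sum_sub_distrib]
  refine Finset.sum_congr rfl fun s _ => by ring

end LassAux

set_option linter.unusedSectionVars false
namespace LassAux
open Filter Topology

variable {n m : ℕ} {g : Fin m → MvPolynomial (Fin n) ℝ}

set_option maxHeartbeats 1000000 in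
theorem q2 (hconv : Convex ℝ (SolSet g)) (harch : IsArchimedeanQM (QM g)) (j : Fin m)
    (hq : ∀ x ∈ SolSet g ∩ ZSet (g j), StrictlyQuasiconcaveAt (g j) x)
    {t : ℝ} (ht0 : 0 < t) (ht1 : t < 1) :
    ∃ δ : ℝ, 0 < δ ∧ ∃ d, ∀ u ∈ SolSet g, ∀ L, Dual g d L →
      0 ≤ L (sub u t (g j) - C δ * sub u t (g j) ^ 2) := by
  obtain ⟨G, hG, hGb⟩ := exists_bound harch (g j)
  obtain ⟨ι, _, b, w, hw, htay⟩ := tay (n := n) (g j).totalDegree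
  refine ⟨1 / (2 * G), by positivity, ?_⟩
  set δ := 1 / (2 * G) with hδ
  let lin : (Fin n → ℝ) → MvPolynomial (Fin n) ℝ := fun u =>
    ∑ a, C (eval u (pderiv a (g j))) * YY a u
  let qq : ℝ → (Fin n → ℝ) → MvPolynomial (Fin n) ℝ := fun t u =>
    ∑ a, ∑ c, TT b w t (g j) a c u * (YY a u * YY c u)
  let τ : ℝ → Fin n → (Fin n → ℝ) → MvPolynomial (Fin n) ℝ := fun t a u =>
    C (eval u (pderiv a (g j))) + C t * ∑ c, TT b w t (g j) a c u * YY c u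
  have hτF : ∀ t a, Fam (τ t a) := fun t a => (cev_fam _).add ((Fam.const _).mul
    (Fam.sum _ fun c _ => (TT_fam _ _ _ _ _ _).mul (YY_fam c)))
  have hτ : ∀ t u, ∑ a, τ t a u * YY a u = lin u + C t * qq t u := by
    intro t u
    simp only [τ, lin, qq, add_mul, Finset.sum_add_distrib, Finset.mul_sum, Finset.sum_mul]
    congr 1
    refine Finset.sum_congr rfl fun a _ => Finset.sum_congr rfl fun c _ => by ring
  have hφ : ∀ u, sub u t (g j) = C (eval u (g j)) + C t * lin u + C (t ^ 2) * qq t u :=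
    fun u => htay (g j) le_rfl t u
  have hg1 : ∀ u, g j = C (eval u (g j)) + lin u + qq 1 u := by
    intro u
    have := htay (g j) le_rfl 1 u
    rw [sub_one'] at this
    simpa using this
  let v : Option (Fin n) → (Fin n → ℝ) → MvPolynomial (Fin n) ℝ := fun r u =>
    r.elim (C (eval u (g j))) fun a => YY a u
  let β : Option (Fin n) → (Fin n → ℝ) → MvPolynomial (Fin n) ℝ := fun r u =>
    r.elim 1 fun a => C t * τ t a u
  let Q : Option (Fin n) → Option (Fin n) → (Fin n → ℝ) → MvPolynomial (Fin n) ℝ := fun r s u =>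
    r.elim 0 fun a => s.elim 0 fun c =>
      C (t ^ 2) * TT b w t (g j) a c u - C t * TT b w 1 (g j) a c u
  have hβv : ∀ u, ∑ r, β r u * v r u = sub u t (g j) := by
    intro u
    rw [Fintype.sum_option]
    simp only [β, v, Option.elim, mul_assoc, ← Finset.mul_sum, hτ, hφ, C_pow]
    ring
  have hQv : ∀ u, ∑ r, ∑ s, Q r s u * (v r u * v s u) = C (t ^ 2) * qq t u - C t * qq 1 u := by
    intro u
    simp only [Fintype.sum_option, Q, v, Option.elim, zero_mul, Finset.sum_const_zero, zero_add,
      qq, Finset.mul_sum, ← Finset.sum_sub_distrib]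
    refine Finset.sum_congr rfl fun a _ => Finset.sum_congr rfl fun c _ => by ring
  refine ql (κ := Option (Fin n)) (π := Bool) harch (c := fun p => if p then 1 - t else t)
    (z := fun p u => if p then C (eval u (g j)) else g j) (G := G)
    (α := fun p r u => if p then r.elim 1 (fun _ => 0) else r.elim 1 fun a => τ 1 a u)
    (R := fun r s u => Q r s u - C δ * (β r u * β s u)) (v := v)
    (isCompact_SolSet harch) ?_ hG ?_ ?_ ?_ ?_ ?_ ?_ ?_ ?_ ?_ ?_ ?_
  · intro p; cases p <;> simp <;> linarith
  · exact (sub_fam' _ _).sub ((Fam.const _).mul ((sub_fam' _ _).pow 2))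
  · intro p
    cases p
    · simpa using Fam.const _
    · simpa using cev_fam _
  · intro p r
    cases p <;> cases r
    · simpa using Fam.const _
    · simpa using hτF _ _
    · simpa using Fam.const _
    · simpa using Fam.const _
  · intro r s
    have hβF : ∀ r, Fam (β r) := by
      intro r
      cases r
      · exact Fam.const _
      · exact (Fam.const _).mul (hτF _ _)
    refine Fam.sub ?_ ((Fam.const _).mul ((hβF r).mul (hβF s)))
    cases r
    · exact Fam.const _
    · cases s
      · exact Fam.const _
      · exact ((Fam.const _).mul (TT_fam _ _ _ _ _ _)).sub
          ((Fam.const _).mul (TT_fam _ _ _ _ _ _))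
  · intro r
    cases r
    · exact cev_fam _
    · exact YY_fam _
  · intro u hu
    rw [bilsub, hβv, hQv]
    simp only [Fintype.sum_bool, if_true, Bool.false_eq_true, if_false]
    have h1 := hg1 u
    have h2 := hφ u
    generalize sub u t (g j) = f at *
    have : C (1 - t) = (1 - C t : MvPolynomial (Fin n) ℝ) := by simp
    rw [this]
    linear_combination h2 - C t * h1
  · intro u hu p
    cases p
    · simp only [Bool.false_eq_true, if_false, Fintype.sum_option, Option.elim, v, hτ]
      have h1 := hg1 u
      rw [map_one]
      linear_combination h1
    · simp [Fintype.sum_option, v]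
  · intro u hu x hx p
    cases p
    · simpa using ⟨hx j, hGb x hx⟩
    · simpa using ⟨hu j, hGb u hu⟩
  · intro u hu x hx hv ξ hξ hα
    have hxu : x = u := funext fun a => by
      have := congrFun hv (some a)
      simp only [evV, v, Option.elim, eval_YY, Pi.zero_apply] at this; linarith
    subst hxu
    have hz : eval x (g j) = 0 := by
      have := congrFun hv none
      simpa [evV, v] using this
    have h1 := hα true
    have h2 := hα false
    have hτx : ∀ t a, eval x (τ t a x) = eval x (pderiv a (g j)) := by
      intro t a
      simp [τ, eval_YY]
    simp only [if_true, Fintype.sum_option, Option.elim, map_one, map_zero, zero_mul,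
      Finset.sum_const_zero, add_zero, one_mul] at h1
    simp only [Bool.false_eq_true, if_false, Fintype.sum_option, Option.elim, map_one, one_mul,
      hτx, h1, zero_add] at h2
    have hξ' : (fun a => ξ (some a)) ≠ 0 := by
      intro h
      apply hξ
      funext r
      cases r
      · exact h1
      · exact congrFun h _
    have h3 := hq x ⟨hu, hz⟩ _ hξ' (by simpa [dotProduct, gradEval] using h2)
    rw [hess_sum] at h3
    have hb0 : ∑ r, eval x (β r x) * ξ r = 0 := by
      simp only [β, Fintype.sum_option, Option.elim, map_one, one_mul, h1, zero_add, map_mul, eval_C,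
        hτx, mul_assoc, ← Finset.mul_sum, h2, mul_zero]
    have : qf (evM (fun r s u => Q r s u - C δ * (β r u * β s u)) x x) ξ =
        (t - t ^ 2) * (- (1 / 2)) *
          ∑ a, ∑ c, eval x (pderiv a (pderiv c (g j))) * (ξ (some a) * ξ (some c)) := by
      have e := bilsub (fun r s => eval x (Q r s x)) (fun r => eval x (β r x)) ξ δ
      rw [hb0] at e
      simp only [qf, evM, map_sub, map_mul, eval_C, mul_assoc] at e ⊢
      rw [e]
      simp only [Q, Fintype.sum_option, Option.elim, map_zero, zero_mul, Finset.sum_const_zero,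
        zero_add, map_sub, map_mul, eval_C, TT_self hw, Finset.mul_sum]
      rw [zero_pow two_ne_zero, mul_zero, sub_zero]
      refine Finset.sum_congr rfl fun a _ => Finset.sum_congr rfl fun c _ => by ring
    rw [this]
    have : 0 < t - t ^ 2 := by nlinarith
    nlinarith
  · intro u hu x hx hv
    have hpm := pt_mem hconv hu hx ht0.le ht1.le
    have hpos : 0 < eval (pt u x t) (g j) := by
      by_cases hxu : x = u
      · subst hxu
        rw [pt_self]
        refine (hx j).lt_of_ne fun h => hv ?_
        funext r
        cases r
        · simp [evV, v, ← h]
        · simp [evV, v, eval_YY]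
      · exact qs hconv hu hx ht0 ht1 hq hxu
    have hle := hGb _ hpm
    simp only [map_sub, map_mul, map_pow, eval_C, eval_sub]
    set y := eval (pt u x t) (g j)
    have : δ * y ≤ 1 / 2 := by
      rw [hδ, div_mul_eq_mul_div, one_mul, div_le_iff₀ (by positivity)]; linarith
    nlinarith
  · intro p k
    cases p
    · exact ⟨_, fun u hu L hL => by
        simpa using dual_mul j le_rfl hL⟩
    · refine ⟨0, fun u hu L hL => ?_⟩
      simp only [if_true]
      rw [← smul_eq_C_mul, map_smul, smul_eq_mul]
      refine mul_nonneg (hu j) (hL.sq _ ?_)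
      rw [← C_mul, ← C_1, ← C_sub, ← C_pow, totalDegree_C]

end LassAux

set_option linter.unusedSectionVars false
namespace LassAux
open Filter Topology

variable {n m : ℕ} {g : Fin m → MvPolynomial (Fin n) ℝ}

abbrev I01 : Set ℝ := Set.Icc 0 1

abbrev ZT (n : ℕ) := (Fin n → ℝ) × (MvPolynomial (Fin n) ℝ →ₗ[ℝ] ℝ)

lemma pderiv_comm' (a b : Fin n) (p : MvPolynomial (Fin n) ℝ) :
    pderiv a (pderiv b p) = pderiv b (pderiv a p) := by
  have h : ⁅(pderiv a : Derivation ℝ (MvPolynomial (Fin n) ℝ) (MvPolynomial (Fin n) ℝ)),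
      (pderiv b : Derivation ℝ (MvPolynomial (Fin n) ℝ) (MvPolynomial (Fin n) ℝ))⁆ = 0 := by
    apply MvPolynomial.derivation_ext
    intro i
    rw [Derivation.commutator_apply]
    simp only [pderiv_X, Pi.single_apply]
    split_ifs <;> simp
  have := congrArg (fun D => D p) h
  simp only [Derivation.commutator_apply, Derivation.coe_zero, Pi.zero_apply] at this
  exact sub_eq_zero.1 this

lemma KI_compact (harch : IsArchimedeanQM (QM g)) : IsCompact (SolSet g ×ˢ I01) :=
  (isCompact_SolSet harch).prod isCompact_Icc

lemma ev_of {P : (Fin n → ℝ) × ℝ → (MvPolynomial (Fin n) ℝ →ₗ[ℝ] ℝ) → Prop}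
    (h : ∃ d, ∀ ω ∈ SolSet g ×ˢ I01, ∀ L, Dual g d L → P ω L) :
    ∀ᶠ z in FF g, ∀ s ∈ I01, P (z.1, s) z.2 := by
  obtain ⟨d, hd⟩ := h
  exact ev_iff.2 ⟨d, fun u hu L hL s hs => hd (u, s) ⟨hu, hs⟩ L hL⟩

lemma ev_sqF {p : (Fin n → ℝ) × ℝ → MvPolynomial (Fin n) ℝ} (hp : Fam p) :
    ∀ᶠ z in FF g, ∀ s, 0 ≤ z.2 (p (z.1, s) ^ 2) := by
  obtain ⟨D, hD⟩ := hp.degree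
  filter_upwards [ev_sq g D] with z hz s
  exact hz _ (hD _)

/-- families that are bounded (in the sense of `L`) by the quantity `Xf` -/
def Small (g : Fin m → MvPolynomial (Fin n) ℝ) (Xf : ZT n → ℝ)
    (p : (Fin n → ℝ) × ℝ → MvPolynomial (Fin n) ℝ) : Prop :=
  Fam p ∧ ∃ c : ℝ, ∀ᶠ z in FF g, ∀ s ∈ I01, z.2 (p (z.1, s) ^ 2) ≤ c * Xf z

variable {Xf : ZT n → ℝ}

lemma Small.add {p q : (Fin n → ℝ) × ℝ → MvPolynomial (Fin n) ℝ} (hp : Small g Xf p)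
    (hq : Small g Xf q) : Small g Xf (fun ω => p ω + q ω) := by
  obtain ⟨hp, c, hc⟩ := hp
  obtain ⟨hq, c', hc'⟩ := hq
  refine ⟨hp.add hq, 2 * c + 2 * c', ?_⟩
  filter_upwards [hc, hc', ev_sqF (g := g) (hp.sub hq)] with z h1 h2 h3 s hs
  have e : (p (z.1, s) + q (z.1, s)) ^ 2 = (2 : ℝ) • p (z.1, s) ^ 2 + (2 : ℝ) • q (z.1, s) ^ 2 -
      (p (z.1, s) - q (z.1, s)) ^ 2 := by
    simp only [smul_eq_C_mul, map_ofNat]; ring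
  rw [e, map_sub, map_add, map_smul, map_smul, smul_eq_mul, smul_eq_mul]
  have := h1 s hs
  have := h2 s hs
  have := h3 s
  linarith

lemma Small.mul (harch : IsArchimedeanQM (QM g)) {p q : (Fin n → ℝ) × ℝ → MvPolynomial (Fin n) ℝ}
    (hp : Small g Xf p) (hq : Fam q) : Small g Xf (fun ω => p ω * q ω) := by
  obtain ⟨hp, c, hc⟩ := hp
  refine ⟨hp.mul hq, ?_⟩
  obtain ⟨B, hB⟩ := (((KI_compact harch).prod (isCompact_SolSet harch)).image
    (hq.cont.pow 2)).bddAbove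
  obtain ⟨d, hd⟩ := mpos1 harch (KI_compact harch) (H := fun ω => C (max B 0 + 1) - q ω ^ 2)
    ((Fam.const _).sub (hq.pow 2)) hp (by
      intro ω hω x hx
      have : (eval x) (q ω) ^ 2 ≤ B := hB ⟨(ω, x), ⟨hω, hx⟩, rfl⟩
      simp only [map_sub, eval_C, map_pow]
      have := le_max_left B 0
      linarith)
  refine ⟨(max B 0 + 1) * c, ?_⟩
  filter_upwards [hc, ev_of (P := fun ω L => 0 ≤ L ((C (max B 0 + 1) - q ω ^ 2) * p ω ^ 2))
    ⟨d, hd⟩] with z h1 h2 s hs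
  have h3 := h2 s hs
  have h4 := h1 s hs
  rw [sub_mul, map_sub, ← smul_eq_C_mul, map_smul, smul_eq_mul] at h3
  rw [mul_pow, mul_comm]
  have h5 : 0 ≤ max B 0 + 1 := by positivity
  nlinarith

lemma Small.zero (_hX : ∀ᶠ z in FF g, 0 ≤ Xf z) : Small g Xf (fun _ => 0) :=
  ⟨Fam.const 0, 0, by filter_upwards with z s _; simp⟩

lemma Small.sum {ι : Type*} (hX : ∀ᶠ z in FF g, 0 ≤ Xf z) (t : Finset ι)
    {f : ι → (Fin n → ℝ) × ℝ → MvPolynomial (Fin n) ℝ} (hf : ∀ i ∈ t, Small g Xf (f i)) :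
    Small g Xf (fun ω => ∑ i ∈ t, f i ω) := by
  classical
  induction t using Finset.induction_on with
  | empty => simpa using Small.zero hX
  | insert a t ha ih =>
    simp only [Finset.sum_insert ha]
    exact (hf a (Finset.mem_insert_self _ _)).add
      (ih fun i hi => hf i (Finset.mem_insert_of_mem hi))

lemma Small.neg {p : (Fin n → ℝ) × ℝ → MvPolynomial (Fin n) ℝ} (hp : Small g Xf p) :
    Small g Xf (fun ω => - p ω) := by
  obtain ⟨hp, c, hc⟩ := hp
  exact ⟨hp.neg, c, by simpa using hc⟩

/-- Interpolation: smallness at the nodes gives smallness for all parameters, also for the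
derivative with respect to the parameter. -/
lemma Small.lagrange (harch : IsArchimedeanQM (QM g)) (hX : ∀ᶠ z in FF g, 0 ≤ Xf z)
    {ι : Type} {b : ι → ℝ} {J : Finset ι} (hJ : Set.InjOn b J)
    {p q : (Fin n → ℝ) × ℝ → MvPolynomial (Fin n) ℝ}
    (P : (Fin n → ℝ) → (Fin n → ℝ) → Polynomial ℝ)
    (hdeg : ∀ u x, (P u x).natDegree < J.card)
    (hp : ∀ u x s, eval x (p (u, s)) = (P u x).eval s)
    (hq : (∀ u x s, eval x (q (u, s)) = (P u x).eval s) ∨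
      (∀ u x s, eval x (q (u, s)) = (P u x).derivative.eval s))
    (hs : ∀ i ∈ J, Small g Xf (fun ω => p (ω.1, b i))) : Small g Xf q := by
  classical
  have hint : ∀ u x, P u x = ∑ i ∈ J, Polynomial.C ((P u x).eval (b i)) * Lagrange.basis J b i := by
    intro u x
    have := Lagrange.eq_interpolate (f := P u x) hJ
      (lt_of_le_of_lt Polynomial.degree_le_natDegree (by exact_mod_cast hdeg u x))
    rwa [Lagrange.interpolate_apply] at this
  obtain ⟨ℓ, hℓ, hq'⟩ : ∃ ℓ : ι → Polynomial ℝ, True ∧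
      ∀ ω, q ω = ∑ i ∈ J, p (ω.1, b i) * C ((ℓ i).eval ω.2) := by
    rcases hq with hq | hq
    · refine ⟨fun i => Lagrange.basis J b i, trivial, fun ω => ?_⟩
      apply MvPolynomial.funext
      intro x
      rw [show ω = (ω.1, ω.2) from rfl, hq, hint, Polynomial.eval_finsetSum, map_sum]
      refine Finset.sum_congr rfl fun i _ => ?_
      simp [hp]
    · refine ⟨fun i => (Lagrange.basis J b i).derivative, trivial, fun ω => ?_⟩
      apply MvPolynomial.funext
      intro x
      rw [show ω = (ω.1, ω.2) from rfl, hq, hint, Polynomial.derivative_sum,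
        Polynomial.eval_finsetSum, map_sum]
      refine Finset.sum_congr rfl fun i _ => ?_
      simp [hp]
  have : q = fun ω => ∑ i ∈ J, p (ω.1, b i) * C ((ℓ i).eval ω.2) := funext hq'
  rw [this]
  refine Small.sum hX _ fun i hi => (hs i hi).mul harch ?_
  exact Fam.coef _ ((ℓ i).continuous.comp continuous_snd)

/-- `W_e(u,s) = ∑ r_b(u + s(X-u)) Y_b` -/
def WW (r : Fin n → MvPolynomial (Fin n) ℝ) (ω : (Fin n → ℝ) × ℝ) : MvPolynomial (Fin n) ℝ :=
  ∑ c, sub ω.1 ω.2 (r c) * YY c ω.1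

lemma YY_fam' (c : Fin n) : Fam (fun ω : (Fin n → ℝ) × ℝ => YY c ω.1) :=
  (YY_fam c).comp continuous_fst

lemma WW_fam (r : Fin n → MvPolynomial (Fin n) ℝ) : Fam (WW r) :=
  Fam.sum _ fun c _ => (sub_fam _).mul (YY_fam' c)

lemma eval_WW (r : Fin n → MvPolynomial (Fin n) ℝ) (u x : Fin n → ℝ) (s : ℝ) :
    eval x (WW r (u, s)) = ∑ c, eval (pt u x s) (r c) * (x c - u c) := by
  simp [WW, eval_sub, eval_YY]

end LassAux

set_option linter.unusedSectionVars false
namespace LassAux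
open Filter Topology

variable {n m : ℕ} {g : Fin m → MvPolynomial (Fin n) ℝ} {Xf : ZT n → ℝ}

lemma bil1 {κ R : Type*} [Fintype κ] [CommRing R] (r ρ Y : κ → R) (γ G : R) :
    ∑ c, ∑ d, (γ * (r c * r d) + G * (ρ c * r d + r c * ρ d)) * (Y c * Y d) =
      γ * (∑ c, r c * Y c) ^ 2 + 2 * G * (∑ c, r c * Y c) * ∑ c, ρ c * Y c := by
  have h : ∀ f h : κ → R, ∑ c, ∑ d, (f c * Y c) * (h d * Y d) =
      (∑ c, f c * Y c) * ∑ c, h c * Y c := by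
    intro f h
    rw [Finset.sum_mul_sum]
  have h1 : ∀ c d, (γ * (r c * r d) + G * (ρ c * r d + r c * ρ d)) * (Y c * Y d) =
      γ * ((r c * Y c) * (r d * Y d)) + G * ((ρ c * Y c) * (r d * Y d)) +
        G * ((r c * Y c) * (ρ d * Y d)) := by intro c d; ring
  simp only [h1, Finset.sum_add_distrib, ← Finset.mul_sum]
  simp only [← Finset.sum_mul]
  ring

/-- the Hessian identity differentiated in the direction `o - X` -/
lemma third_id {E : Type} (Ek : Finset E) (G : E → MvPolynomial (Fin n) ℝ)
    (r : E → Fin n → MvPolynomial (Fin n) ℝ) (f : MvPolynomial (Fin n) ℝ)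
    (hf : ∀ a c, -(pderiv a (pderiv c f)) = ∑ e ∈ Ek, G e * (r e a * r e c)) (c d a : Fin n) :
    -(pderiv c (pderiv d (pderiv a f))) = ∑ e ∈ Ek, (pderiv a (G e) * (r e c * r e d) +
      G e * (pderiv a (r e c) * r e d + r e c * pderiv a (r e d))) := by
  rw [pderiv_comm' d a, pderiv_comm' c a, ← map_neg, hf, map_sum]
  refine Finset.sum_congr rfl fun e _ => ?_
  simp only [Derivation.leibniz, smul_eq_mul]
  ring

set_option maxHeartbeats 400000 in
lemma fourth (harch : IsArchimedeanQM (QM g)) {E : Type} (Ek : Finset E)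
    (cc W : E → (Fin n → ℝ) × ℝ → MvPolynomial (Fin n) ℝ)
    (hccF : ∀ e, Fam (cc e)) (hWF : ∀ e, Fam (W e))
    (hccpos : ∀ e ∈ Ek, ∀ ω ∈ SolSet g ×ˢ I01, ∀ x ∈ SolSet g, 0 < eval x (cc e ω))
    (hR : Small g Xf (fun ω => ∑ e ∈ Ek, cc e ω * W e ω ^ 2)) :
    ∀ e ∈ Ek, ∃ c : ℝ, ∀ᶠ z in FF g, ∀ s ∈ I01, z.2 (W e (z.1, s) ^ 4) ≤ c * Xf z := by
  obtain ⟨hRF, c1, hc1⟩ := hR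
  intro e he
  obtain ⟨c0, hc0, hc0'⟩ := cl3 ((KI_compact harch).prod (isCompact_SolSet harch))
    (((hccF e).pow 2).cont) (by
      rintro ⟨ω, x⟩ ⟨hω, hx⟩
      have := hccpos e he ω hω x hx
      simp only [map_pow]
      positivity)
  obtain ⟨d1, hd1⟩ := mpos1 harch (KI_compact harch) (H := fun ω => cc e ω ^ 2 - C (c0 / 2))
    (((hccF e).pow 2).sub (Fam.const _)) ((hWF e).pow 2) (by
      intro ω hω x hx
      have := hc0' (ω, x) ⟨hω, hx⟩
      simp only [map_sub, eval_C] at this ⊢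
      linarith)
  have hcr : ∀ p : E × E, p ∈ Ek ×ˢ Ek → ∀ᶠ z in FF g, ∀ s ∈ I01,
      0 ≤ z.2 ((cc p.1 (z.1, s) * cc p.2 (z.1, s)) *
        (W p.1 (z.1, s) * W p.2 (z.1, s)) ^ 2) := by
    intro p hp
    rw [Finset.mem_product] at hp
    obtain ⟨d, hd⟩ := mpos1 harch (KI_compact harch) (H := fun ω => cc p.1 ω * cc p.2 ω)
      ((hccF _).mul (hccF _)) ((hWF p.1).mul (hWF p.2)) (by
        intro ω hω x hx
        have h1 := hccpos _ hp.1 ω hω x hx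
        have h2 := hccpos _ hp.2 ω hω x hx
        rw [map_mul]; positivity)
    exact ev_of ⟨d, hd⟩
  rw [← Filter.eventually_all_finset] at hcr
  refine ⟨2 / c0 * c1, ?_⟩
  filter_upwards [hc1, hcr, ev_of ⟨d1, hd1⟩] with z h1 h2 h3 s hs
  have h4 := h1 s hs
  have h5 := h3 s hs
  have e1 : (∑ e ∈ Ek, cc e (z.1, s) * W e (z.1, s) ^ 2) ^ 2 =
      ∑ p ∈ Ek ×ˢ Ek, (cc p.1 (z.1, s) * cc p.2 (z.1, s)) *
        (W p.1 (z.1, s) * W p.2 (z.1, s)) ^ 2 := by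
    rw [sq, Finset.sum_mul_sum, Finset.sum_product]
    refine Finset.sum_congr rfl fun a _ => Finset.sum_congr rfl fun c _ => ?_
    ring
  rw [e1, map_sum] at h4
  have h6 := Finset.single_le_sum (f := fun p : E × E => z.2 ((cc p.1 (z.1, s) * cc p.2 (z.1, s)) *
        (W p.1 (z.1, s) * W p.2 (z.1, s)) ^ 2)) (fun p hp => h2 p hp s hs)
        (Finset.mk_mem_product he he)
  simp only at h6
  have e2 : (cc e (z.1, s) * cc e (z.1, s)) * (W e (z.1, s) * W e (z.1, s)) ^ 2 =
    (cc e (z.1, s) ^ 2 - C (c0 / 2)) * (W e (z.1, s) ^ 2) ^ 2 +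
      (c0 / 2) • W e (z.1, s) ^ 4 := by
    rw [smul_eq_C_mul]; ring
  rw [e2, map_add, map_smul, smul_eq_mul] at h6
  have h7 : c0 / 2 * z.2 (W e (z.1, s) ^ 4) ≤ c1 * Xf z := by linarith
  have : z.2 (W e (z.1, s) ^ 4) = 2 / c0 * (c0 / 2 * z.2 (W e (z.1, s) ^ 4)) := by
    field_simp
  rw [this, mul_assoc]
  exact mul_le_mul_of_nonneg_left h7 (by positivity)

set_option maxHeartbeats 600000 in
theorem KI (hconv : Convex ℝ (SolSet g)) (harch : IsArchimedeanQM (QM g))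
    (hX : ∀ᶠ z in FF g, 0 ≤ Xf z)
    {ι : Type} {b : ι → ℝ} {J : Finset ι} (hJ : Set.InjOn b J)
    {E : Type} (Ek : Finset E) (G : E → MvPolynomial (Fin n) ℝ)
    (r : E → Fin n → MvPolynomial (Fin n) ℝ) (f : MvPolynomial (Fin n) ℝ)
    (hf : ∀ a c, -(pderiv a (pderiv c f)) = ∑ e ∈ Ek, G e * (r e a * r e c))
    (hD1 : ∀ a, (pderiv a f).totalDegree < J.card)
    (hD2 : ∀ e ∈ Ek, ∀ a, (G e).totalDegree + (r e a).totalDegree < J.card)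
    (hJ0 : 0 < J.card)
    (hG : ∀ e ∈ Ek, ∀ x ∈ SolSet g, 0 ≤ eval x (G e)) (o : Fin n → ℝ)
    (hslope : ∀ e ∈ Ek, ∀ y ∈ SolSet g, eval y (G e) = 0 →
      0 < ∑ a, eval y (pderiv a (G e)) * (o a - y a))
    (hsm : ∀ e ∈ Ek, ∀ i ∈ J, Small g Xf (fun ω => WW (r e) (ω.1, b i) * sub ω.1 (b i) (G e))) :
    ∀ e ∈ Ek, ∃ c : ℝ, ∀ᶠ z in FF g, ∀ s ∈ I01, z.2 (WW (r e) (z.1, s) ^ 4) ≤ c * Xf z := by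
  classical
  have hW : ∀ e ∈ Ek, Small g Xf (fun ω => WW (r e) ω * sub ω.1 ω.2 (G e)) := by
    intro e he
    refine Small.lagrange harch hX hJ (p := fun ω => WW (r e) ω * sub ω.1 ω.2 (G e))
      (fun u x => (∑ c, line u x (r e c) * Polynomial.C (x c - u c)) * line u x (G e))
      ?_ ?_ (Or.inl ?_) (fun i hi => hsm e he i hi)
    · intro u x
      rw [Finset.sum_mul]
      refine lt_of_le_of_lt (Polynomial.natDegree_sum_le_of_forall_le (n := J.card - 1) _ _ ?_)
        (by omega)
      intro c _
      have h1 := natDegree_line u x (r e c)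
      have h2 := natDegree_line u x (G e)
      have h3 := hD2 e he c
      have h4 := Polynomial.natDegree_mul_le (p := line u x (r e c) * Polynomial.C (x c - u c))
        (q := line u x (G e))
      have h5 := Polynomial.natDegree_mul_C_le (line u x (r e c)) (x c - u c)
      omega
    · intro u x s
      simp [eval_WW, eval_sub, eval_line, Polynomial.eval_finsetSum]
    · intro u x s
      simp [eval_WW, eval_sub, eval_line, Polynomial.eval_finsetSum]
  have hV : ∀ a, Small g Xf (fun ω => ∑ c, ∑ d,
      sub ω.1 ω.2 (pderiv c (pderiv d (pderiv a f))) * (YY c ω.1 * YY d ω.1)) := by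
    intro a
    refine Small.lagrange harch hX hJ (p := fun ω => ∑ c,
        sub ω.1 ω.2 (pderiv c (pderiv a f)) * YY c ω.1)
      (fun u x => (line u x (pderiv a f)).derivative) ?_ ?_ (Or.inr ?_) (fun i hi => ?_)
    · intro u x
      have h1 := natDegree_line u x (pderiv a f)
      have h2 := hD1 a
      have h3 := Polynomial.natDegree_derivative_le (line u x (pderiv a f))
      omega
    · intro u x s
      simp [d1_line, eval_sub, eval_YY]
    · intro u x s
      simp [d2_line, eval_sub, eval_YY]
    · have : (fun ω : (Fin n → ℝ) × ℝ => ∑ c, sub ω.1 (b i) (pderiv c (pderiv a f)) * YY c ω.1) =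
          fun ω => -∑ e ∈ Ek, (WW (r e) (ω.1, b i) * sub ω.1 (b i) (G e)) *
            sub ω.1 (b i) (r e a) := by
        funext ω
        have h1 : ∀ c, pderiv c (pderiv a f) = -∑ e ∈ Ek, G e * (r e c * r e a) := by
          intro c; rw [← hf, neg_neg]
        simp only [h1, map_neg, map_sum, map_mul, neg_mul, Finset.sum_neg_distrib, WW,
          Finset.sum_mul]
        rw [Finset.sum_comm]
        rw [neg_inj]
        refine Finset.sum_congr rfl fun e _ => Finset.sum_congr rfl fun c _ => ?_
        ring
      simp only
      rw [this]
      refine (Small.sum hX _ fun e he => (hsm e he i hi).mul harch ?_).neg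
      exact (sub_fam' (b i) (r e a)).comp continuous_fst
  -- constants
  set DN : E → MvPolynomial (Fin n) ℝ := fun e => ∑ a, (C (o a) - X a) * pderiv a (G e) with hDN
  have hDNe : ∀ e y, eval y (DN e) = ∑ a, eval y (pderiv a (G e)) * (o a - y a) := by
    intro e y
    simp [hDN, mul_comm]
  have hC : ∀ e, ∃ l : ℝ, e ∈ Ek → ∀ y ∈ SolSet g, 0 < eval y (DN e + C l * G e) := by
    intro e
    by_cases he : e ∈ Ek
    · obtain ⟨l0, _, hl⟩ := cl (isCompact_SolSet harch) (MvPolynomial.continuous_eval (DN e))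
        (MvPolynomial.continuous_eval (G e)) (hG e he)
        (fun y hy h0 => by rw [hDNe]; exact hslope e he y hy h0)
      exact ⟨l0, fun _ y hy => by simpa using hl l0 le_rfl y hy⟩
    · exact ⟨0, fun h => absurd h he⟩
  choose l hl using hC
  set cc : E → (Fin n → ℝ) × ℝ → MvPolynomial (Fin n) ℝ :=
    fun e ω => sub ω.1 ω.2 (DN e + C (l e) * G e) with hcc
  have hccF : ∀ e, Fam (cc e) := fun e => sub_fam _
  have hccpos : ∀ e ∈ Ek, ∀ ω ∈ SolSet g ×ˢ I01, ∀ x ∈ SolSet g, 0 < eval x (cc e ω) := by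
    intro e he ω hω x hx
    simp only [hcc, eval_sub]
    exact hl e he _ (pt_mem hconv hω.1 hx hω.2.1 hω.2.2)
  have hR : Small g Xf (fun ω => ∑ e ∈ Ek, cc e ω * WW (r e) ω ^ 2) := by
    set ZZ : E → (Fin n → ℝ) × ℝ → MvPolynomial (Fin n) ℝ := fun e ω =>
      ∑ a, sub ω.1 ω.2 (C (o a) - X a) * ∑ c, sub ω.1 ω.2 (pderiv a (r e c)) * YY c ω.1 with hZZ
    have hZF : ∀ e, Fam (ZZ e) := fun e => Fam.sum _ fun a _ => (sub_fam _).mul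
      (Fam.sum _ fun c _ => (sub_fam _).mul (YY_fam' c))
    have hid : (fun ω => ∑ e ∈ Ek, cc e ω * WW (r e) ω ^ 2) = fun ω =>
        (-∑ a, (∑ c, ∑ d, sub ω.1 ω.2 (pderiv c (pderiv d (pderiv a f))) *
          (YY c ω.1 * YY d ω.1)) * sub ω.1 ω.2 (C (o a) - X a)) +
        ∑ e ∈ Ek, (WW (r e) ω * sub ω.1 ω.2 (G e)) * (C (l e) * WW (r e) ω - C 2 * ZZ e ω) := by
      funext ω
      have h1 : ∀ c d a, pderiv c (pderiv d (pderiv a f)) =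
          -∑ e ∈ Ek, (pderiv a (G e) * (r e c * r e d) +
            G e * (pderiv a (r e c) * r e d + r e c * pderiv a (r e d))) := by
        intro c d a; rw [← third_id Ek G r f hf, neg_neg]
      have h2 : ∀ a, (∑ c, ∑ d, sub ω.1 ω.2 (pderiv c (pderiv d (pderiv a f))) *
          (YY c ω.1 * YY d ω.1)) = -∑ e ∈ Ek, (sub ω.1 ω.2 (pderiv a (G e)) * WW (r e) ω ^ 2 +
            2 * sub ω.1 ω.2 (G e) * WW (r e) ω *
              ∑ c, sub ω.1 ω.2 (pderiv a (r e c)) * YY c ω.1) := by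
        intro a
        have h3 : ∀ e, (sub ω.1 ω.2 (pderiv a (G e)) * WW (r e) ω ^ 2 +
            2 * sub ω.1 ω.2 (G e) * WW (r e) ω *
              ∑ c, sub ω.1 ω.2 (pderiv a (r e c)) * YY c ω.1) =
            ∑ c, ∑ d, sub ω.1 ω.2 (pderiv a (G e) * (r e c * r e d) +
            G e * (pderiv a (r e c) * r e d + r e c * pderiv a (r e d))) *
              (YY c ω.1 * YY d ω.1) := by
          intro e
          simp only [map_add, map_mul]
          rw [bil1 (fun c => sub ω.1 ω.2 (r e c)) (fun c => sub ω.1 ω.2 (pderiv a (r e c)))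
            (fun c => YY c ω.1)]
          rfl
        simp only [h3, h1, map_neg, map_sum, neg_mul, Finset.sum_neg_distrib, Finset.sum_mul]
        rw [Finset.sum_comm (s := Ek)]
        rw [neg_inj]
        refine Finset.sum_congr rfl fun c _ => ?_
        rw [Finset.sum_comm]
      simp only [h2, neg_mul, Finset.sum_neg_distrib, neg_neg, Finset.sum_mul]
      rw [Finset.sum_comm, ← Finset.sum_add_distrib]
      refine Finset.sum_congr rfl fun e _ => ?_
      have h4 : (∑ a, (sub ω.1 ω.2 (pderiv a (G e)) * WW (r e) ω ^ 2 +
            2 * sub ω.1 ω.2 (G e) * WW (r e) ω *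
              ∑ c, sub ω.1 ω.2 (pderiv a (r e c)) * YY c ω.1) * sub ω.1 ω.2 (C (o a) - X a)) =
          sub ω.1 ω.2 (DN e) * WW (r e) ω ^ 2 + 2 * sub ω.1 ω.2 (G e) * WW (r e) ω * ZZ e ω := by
        simp only [hDN, hZZ, map_sum, map_mul]
        rw [Finset.mul_sum, Finset.sum_mul, ← Finset.sum_add_distrib]
        refine Finset.sum_congr rfl fun a _ => ?_
        ring
      rw [h4]
      have h5 : sub ω.1 ω.2 (C (l e)) = C (l e) := (sub ω.1 ω.2).commutes (l e)
      have h6 : (C 2 : MvPolynomial (Fin n) ℝ) = 2 := map_ofNat _ 2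
      simp only [hcc, map_add, map_mul, h5, h6]
      ring
    rw [hid]
    refine (Small.sum hX _ fun a _ => (hV a).mul harch (sub_fam _)).neg.add
      (Small.sum hX _ fun e he => (hW e he).mul harch ?_)
    exact ((Fam.const _).mul (WW_fam _)).sub ((Fam.const _).mul (hZF e))
  exact fun e he => fourth harch Ek cc (fun e => WW (r e)) hccF (fun e => WW_fam (r e)) hccpos hR e he

end LassAux

set_option linter.unusedSectionVars false
namespace LassAux
open Filter Topology

variable {n m : ℕ} {g : Fin m → MvPolynomial (Fin n) ℝ} {Xf : ZT n → ℝ}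

lemma exists_edges (g : Fin m → MvPolynomial (Fin n) ℝ) :
    ∃ (E : Type) (_ : Fintype E) (_ : DecidableEq E) (src : E → Fin m) (ty : E → Fin (m + 1))
      (r : E → Fin n → MvPolynomial (Fin n) ℝ), (∀ e, withOne g (ty e) ≠ 0) ∧
      ∀ k, SosConcave g (g k) → ∀ a c, -(pderiv a (pderiv c (g k))) =
        ∑ e ∈ Finset.univ.filter (fun e => src e = k), withOne g (ty e) * (r e a * r e c) := by
  classical
  have h : ∀ k, ∃ (N : ℕ) (P : Fin (m + 1) → Fin N → Matrix (Fin n) (Fin n)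
      (MvPolynomial (Fin n) ℝ)), SosConcave g (g k) → ∀ a c, -(pderiv a (pderiv c (g k))) =
        ∑ i, ∑ j, withOne g i * ∑ l, P i j l a * P i j l c := by
    intro k
    by_cases hk : SosConcave g (g k)
    · obtain ⟨d, N, P, _, h2⟩ := hk
      refine ⟨N, P, fun _ a c => ?_⟩
      have h3 := congrFun (congrFun h2 a) c
      rw [Matrix.of_apply] at h3
      rw [h3]
      simp [Matrix.sum_apply, Matrix.mul_apply]
    · exact ⟨0, fun _ j => j.elim0, fun h => absurd h hk⟩
  choose N P hP using h
  refine ⟨Σ k : Fin m, Fin (m + 1) × Fin (N k) × Fin n, inferInstance, inferInstance,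
    fun e => e.1, fun e => if withOne g e.2.1 = 0 then 0 else e.2.1,
    fun e a => if withOne g e.2.1 = 0 then 0 else P e.1 e.2.1 e.2.2.1 e.2.2.2 a, ?_, ?_⟩
  · intro e
    dsimp only
    split_ifs with h
    · rw [withOne_zero]; exact one_ne_zero
    · exact h
  · intro k hk a c
    rw [hP k hk, Finset.sum_filter, Fintype.sum_sigma, Finset.sum_eq_single k]
    · simp only [if_true]
      rw [Fintype.sum_prod_type]
      refine Finset.sum_congr rfl fun i _ => ?_
      rw [Fintype.sum_prod_type]
      refine Finset.sum_congr rfl fun j _ => ?_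
      rw [Finset.mul_sum]
      refine Finset.sum_congr rfl fun l _ => ?_
      split_ifs with h
      · simp [h]
      · rfl
    · intro k' _ hk'
      simp [hk']
    · simp

lemma sec_line {E : Type} (Ek : Finset E) (G : E → MvPolynomial (Fin n) ℝ)
    (r : E → Fin n → MvPolynomial (Fin n) ℝ) (f : MvPolynomial (Fin n) ℝ)
    (hf : ∀ a c, -(pderiv a (pderiv c f)) = ∑ e ∈ Ek, G e * (r e a * r e c))
    (u x : Fin n → ℝ) (s : ℝ) :
    (line u x f).derivative.derivative.eval s =
      -∑ e ∈ Ek, eval (pt u x s) (G e) * eval x (WW (r e) (u, s)) ^ 2 := by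
  have h1 : ∀ a c, pderiv a (pderiv c f) = -∑ e ∈ Ek, G e * (r e a * r e c) := by
    intro a c; rw [← hf, neg_neg]
  rw [d2_line]
  simp only [h1, eval_WW, map_neg, map_sum, map_mul, neg_mul, Finset.sum_neg_distrib]
  rw [neg_inj]
  have h2 : ∀ e, eval (pt u x s) (G e) * (∑ c, eval (pt u x s) (r e c) * (x c - u c)) ^ 2 =
      ∑ a, ∑ c, eval (pt u x s) (G e) * (eval (pt u x s) (r e a) * eval (pt u x s) (r e c)) *
        ((x a - u a) * (x c - u c)) := by
    intro e
    rw [sq, Finset.sum_mul_sum, Finset.mul_sum]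
    refine Finset.sum_congr rfl fun a _ => ?_
    rw [Finset.mul_sum]
    refine Finset.sum_congr rfl fun c _ => ?_
    ring
  simp only [h2, Finset.sum_mul]
  rw [Finset.sum_comm (s := Ek)]
  refine Finset.sum_congr rfl fun a _ => ?_
  rw [Finset.sum_comm (s := Ek)]

lemma idE {E : Type} (Ek : Finset E) (G : E → MvPolynomial (Fin n) ℝ)
    (r : E → Fin n → MvPolynomial (Fin n) ℝ) (f : MvPolynomial (Fin n) ℝ)
    (hf : ∀ a c, -(pderiv a (pderiv c f)) = ∑ e ∈ Ek, G e * (r e a * r e c))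
    {D : ℕ} (hD : f.totalDegree ≤ D) {t : ℝ} {ι : Type} [Fintype ι] {b w : ι → ℝ}
    (hb : ∀ F : Polynomial ℝ, F.natDegree ≤ D → F.eval t = (1 - t) * F.eval 0 + t * F.eval 1 -
      ∑ i, w i * F.derivative.derivative.eval (b i)) (u : Fin n → ℝ) :
    sub u t f = C ((1 - t) * eval u f) + C t * f +
      ∑ i, C (w i) * ∑ e ∈ Ek, sub u (b i) (G e) * WW (r e) (u, b i) ^ 2 := by
  apply MvPolynomial.funext
  intro x
  have h := hb (line u x f) ((natDegree_line u x f).trans hD)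
  simp only [eval_line, pt_zero, pt_one, sec_line Ek G r f hf] at h
  rw [eval_sub, h]
  simp [eval_sub, Finset.sum_neg_distrib]

lemma idE0 {E : Type} (Ek : Finset E) (G : E → MvPolynomial (Fin n) ℝ)
    (r : E → Fin n → MvPolynomial (Fin n) ℝ) (f : MvPolynomial (Fin n) ℝ)
    (hf : ∀ a c, -(pderiv a (pderiv c f)) = ∑ e ∈ Ek, G e * (r e a * r e c))
    {D : ℕ} (hD : f.totalDegree ≤ D) {ι : Type} [Fintype ι] {b w : ι → ℝ}
    (hb : ∀ F : Polynomial ℝ, F.natDegree ≤ D → ∀ t h : ℝ, F.eval (t + h) = F.eval t +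
      h * F.derivative.eval t + h ^ 2 * ∑ i, w i * F.derivative.derivative.eval (t + h * b i))
    (u : Fin n → ℝ) :
    ∑ a, C (eval u (pderiv a f)) * YY a u = f - C (eval u f) +
      ∑ i, C (w i) * ∑ e ∈ Ek, sub u (b i) (G e) * WW (r e) (u, b i) ^ 2 := by
  apply MvPolynomial.funext
  intro x
  have h := hb (line u x f) ((natDegree_line u x f).trans hD) 0 1
  simp only [eval_line, d1_line, pt_zero, pt_one, sec_line Ek G r f hf, zero_add, one_mul,
    one_pow] at h
  simp only [map_sum, map_mul, eval_C, eval_YY, map_add, map_sub, eval_sub, map_pow, h]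
  simp [Finset.sum_neg_distrib]
  ring

/-- terminal estimate -/
def Tm (g : Fin m → MvPolynomial (Fin n) ℝ) (i : Fin (m + 1)) (t : ℝ) : Prop :=
  ∃ δ : ℝ, 0 < δ ∧ ∀ᶠ z in FF g,
    δ * z.2 (sub z.1 t (withOne g i) ^ 2) ≤ z.2 (sub z.1 t (withOne g i))

lemma ev_one (g : Fin m → MvPolynomial (Fin n) ℝ) : ∀ᶠ z in FF g, 0 ≤ z.2 1 := by
  filter_upwards [ev_sq g 0] with z hz
  simpa using hz 1 (by simp)

lemma L_C (L : MvPolynomial (Fin n) ℝ →ₗ[ℝ] ℝ) (c : ℝ) : L (C c) = c * L 1 := by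
  rw [show (C c : MvPolynomial (Fin n) ℝ) = c • 1 by rw [smul_eq_C_mul, mul_one], map_smul,
    smul_eq_mul]

lemma L_Cmul (L : MvPolynomial (Fin n) ℝ →ₗ[ℝ] ℝ) (c : ℝ) (p : MvPolynomial (Fin n) ℝ) :
    L (C c * p) = c * L p := by
  rw [← smul_eq_C_mul, map_smul, smul_eq_mul]

lemma Tm_zero (harch : IsArchimedeanQM (QM g)) (i : Fin (m + 1)) : Tm g i 0 := by
  obtain ⟨G, hG, hG'⟩ := exists_bound harch (withOne g i)
  refine ⟨G⁻¹, by positivity, ?_⟩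
  filter_upwards [ev_mem g, ev_one g] with z hz h1
  rw [sub_zero', ← C_pow, L_C, L_C]
  have h2 := hG' z.1 hz
  have h3 := withOne_eval_nonneg hz i
  have h4 : G⁻¹ * eval z.1 (withOne g i) ≤ 1 := by
    rw [inv_mul_le_iff₀ hG]; linarith
  have h5 := mul_nonneg h3 h1
  nlinarith

lemma Tm_one (harch : IsArchimedeanQM (QM g)) (i : Fin (m + 1)) : Tm g i 1 := by
  obtain ⟨G, hG, hG'⟩ := exists_bound harch (withOne g i)
  set δ := (2 * G)⁻¹ with hδ
  have hδ0 : 0 < δ := by positivity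
  obtain ⟨d, hd⟩ := mpos1 harch (KI_compact harch) (H := fun _ => 1 - C δ * withOne g i)
    (Fam.const _) (Fam.const (withOne g i)) (by
      intro ω hω x hx
      simp only [map_sub, map_one, map_mul, eval_C]
      have h2 := hG' x hx
      have : δ * eval x (withOne g i) ≤ 1 / 2 := by
        rw [hδ, inv_mul_le_iff₀ (by positivity)]; linarith
      linarith)
  refine ⟨δ, hδ0, ?_⟩
  filter_upwards [ev_of ⟨d, hd⟩, ev_sq_mul g i (1 - C δ * withOne g i).totalDegree]
    with z h1 h2
  have h3 := h1 0 ⟨le_rfl, zero_le_one⟩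
  have h4 := h2 _ le_rfl
  rw [sub_one']
  have e : withOne g i = (1 - C δ * withOne g i) ^ 2 * withOne g i +
      C δ * ((1 - C δ * withOne g i) * withOne g i ^ 2) + C δ * withOne g i ^ 2 := by ring
  have h5 : z.2 (withOne g i) = _ := congrArg z.2 e
  rw [h5, map_add, map_add, L_Cmul, L_Cmul]
  have := mul_nonneg hδ0.le h3
  linarith

lemma Tm_unit (t : ℝ) : Tm g 0 t := by
  refine ⟨1, one_pos, ?_⟩
  filter_upwards with z
  simp [withOne_zero]

lemma Tm_quasi (hconv : Convex ℝ (SolSet g)) (harch : IsArchimedeanQM (QM g)) (j : Fin m)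
    (hq : ∀ x ∈ SolSet g ∩ ZSet (g j), StrictlyQuasiconcaveAt (g j) x) {t : ℝ} (ht0 : 0 < t)
    (ht1 : t < 1) : Tm g j.succ t := by
  obtain ⟨δ, hδ, d, hd⟩ := q2 hconv harch j hq ht0 ht1
  refine ⟨δ, hδ, ev_iff.2 ⟨d, fun u hu L hL => ?_⟩⟩
  have := hd u hu L hL
  rw [map_sub, L_Cmul] at this
  have e : withOne g j.succ = g j := rfl
  rw [e]
  dsimp only
  linarith

end LassAux

set_option linter.unusedSectionVars false
namespace LassAux
open Filter Topology

variable {n m : ℕ} {g : Fin m → MvPolynomial (Fin n) ℝ} {Xf : ZT n → ℝ}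

/-- the inductive claim -/
def Cl (g : Fin m → MvPolynomial (Fin n) ℝ) {E : Type} (r : E → Fin n → MvPolynomial (Fin n) ℝ)
    (U : Finset E) (i : Fin (m + 1)) (t : ℝ) : Prop :=
  ∃ δ : ℝ, 0 < δ ∧ ∀ η : ℝ, 0 < η → ∀ᶠ z in FF g, ∀ B : ℝ, 0 ≤ B →
    (∀ e ∈ U, ∀ s ∈ I01, z.2 (WW (r e) (z.1, s) ^ 2) ≤ B) →
    δ * z.2 (sub z.1 t (withOne g i) ^ 2) - η * B ≤ z.2 (sub z.1 t (withOne g i))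

lemma Tm.cl {E : Type} {r : E → Fin n → MvPolynomial (Fin n) ℝ} (U : Finset E) {i : Fin (m + 1)}
    {t : ℝ} (h : Tm g i t) : Cl g r U i t := by
  obtain ⟨δ, hδ, h⟩ := h
  refine ⟨δ, hδ, fun η hη => ?_⟩
  filter_upwards [h] with z hz B hB _
  have := mul_nonneg hη.le hB
  linarith

/-- conclusion for a child of the recursion -/
def Child (g : Fin m → MvPolynomial (Fin n) ℝ) {E : Type}
    (r : E → Fin n → MvPolynomial (Fin n) ℝ) (Xf : ZT n → ℝ)
    (U : Finset E) (e : E) (i : Fin (m + 1)) (t : ℝ) : Prop :=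
  ∃ δ : ℝ, 0 < δ ∧ ∀ η : ℝ, 0 < η → ∀ᶠ z in FF g, ∀ B : ℝ, 0 ≤ B →
    (∀ e ∈ U, ∀ s ∈ I01, z.2 (WW (r e) (z.1, s) ^ 2) ≤ B) →
    δ * z.2 (WW (r e) (z.1, t) ^ 2 * sub z.1 t (withOne g i) ^ 2) - η * (B + Xf z) ≤
      z.2 (WW (r e) (z.1, t) ^ 2 * sub z.1 t (withOne g i))

lemma child_mem (hconv : Convex ℝ (SolSet g)) (harch : IsArchimedeanQM (QM g))
    (hX : ∀ᶠ z in FF g, 0 ≤ Xf z) {E : Type} {r : E → Fin n → MvPolynomial (Fin n) ℝ}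
    {U : Finset E} {e : E} (he : e ∈ U) (i : Fin (m + 1)) {t : ℝ} (ht : t ∈ I01) :
    Child g r Xf U e i t := by
  obtain ⟨G, hG, hG'⟩ := exists_bound harch (withOne g i)
  refine ⟨G⁻¹, by positivity, fun η hη => ?_⟩
  obtain ⟨d, hd⟩ := mpos1 harch (KI_compact harch)
    (H := fun ω => sub ω.1 ω.2 (withOne g i) - C G⁻¹ * sub ω.1 ω.2 (withOne g i) ^ 2 + C η)
    (((sub_fam _).sub ((Fam.const _).mul ((sub_fam _).pow 2))).add (Fam.const _))
    (WW_fam (r e)) (by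
      intro ω hω x hx
      simp only [map_sub, map_add, map_mul, map_pow, eval_C, eval_sub]
      have hp := pt_mem hconv hω.1 hx hω.2.1 hω.2.2
      have h2 := hG' _ hp
      have h3 := withOne_eval_nonneg hp i
      have h4 : G⁻¹ * eval (pt ω.1 x ω.2) (withOne g i) ≤ 1 := by
        rw [inv_mul_le_iff₀ hG]; linarith
      nlinarith)
  filter_upwards [hX, ev_of ⟨d, hd⟩] with z h0 h1 B hB h2
  have h3 := h1 t ht
  have h4 := h2 e he t ht
  rw [add_mul, sub_mul, map_add, map_sub, mul_assoc, L_Cmul, L_Cmul,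
    mul_comm _ (WW (r e) (z.1, t) ^ 2), mul_comm _ (WW (r e) (z.1, t) ^ 2)] at h3
  have h5 := mul_le_mul_of_nonneg_left h4 hη.le
  have h6 := mul_nonneg hη.le h0
  linarith

lemma bdd_mul (harch : IsArchimedeanQM (QM g))
    {p q : (Fin n → ℝ) × ℝ → MvPolynomial (Fin n) ℝ} (hp : Fam p) (hq : Fam q) :
    ∃ M : ℝ, 0 < M ∧ ∀ᶠ z in FF g, ∀ s ∈ I01,
      z.2 (q (z.1, s) ^ 2 * p (z.1, s) ^ 2) ≤ M * z.2 (p (z.1, s) ^ 2) := by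
  obtain ⟨B, hB⟩ := (((KI_compact harch).prod (isCompact_SolSet harch)).image
    (hq.cont.pow 2)).bddAbove
  obtain ⟨d, hd⟩ := mpos1 harch (KI_compact harch) (H := fun ω => C (max B 0 + 1) - q ω ^ 2)
    ((Fam.const _).sub (hq.pow 2)) hp (by
      intro ω hω x hx
      have : (eval x) (q ω) ^ 2 ≤ B := hB ⟨(ω, x), ⟨hω, hx⟩, rfl⟩
      simp only [map_sub, eval_C, map_pow]
      have := le_max_left B 0
      linarith)
  refine ⟨max B 0 + 1, by positivity, ?_⟩
  filter_upwards [ev_of ⟨d, hd⟩] with z h2 s hs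
  have h3 := h2 s hs
  rw [sub_mul, map_sub, L_Cmul] at h3
  linarith

set_option maxHeartbeats 400000 in
lemma child_not_mem (harch : IsArchimedeanQM (QM g))
    (hX : ∀ᶠ z in FF g, 0 ≤ Xf z) {E : Type} [DecidableEq E]
    {r : E → Fin n → MvPolynomial (Fin n) ℝ}
    {U : Finset E} {e : E} (i : Fin (m + 1)) {t : ℝ} (ht : t ∈ I01)
    (hcl : Cl g r (insert e U) i t)
    (hKI : ∃ c : ℝ, ∀ᶠ z in FF g, ∀ s ∈ I01, z.2 (WW (r e) (z.1, s) ^ 4) ≤ c * Xf z) :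
    Child g r Xf U e i t := by
  obtain ⟨δ, hδ, hcl⟩ := hcl
  obtain ⟨c, hc⟩ := hKI
  have hWt : Fam (fun ω : (Fin n → ℝ) × ℝ => WW (r e) (ω.1, t)) :=
    (WW_fam (r e)).comp (f := fun ω : (Fin n → ℝ) × ℝ => (ω.1, t)) (by fun_prop)
  have hM : ∀ e', ∃ M : ℝ, 0 < M ∧ ∀ᶠ z in FF g, ∀ s ∈ I01,
      z.2 (WW (r e) (z.1, t) ^ 2 * WW (r e') (z.1, s) ^ 2) ≤ M * z.2 (WW (r e') (z.1, s) ^ 2) :=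
    fun e' => bdd_mul harch (p := WW (r e')) (q := fun ω => WW (r e) (ω.1, t))
      (WW_fam (r e')) hWt
  choose M hM0 hM using hM
  set K := (∑ e' ∈ U, M e') + |c| + 1 with hK
  have hMs : 0 ≤ ∑ e' ∈ U, M e' := Finset.sum_nonneg fun e' _ => (hM0 e').le
  have hK0 : 0 < K := by positivity
  obtain ⟨D, hD⟩ := hWt.degree
  refine ⟨δ, hδ, fun η hη => ?_⟩
  have hMU : ∀ᶠ z in FF g, ∀ e' ∈ U, ∀ s ∈ I01,
      z.2 (WW (r e) (z.1, t) ^ 2 * WW (r e') (z.1, s) ^ 2) ≤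
        M e' * z.2 (WW (r e') (z.1, s) ^ 2) :=
    (Filter.eventually_all_finset U).2 fun e' _ => hM e'
  have hcl' : ∀ᶠ z in FF g, ∀ W : MvPolynomial (Fin n) ℝ, W.totalDegree ≤ D → ∀ B : ℝ, 0 ≤ B →
      (∀ e' ∈ insert e U, ∀ s ∈ I01, z.2 (W ^ 2 * WW (r e') (z.1, s) ^ 2) ≤ B) →
      δ * z.2 (W ^ 2 * sub z.1 t (withOne g i) ^ 2) - η / K * B ≤
        z.2 (W ^ 2 * sub z.1 t (withOne g i)) :=
    ev_mulSq (hcl (η / K) (by positivity)) D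
  have hsq : ∀ᶠ z in FF g, ∀ s, 0 ≤ z.2 ((WW (r e) (z.1, t) ^ 2 - WW (r e) (z.1, s) ^ 2) ^ 2) :=
    ev_sqF (g := g) (p := fun ω => WW (r e) (ω.1, t) ^ 2 - WW (r e) ω ^ 2) ((hWt.pow 2).sub ((WW_fam (r e)).pow 2))
  filter_upwards [hX, hc, hMU, hcl', hsq] with z h0 h1 h2 h3 h4 B hB h6
  have h7 := h3 (WW (r e) (z.1, t)) (hD (z.1, t)) (K * (B + Xf z)) (by positivity) ?_
  · have : η / K * (K * (B + Xf z)) = η * (B + Xf z) := by field_simp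
    rw [this] at h7
    exact h7
  · intro e' he' s hs
    rcases Finset.mem_insert.1 he' with rfl | he'
    · have h8 := h1 s hs
      have h9 := h1 t ht
      have h10 := h4 s
      have e1 : (WW (r e') (z.1, t) ^ 2 - WW (r e') (z.1, s) ^ 2) ^ 2 =
          WW (r e') (z.1, t) ^ 4 + WW (r e') (z.1, s) ^ 4 -
            C 2 * (WW (r e') (z.1, t) ^ 2 * WW (r e') (z.1, s) ^ 2) := by
        have h6 : (C 2 : MvPolynomial (Fin n) ℝ) = 2 := map_ofNat _ 2
        rw [h6]; ring
      rw [e1, map_sub, map_add, L_Cmul] at h10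
      have h11 : c * Xf z ≤ |c| * Xf z := mul_le_mul_of_nonneg_right (le_abs_self c) h0
      have h12 : |c| * Xf z ≤ K * Xf z := mul_le_mul_of_nonneg_right (by rw [hK]; linarith) h0
      have h13 := mul_nonneg hK0.le hB
      rw [mul_add]
      linarith
    · have h8 := h2 e' he' s hs
      have h9 := h6 e' he' s hs
      have h10 := mul_le_mul_of_nonneg_left h9 (hM0 e').le
      have h11 : M e' ≤ K := by
        have := Finset.single_le_sum (f := M) (fun e' _ => (hM0 e').le) he'
        have := abs_nonneg c
        rw [hK]; linarith
      have h12 := mul_le_mul_of_nonneg_right h11 hB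
      have h13 := mul_nonneg hK0.le h0
      rw [mul_add]
      linarith

lemma exists_min {κ : Type*} [Finite κ] (f : κ → ℝ) (hf : ∀ i, 0 < f i) :
    ∃ μ : ℝ, 0 < μ ∧ ∀ i, μ ≤ f i := by
  cases isEmpty_or_nonempty κ
  · exact ⟨1, one_pos, fun i => isEmptyElim i⟩
  · obtain ⟨i, hi⟩ := Finite.exists_min f
    exact ⟨f i, hf i, hi⟩

lemma sub_famc (t : ℝ) (q : MvPolynomial (Fin n) ℝ) :
    Fam (fun ω : (Fin n → ℝ) × ℝ => sub ω.1 t q) := (sub_fam' t q).comp continuous_fst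

lemma WW_famc (t : ℝ) (r : Fin n → MvPolynomial (Fin n) ℝ) :
    Fam (fun ω : (Fin n → ℝ) × ℝ => WW r (ω.1, t)) :=
  (WW_fam r).comp (f := fun ω : (Fin n → ℝ) × ℝ => (ω.1, t)) (by fun_prop)

theorem step (hconv : Convex ℝ (SolSet g)) (harch : IsArchimedeanQM (QM g))
    {E : Type} [Fintype E] [DecidableEq E] (src : E → Fin m) (ty : E → Fin (m + 1))
    (r : E → Fin n → MvPolynomial (Fin n) ℝ) (hne : ∀ e, withOne g (ty e) ≠ 0)
    (o : Fin n → ℝ)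
    (hslope : ∀ i, withOne g i ≠ 0 → ∀ y ∈ SolSet g, eval y (withOne g i) = 0 →
      0 < ∑ a, eval y (pderiv a (withOne g i)) * (o a - y a))
    (k : Fin m) (hk : ∀ a c, -(pderiv a (pderiv c (g k))) =
        ∑ e ∈ Finset.univ.filter (fun e => src e = k), withOne g (ty e) * (r e a * r e c))
    (U : Finset E) (ih : ∀ e, e ∉ U → ∀ i, ∀ t ∈ I01, Cl g r (insert e U) i t)
    {t : ℝ} (ht0 : 0 < t) (ht1 : t < 1) : Cl g r U k.succ t := by
  set Ek := Finset.univ.filter (fun e => src e = k) with hEk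
  set D := (g k).totalDegree + ∑ a, (pderiv a (g k)).totalDegree +
    ∑ e, ∑ a, ((withOne g (ty e)).totalDegree + (r e a).totalDegree) with hD
  have hD1 : (g k).totalDegree ≤ D := by omega
  have hD2 : ∀ a, (pderiv a (g k)).totalDegree ≤ D := by
    intro a
    have := Finset.single_le_sum (f := fun a => (pderiv a (g k)).totalDegree)
      (fun _ _ => Nat.zero_le _) (Finset.mem_univ a)
    omega
  have hD3 : ∀ e a, (withOne g (ty e)).totalDegree + (r e a).totalDegree ≤ D := by
    intro e a
    have h1 := Finset.single_le_sum
      (f := fun e => ∑ a, ((withOne g (ty e)).totalDegree + (r e a).totalDegree))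
      (fun _ _ => Nat.zero_le _) (Finset.mem_univ e)
    have h2 := Finset.single_le_sum
      (f := fun a => ((withOne g (ty e)).totalDegree + (r e a).totalDegree))
      (fun _ _ => Nat.zero_le _) (Finset.mem_univ a)
    omega
  obtain ⟨ι, _, b, w, J, hJ, hJc, hw, hb, hid⟩ := interp D ht0 ht1
  have hb' : ∀ i, b i ∈ I01 := fun i => ⟨(hb i).1, (hb i).2⟩
  set Wp : ι → E → (Fin n → ℝ) → MvPolynomial (Fin n) ℝ :=
    fun i e u => WW (r e) (u, b i) * sub u (b i) (withOne g (ty e)) with hWp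
  have hWpF : ∀ i e, Fam (fun ω : (Fin n → ℝ) × ℝ => Wp i e ω.1) := fun i e =>
    (WW_famc _ _).mul (sub_famc _ _)
  set Xf : ZT n → ℝ := fun z => eval z.1 (g k) ^ 2 * z.2 1 + z.2 (g k ^ 2) +
    ∑ i, ∑ e ∈ Ek, z.2 (Wp i e z.1 ^ 2) with hXf
  have hWpos : ∀ᶠ z in FF g, ∀ i, ∀ e, 0 ≤ z.2 (Wp i e z.1 ^ 2) := by
    rw [Filter.eventually_all]
    intro i
    rw [Filter.eventually_all]
    intro e
    filter_upwards [ev_sqF (g := g) (hWpF i e)] with z hz using hz 0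
  have hgpos : ∀ᶠ z in FF g, 0 ≤ z.2 (g k ^ 2) := by
    filter_upwards [ev_sq g (g k).totalDegree] with z hz using hz _ le_rfl
  have hparts : ∀ᶠ z in FF g, 0 ≤ Xf z ∧ eval z.1 (g k) ^ 2 * z.2 1 ≤ Xf z ∧
      z.2 (g k ^ 2) ≤ Xf z ∧ ∀ i, ∀ e ∈ Ek, z.2 (Wp i e z.1 ^ 2) ≤ Xf z := by
    filter_upwards [hWpos, hgpos, ev_one g] with z h1 h2 h3
    have h4 : 0 ≤ eval z.1 (g k) ^ 2 * z.2 1 := by positivity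
    have h5 : ∀ i, 0 ≤ ∑ e ∈ Ek, z.2 (Wp i e z.1 ^ 2) :=
      fun i => Finset.sum_nonneg fun e _ => h1 i e
    have h6 : 0 ≤ ∑ i, ∑ e ∈ Ek, z.2 (Wp i e z.1 ^ 2) := Finset.sum_nonneg fun i _ => h5 i
    simp only [hXf]
    refine ⟨by linarith, by linarith, by linarith, fun i e he => ?_⟩
    have h7 := Finset.single_le_sum (f := fun i => ∑ e ∈ Ek, z.2 (Wp i e z.1 ^ 2))
      (fun i _ => h5 i) (Finset.mem_univ i)
    have h8 := Finset.single_le_sum (f := fun e => z.2 (Wp i e z.1 ^ 2))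
      (fun e _ => h1 i e) he
    linarith
  have hX : ∀ᶠ z in FF g, 0 ≤ Xf z := hparts.mono fun z hz => hz.1
  have hsm : ∀ e ∈ Ek, ∀ i, Small g Xf (fun ω => Wp i e ω.1) := by
    intro e he i
    refine ⟨hWpF i e, 1, ?_⟩
    filter_upwards [hparts] with z hz s _
    rw [one_mul]
    exact hz.2.2.2 i e he
  have hKI := KI (g := g) (Xf := Xf) hconv harch hX hJ Ek (fun e => withOne g (ty e)) r (g k) hk
    (fun a => (hD2 a).trans_lt hJc) (fun e _ a => (hD3 e a).trans_lt hJc) (by omega)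
    (fun e _ x hx => withOne_eval_nonneg hx _) o (fun e _ => hslope _ (hne e))
    (fun e he i _ => hsm e he i)
  have hch : ∀ (i : ι) (e : Ek), Child g r Xf U e (ty e) (b i) := by
    intro i e
    by_cases heU : (e : E) ∈ U
    · exact child_mem hconv harch hX heU _ (hb' i)
    · exact child_not_mem harch hX _ (hb' i) (ih _ heU _ _ (hb' i)) (hKI e e.2)
  choose δc hδc hchild using hch
  -- the terminal contributions
  obtain ⟨δa, hδa, ha⟩ := Tm_zero harch k.succ
  obtain ⟨δb, hδb, hbT⟩ := Tm_one harch k.succ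
  have hwk : withOne g k.succ = g k := rfl
  obtain ⟨μ1, hμ1, hμ1'⟩ := exists_min (fun p : ι × Ek => w p.1 * δc p.1 p.2)
    (fun p => mul_pos (hw _) (hδc _ _))
  set μ := min μ1 (min ((1 - t) * δa) (t * δb)) with hμ
  have ht1' : 0 < 1 - t := by linarith
  have hμ0 : 0 < μ := lt_min hμ1 (lt_min (by positivity) (by positivity))
  -- the upper bound
  have hup : Small g Xf (fun ω => sub ω.1 t (g k)) := by
    have he : (fun ω : (Fin n → ℝ) × ℝ => sub ω.1 t (g k)) = fun ω =>
        C (eval ω.1 (g k)) * C (1 - t) + g k * C t +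
        ∑ i, (∑ e ∈ Ek, Wp i e ω.1 * WW (r e) (ω.1, b i)) * C (w i) := by
      funext ω
      rw [idE Ek (fun e => withOne g (ty e)) r (g k) hk hD1 hid, C_mul, mul_comm (C (1 - t)),
        mul_comm (C t)]
      congr 1
      refine Finset.sum_congr rfl fun i _ => ?_
      rw [mul_comm]
      congr 1
      refine Finset.sum_congr rfl fun e _ => ?_
      simp only [hWp]
      ring
    rw [he]
    refine (Small.add (Small.mul harch ?_ (Fam.const _)) (Small.mul harch ?_ (Fam.const _))).add
      (Small.sum hX _ fun i _ => Small.mul harch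
        (Small.sum hX _ fun e he => (hsm e he i).mul harch (WW_famc _ _)) (Fam.const _))
    · refine ⟨(cev_fam (g k)).comp continuous_fst, 1, ?_⟩
      filter_upwards [hparts] with z hz s _
      rw [one_mul, ← C_pow, L_C]
      exact hz.2.1
    · refine ⟨Fam.const _, 1, ?_⟩
      filter_upwards [hparts] with z hz s _
      rw [one_mul]
      exact hz.2.2.1
  obtain ⟨_, c, hc⟩ := hup
  set c2 := |c| + 1 with hc2
  have hc20 : 0 < c2 := by positivity
  set K := ∑ _i : ι, ∑ _e : Ek, w _i with hK
  have hK0 : 0 ≤ K := Finset.sum_nonneg fun i _ => Finset.sum_nonneg fun _ _ => (hw i).le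
  refine ⟨μ / (2 * c2), by positivity, fun η hη => ?_⟩
  set η' := min η (μ / 2) / (K + 1) with hη'
  have hη'0 : 0 < η' := by
    have : 0 < min η (μ / 2) := lt_min hη (by positivity)
    positivity
  have hη'K : η' * K ≤ min η (μ / 2) := by
    have h1 : 0 ≤ min η (μ / 2) := (lt_min hη (by positivity)).le
    rw [hη', div_mul_eq_mul_div, div_le_iff₀ (by positivity)]
    nlinarith
  have hchild' := (Filter.eventually_all.2 fun i => Filter.eventually_all.2 fun e =>
    hchild i e η' hη'0)
  filter_upwards [hparts, ha, hbT, hchild', hc, hWpos, hgpos, ev_one g]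
    with z hz h1 h2 h3 h4 h5 h6 h7 B hB hBU
  have h8 := h4 0 ⟨le_rfl, zero_le_one⟩
  rw [hwk] at h1 h2 ⊢
  rw [sub_zero', ← C_pow, L_C, L_C] at h1
  rw [sub_one'] at h2
  have hXz := hz.1
  -- expand
  have hex : z.2 (sub z.1 t (g k)) = (1 - t) * (eval z.1 (g k) * z.2 1) + t * z.2 (g k) +
      ∑ i, ∑ e : Ek, w i * z.2 (WW (r e) (z.1, b i) ^ 2 *
        sub z.1 (b i) (withOne g (ty e))) := by
    rw [idE Ek (fun e => withOne g (ty e)) r (g k) hk hD1 hid, map_add, map_add, L_C, L_Cmul,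
      map_sum, mul_assoc]
    congr 1
    refine Finset.sum_congr rfl fun i _ => ?_
    rw [L_Cmul, map_sum, ← Finset.mul_sum, ← Finset.sum_coe_sort Ek]
    congr 1
    refine Finset.sum_congr rfl fun e _ => ?_
    rw [mul_comm]
  have hlow : ∀ i, ∀ e : Ek, μ * z.2 (Wp i e z.1 ^ 2) - η' * (B + Xf z) * w i ≤
      w i * z.2 (WW (r e) (z.1, b i) ^ 2 * sub z.1 (b i) (withOne g (ty e))) := by
    intro i e
    have h9 := h3 i e B hB hBU
    have h10 := mul_le_mul_of_nonneg_left h9 (hw i).le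
    have h11 : μ ≤ w i * δc i e := (min_le_left _ _).trans (hμ1' (i, e))
    have h12 := mul_le_mul_of_nonneg_right h11 (h5 i e)
    have h13 : Wp i e z.1 ^ 2 =
      WW (r e) (z.1, b i) ^ 2 * sub z.1 (b i) (withOne g (ty e)) ^ 2 := by
      simp only [hWp]; rw [mul_pow]
    rw [h13] at h12 ⊢
    linarith
  have hsum : μ * (∑ i, ∑ e ∈ Ek, z.2 (Wp i e z.1 ^ 2)) - η' * (B + Xf z) * K ≤
      ∑ i, ∑ e : Ek, w i * z.2 (WW (r e) (z.1, b i) ^ 2 *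
        sub z.1 (b i) (withOne g (ty e))) := by
    have h9 := Finset.sum_le_sum fun i (_ : i ∈ (Finset.univ : Finset ι)) =>
      Finset.sum_le_sum fun e (_ : e ∈ (Finset.univ : Finset Ek)) => hlow i e
    refine le_trans (le_of_eq ?_) h9
    rw [hK, Finset.mul_sum, Finset.mul_sum, ← Finset.sum_sub_distrib]
    refine Finset.sum_congr rfl fun i _ => ?_
    rw [Finset.sum_sub_distrib, Finset.mul_sum, Finset.mul_sum, ← Finset.sum_coe_sort Ek]
  have hA : μ * (eval z.1 (g k) ^ 2 * z.2 1) ≤ (1 - t) * (eval z.1 (g k) * z.2 1) := by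
    have h9 : μ ≤ (1 - t) * δa := (min_le_right _ _).trans (min_le_left _ _)
    have h10 : 0 ≤ eval z.1 (g k) ^ 2 * z.2 1 := by positivity
    have h11 := mul_le_mul_of_nonneg_right h9 h10
    have h12 := mul_le_mul_of_nonneg_left h1 ht1'.le
    linarith
  have hBb : μ * z.2 (g k ^ 2) ≤ t * z.2 (g k) := by
    have h9 : μ ≤ t * δb := (min_le_right _ _).trans (min_le_right _ _)
    have h11 := mul_le_mul_of_nonneg_right h9 h6
    have h12 := mul_le_mul_of_nonneg_left h2 ht0.le
    linarith
  have hXz' : Xf z = eval z.1 (g k) ^ 2 * z.2 1 + z.2 (g k ^ 2) +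
    ∑ i, ∑ e ∈ Ek, z.2 (Wp i e z.1 ^ 2) := rfl
  have hfin : μ * Xf z - η' * (B + Xf z) * K ≤ z.2 (sub z.1 t (g k)) := by
    rw [hex]
    have : μ * Xf z = μ * (eval z.1 (g k) ^ 2 * z.2 1) + μ * z.2 (g k ^ 2) +
        μ * ∑ i, ∑ e ∈ Ek, z.2 (Wp i e z.1 ^ 2) := by rw [hXz']; ring
    rw [this]
    linarith
  have h9 : η' * K * B ≤ η * B := mul_le_mul_of_nonneg_right (hη'K.trans (min_le_left _ _)) hB
  have h10 : η' * K * Xf z ≤ μ / 2 * Xf z :=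
    mul_le_mul_of_nonneg_right (hη'K.trans (min_le_right _ _)) hXz
  have h11 : z.2 (sub z.1 t (g k) ^ 2) ≤ c2 * Xf z := by
    refine h8.trans (mul_le_mul_of_nonneg_right ?_ hXz)
    have := le_abs_self c
    rw [hc2]; linarith
  have h12 : μ / (2 * c2) * z.2 (sub z.1 t (g k) ^ 2) ≤ μ / 2 * Xf z := by
    have h13 := mul_le_mul_of_nonneg_left h11 (show 0 ≤ μ / (2 * c2) by positivity)
    have h14 : μ / (2 * c2) * (c2 * Xf z) = μ / 2 * Xf z := by field_simp
    linarith
  have h15 : η' * (B + Xf z) * K = η' * K * B + η' * K * Xf z := by ring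
  linarith

end LassAux

set_option linter.unusedSectionVars false
namespace LassAux
open Filter Topology

variable {n m : ℕ} {g : Fin m → MvPolynomial (Fin n) ℝ}

lemma exists_o (hint : (interior (SolSet g)).Nonempty) :
    ∃ o ∈ SolSet g, ∀ i, g i ≠ 0 → 0 < eval o (g i) := by
  classical
  obtain ⟨y, hy⟩ := hint
  obtain ⟨ε, hε, hball⟩ := Metric.isOpen_iff.1 isOpen_interior y hy
  set P : MvPolynomial (Fin n) ℝ := ∏ i, if g i = 0 then 1 else g i with hP
  have hP0 : P ≠ 0 := by
    rw [hP, Finset.prod_ne_zero_iff]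
    intro i _
    split_ifs with h
    · exact one_ne_zero
    · exact h
  have : ∃ x ∈ Set.pi Set.univ (fun i => Metric.ball (y i) ε), eval x P ≠ 0 := by
    by_contra hc
    push Not at hc
    refine hP0 (MvPolynomial.funext_set (fun i => Metric.ball (y i) ε) (fun i => ?_)
      (fun x hx => by rw [hc x hx, map_zero]))
    rw [Real.ball_eq_Ioo]
    exact Set.Ioo_infinite (by linarith)
  obtain ⟨x, hx, hxP⟩ := this
  have hxS : x ∈ SolSet g := by
    apply interior_subset
    apply hball
    rw [ball_pi _ hε]
    exact hx
  refine ⟨x, hxS, fun i hi => lt_of_le_of_ne (hxS i) fun h => hxP ?_⟩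
  rw [hP, map_prod]
  refine Finset.prod_eq_zero (Finset.mem_univ i) ?_
  rw [if_neg hi, ← h]

lemma slope (hconv : Convex ℝ (SolSet g))
    (hg : ∀ i, (∀ x ∈ SolSet g ∩ ZSet (g i), StrictlyQuasiconcaveAt (g i) x) ∨
      SosConcave g (g i))
    {E : Type} [Fintype E] [DecidableEq E] (src : E → Fin m) (ty : E → Fin (m + 1))
    (r : E → Fin n → MvPolynomial (Fin n) ℝ)
    (hE : ∀ k, SosConcave g (g k) → ∀ a c, -(pderiv a (pderiv c (g k))) =
        ∑ e ∈ Finset.univ.filter (fun e => src e = k), withOne g (ty e) * (r e a * r e c))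
    {o : Fin n → ℝ} (ho : o ∈ SolSet g) (hog : ∀ i, g i ≠ 0 → 0 < eval o (g i)) :
    ∀ i, withOne g i ≠ 0 → ∀ y ∈ SolSet g, eval y (withOne g i) = 0 →
      0 < ∑ a, eval y (pderiv a (withOne g i)) * (o a - y a) := by
  intro i
  refine Fin.cases ?_ (fun k => ?_) i
  · intro _ y _ h
    rw [withOne_zero, map_one] at h
    exact absurd h one_ne_zero
  · intro hne y hy h0
    change g k ≠ 0 at hne
    change eval y (g k) = 0 at h0
    change 0 < ∑ a, eval y (pderiv a (g k)) * (o a - y a)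
    have hpos := hog k hne
    rcases hg k with hq | hs
    · refine qg hconv hy ho h0 (hq y ⟨hy, h0⟩) ?_
      rintro rfl
      linarith
    · obtain ⟨ι, _, b, w, _, hw, hb, _, _, hid⟩ := quadT (g k).totalDegree
      have h1 := congrArg (eval o) (idE0 _ (fun e => withOne g (ty e)) r (g k) (hE k hs) le_rfl
        hid y)
      simp only [map_sum, map_mul, eval_C, eval_YY, map_add, map_sub, eval_sub, map_pow, h0] at h1
      rw [h1]
      have h2 : 0 ≤ ∑ i, w i * ∑ e ∈ Finset.univ.filter (fun e => src e = k),
          eval (pt y o (b i)) (withOne g (ty e)) * eval o (WW (r e) (y, b i)) ^ 2 := by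
        refine Finset.sum_nonneg fun i _ => mul_nonneg (hw i).le
          (Finset.sum_nonneg fun e _ => mul_nonneg ?_ (sq_nonneg _))
        exact withOne_eval_nonneg (pt_mem hconv hy ho (hb i).1 (hb i).2) _
      linarith

theorem Tall (hconv : Convex ℝ (SolSet g)) (harch : IsArchimedeanQM (QM g))
    (hg : ∀ i, (∀ x ∈ SolSet g ∩ ZSet (g i), StrictlyQuasiconcaveAt (g i) x) ∨
      SosConcave g (g i))
    {E : Type} [Fintype E] [DecidableEq E] (src : E → Fin m) (ty : E → Fin (m + 1))
    (r : E → Fin n → MvPolynomial (Fin n) ℝ) (hne : ∀ e, withOne g (ty e) ≠ 0)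
    (hE : ∀ k, SosConcave g (g k) → ∀ a c, -(pderiv a (pderiv c (g k))) =
        ∑ e ∈ Finset.univ.filter (fun e => src e = k), withOne g (ty e) * (r e a * r e c))
    (o : Fin n → ℝ)
    (hslope : ∀ i, withOne g i ≠ 0 → ∀ y ∈ SolSet g, eval y (withOne g i) = 0 →
      0 < ∑ a, eval y (pderiv a (withOne g i)) * (o a - y a)) :
    ∀ i, ∀ t ∈ I01, Tm g i t := by
  have hcl : ∀ N : ℕ, ∀ U : Finset E, Uᶜ.card = N → ∀ i, ∀ t ∈ I01, Cl g r U i t := by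
    intro N
    induction N using Nat.strong_induction_on with
    | _ N ihN =>
      intro U hU i t ht
      rcases ht.1.eq_or_lt with h0 | h0
      · rw [← h0]; exact (Tm_zero harch i).cl U
      rcases ht.2.eq_or_lt with h1 | h1
      · rw [h1]; exact (Tm_one harch i).cl U
      refine Fin.cases ?_ (fun k => ?_) i
      · exact (Tm_unit t).cl U
      · rcases hg k with hq | hs
        · exact (Tm_quasi hconv harch k hq h0 h1).cl U
        · refine step hconv harch src ty r hne o hslope k (hE k hs) U (fun e he => ?_) h0 h1
          refine ihN _ ?_ (insert e U) rfl
          rw [← hU]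
          apply Finset.card_lt_card
          rw [Finset.compl_ssubset_compl]
          exact Finset.ssubset_insert he
  intro i t ht
  obtain ⟨δ, hδ, h⟩ := hcl _ ∅ rfl i t ht
  refine ⟨δ, hδ, ?_⟩
  filter_upwards [h 1 one_pos] with z hz
  simpa using hz 0 le_rfl (by simp)

theorem sos_tangent (harch : IsArchimedeanQM (QM g))
    {E : Type} (Ek : Finset E) (ty : E → Fin (m + 1))
    (r : E → Fin n → MvPolynomial (Fin n) ℝ) (k : Fin m)
    (hE : ∀ a c, -(pderiv a (pderiv c (g k))) = ∑ e ∈ Ek, withOne g (ty e) * (r e a * r e c))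
    (hT : ∀ i, ∀ t ∈ I01, Tm g i t) :
    ∀ᶠ z in FF g, eval z.1 (g k) = 0 →
      0 ≤ z.2 (∑ a, C (eval z.1 (pderiv a (g k))) * YY a z.1) := by
  obtain ⟨ι, _, b, w, _, hw, hb, _, _, hid⟩ := quadT (g k).totalDegree
  have h1 : ∀ i, ∀ e ∈ Ek, ∀ᶠ z in FF g,
      0 ≤ z.2 (WW (r e) (z.1, b i) ^ 2 * sub z.1 (b i) (withOne g (ty e))) := by
    intro i e _
    obtain ⟨D, hD⟩ := (WW_famc (b i) (r e)).degree
    obtain ⟨δ, hδ, h⟩ := hT (ty e) (b i) ⟨(hb i).1, (hb i).2⟩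
    have h2 : ∀ᶠ z in FF g, 0 ≤ z.2 (sub z.1 (b i) (withOne g (ty e))) := by
      filter_upwards [h, ev_sqF (g := g) (sub_famc (b i) (withOne g (ty e)))] with z h3 h4
      have := mul_nonneg hδ.le (h4 0)
      linarith
    filter_upwards [ev_mulSq h2 D] with z hz
    exact hz (WW (r e) (z.1, b i)) (hD (z.1, 0))
  have h2 : ∀ᶠ z in FF g, ∀ i, ∀ e ∈ Ek,
      0 ≤ z.2 (WW (r e) (z.1, b i) ^ 2 * sub z.1 (b i) (withOne g (ty e))) :=
    Filter.eventually_all.2 fun i => (Filter.eventually_all_finset Ek).2 fun e he => h1 i e he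
  filter_upwards [h2, ev_sq_mul g k.succ 0] with z h3 h4 h0
  rw [idE0 Ek (fun e => withOne g (ty e)) r (g k) hE le_rfl hid, h0, map_zero, sub_zero, map_add,
    map_sum]
  have h5 : 0 ≤ z.2 (g k) := by
    have := h4 1 (by simp)
    rwa [one_pow, one_mul] at this
  refine add_nonneg h5 (Finset.sum_nonneg fun i _ => ?_)
  rw [L_Cmul, map_sum]
  refine mul_nonneg (hw i).le (Finset.sum_nonneg fun e he => ?_)
  rw [mul_comm]
  exact h3 i e he

lemma subset_lasserre (d : ℕ) : SolSet g ⊆ Lasserre d g := by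
  intro x hx
  refine ⟨(MvPolynomial.aeval x).toLinearMap ∘ₗ
    (MvPolynomial.restrictTotalDegree (Fin n) ℝ d).subtype, ?_, ?_, ?_⟩
  · intro p hp
    simp [hp]
  · intro i p hp
    simp [hp]
  · rintro p ⟨N, q, _, hq⟩
    simp only [LinearMap.comp_apply, Submodule.subtype_apply, AlgHom.toLinearMap_apply, hq,
      map_sum, map_mul, map_pow]
    refine Finset.sum_nonneg fun i _ => Finset.sum_nonneg fun j _ => mul_nonneg (sq_nonneg _) ?_
    have := withOne_eval_nonneg hx i
    rwa [← MvPolynomial.coe_aeval_eq_eval] at this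

lemma lasserre_dual {d : ℕ} (hd : 1 ≤ d) {x : Fin n → ℝ} (hx : x ∈ Lasserre d g) :
    ∃ L : MvPolynomial (Fin n) ℝ →ₗ[ℝ] ℝ, Dual g d L ∧ L 1 = 1 ∧ ∀ a, L (X a) = x a := by
  obtain ⟨L0, h1, h2, h3⟩ := hx
  obtain ⟨L, hL⟩ := LinearMap.exists_extend L0
  have hL' : ∀ p (hp : p ∈ MvPolynomial.restrictTotalDegree (Fin n) ℝ d), L p = L0 ⟨p, hp⟩ := by
    intro p hp
    rw [← hL]; rfl
  refine ⟨L, ?_, ?_, ?_⟩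
  · intro i q hq
    by_cases hG : withOne g i = 0
    · simp [hG]
    · have hp : q ^ 2 * withOne g i ∈ MvPolynomial.restrictTotalDegree (Fin n) ℝ d := by
        rw [MvPolynomial.mem_restrictTotalDegree]
        have h4 := totalDegree_mul (q ^ 2) (withOne g i)
        have h5 := totalDegree_pow q 2
        omega
      rw [hL' _ hp]
      refine h3 _ ⟨1, fun i' _ => if i' = i then q else 0, fun i' j => ?_, ?_⟩
      · dsimp only
        split_ifs with h
        · subst h; exact Or.inr ⟨hG, hq⟩
        · exact Or.inl rfl
      · dsimp only
        rw [Finset.sum_eq_single i]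
        · simp
        · intro i' _ h; simp [h]
        · simp
  · have hp : (1 : MvPolynomial (Fin n) ℝ) ∈ MvPolynomial.restrictTotalDegree (Fin n) ℝ d := by
      rw [MvPolynomial.mem_restrictTotalDegree]; simp
    rw [hL' _ hp, h1 _ rfl]
  · intro a
    have hp : (X a : MvPolynomial (Fin n) ℝ) ∈ MvPolynomial.restrictTotalDegree (Fin n) ℝ d := by
      rw [MvPolynomial.mem_restrictTotalDegree]; simpa using hd
    rw [hL' _ hp, h2 a _ rfl]

lemma last_point (harch : IsArchimedeanQM (QM g)) {o x : Fin n → ℝ} (ho : o ∈ SolSet g)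
    (hx : x ∉ SolSet g) : ∃ s : ℝ, 0 ≤ s ∧ s < 1 ∧ pt o x s ∈ SolSet g ∧
      ∃ i, g i ≠ 0 ∧ eval (pt o x s) (g i) = 0 := by
  have hc : Continuous (pt o x) := by
    unfold pt
    fun_prop
  have hT : IsCompact (I01 ∩ pt o x ⁻¹' SolSet g) :=
    isCompact_Icc.inter_right ((isCompact_SolSet harch).isClosed.preimage hc)
  have hne : (I01 ∩ pt o x ⁻¹' SolSet g).Nonempty :=
    ⟨0, ⟨le_rfl, zero_le_one⟩, by rw [Set.mem_preimage, pt_zero]; exact ho⟩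
  obtain ⟨s, hs, hmax⟩ := hT.exists_isGreatest hne
  have hs1 : s < 1 := by
    refine lt_of_le_of_ne hs.1.2 ?_
    rintro rfl
    apply hx
    have := hs.2
    rwa [Set.mem_preimage, pt_one] at this
  refine ⟨s, hs.1.1, hs1, hs.2, ?_⟩
  by_contra hcon
  push Not at hcon
  have hev : ∀ᶠ t in 𝓝 s, ∀ i, 0 ≤ eval (pt o x t) (g i) := by
    rw [Filter.eventually_all]
    intro i
    by_cases hi : g i = 0
    · simp [hi]
    · have hpos : 0 < eval (pt o x s) (g i) := lt_of_le_of_ne (hs.2 i) (Ne.symm (hcon i hi))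
      have hcg : Continuous fun t => eval (pt o x t) (g i) :=
        (MvPolynomial.continuous_eval (g i)).comp hc
      filter_upwards [hcg.continuousAt.eventually (lt_mem_nhds hpos)] with t ht using ht.le
  have hev2 : ∀ᶠ t in 𝓝[>] s, (∀ i, 0 ≤ eval (pt o x t) (g i)) ∧ t < 1 ∧ s < t := by
    filter_upwards [nhdsWithin_le_nhds hev, nhdsWithin_le_nhds (gt_mem_nhds hs1),
      self_mem_nhdsWithin] with t h1 h2 h3 using ⟨h1, h2, h3⟩
  obtain ⟨t, h1, h2, h3⟩ := hev2.exists
  have := hmax ⟨⟨hs.1.1.trans h3.le, h2.le⟩, h1⟩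
  linarith

end LassAux

open LassAux Filter

theorem stmt_14 {n m : ℕ} (g : Fin m → MvPolynomial (Fin n) ℝ)
    (hconv : Convex ℝ (SolSet g)) (hint : (interior (SolSet g)).Nonempty)
    (harch : IsArchimedeanQM (QM g))
    (hg : ∀ i, (∀ x ∈ SolSet g ∩ ZSet (g i), StrictlyQuasiconcaveAt (g i) x) ∨
      SosConcave g (g i)) :
    ∃ d : ℕ, Lasserre d g = SolSet g := by
  obtain ⟨o, ho, hog⟩ := exists_o hint
  obtain ⟨E, _, _, src, ty, r, hne, hE⟩ := exists_edges g
  have hsl := slope hconv hg src ty r hE ho hog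
  have hT := Tall hconv harch hg src ty r hne hE o hsl
  have hev : ∀ k, ∀ᶠ z in FF g, eval z.1 (g k) = 0 →
      0 ≤ z.2 (∑ a, C (eval z.1 (pderiv a (g k))) * YY a z.1) := by
    intro k
    rcases hg k with hq | hs
    · obtain ⟨d, hd⟩ := q1 hconv harch k hq
      exact ev_iff.2 ⟨d, fun u hu L hL h0 => hd u ⟨hu, h0⟩ L hL⟩
    · exact sos_tangent harch _ ty r k (hE k hs) hT
  obtain ⟨d, hd⟩ := ev_iff.1 (Filter.eventually_all.2 hev)
  refine ⟨max d 1, Set.Subset.antisymm ?_ (subset_lasserre _)⟩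
  intro x hx
  by_contra hxS
  obtain ⟨L, hL, hL1, hLX⟩ := lasserre_dual (le_max_right d 1) hx
  obtain ⟨s, hs0, hs1, hu, k, hk0, hk⟩ := last_point harch ho hxS
  have h1 := hd _ hu L (hL.mono (le_max_left _ _)) k hk
  have h2 := hsl k.succ hk0 _ hu hk
  set u := pt o x s with hudef
  change 0 < ∑ a, eval u (pderiv a (g k)) * (o a - u a) at h2
  have h3 : L (∑ a, C (eval u (pderiv a (g k))) * YY a u) =
      ∑ a, eval u (pderiv a (g k)) * (x a - u a) := by
    rw [map_sum]
    refine Finset.sum_congr rfl fun a _ => ?_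
    rw [L_Cmul, YY, map_sub, L_C, hL1, hLX, mul_one]
  change 0 ≤ L (∑ a, C (eval u (pderiv a (g k))) * YY a u) at h1
  rw [h3] at h1
  have h4 : s * ∑ a, eval u (pderiv a (g k)) * (x a - u a) =
      -(1 - s) * ∑ a, eval u (pderiv a (g k)) * (o a - u a) := by
    rw [Finset.mul_sum, Finset.mul_sum]
    refine Finset.sum_congr rfl fun a _ => ?_
    simp only [hudef, pt]
    ring
  have h5 := mul_nonneg hs0 h1
  have h6 := mul_pos (sub_pos.2 hs1) h2
  linarith
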